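/- Suppose f is such a piecewise-C³ one-parameter family with β > 0, a_L > 1, and 0 < |a_R| < 1, and let ν(μ) = f(0;μ). Then there exist μ₀ > 0, continuous functions s_L(μ) = a_L + O(μ), s_R(μ) = a_R + O(μ), and t(μ), and open neighbourhoods N of 0 and M(μ) of 0 such that, writing g̃(y;μ) = g(y; ν(μ), s_L(μ), s_R(μ), t(μ)): (i) for μ ∈ (−μ₀, 0], f(·;μ) on N and g̃(·;μ) on M(μ) are differentiably conjugate; (ii) for μ ∈ (0, μ₀) with a_R > 0, f has a stable fixed point x_R > 0 and an unstable fixed point x_L < 0 in N, g̃ has corresponding fixed points y_R > 0 and y_L < 0 in M(μ), and f and g̃ are differentiably conjugate on the basins of attraction of their stable fixed points and on the basins of repulsion of their unstable fixed points; (iii) for μ ∈ (0, μ₀) with a_R < 0, f on (x_L, f_R⁻¹(x_L)) and g̃ on (y_L, g̃_R⁻¹(y_L)) are differentiably conjugate, and f on {x ∈ N | x < 0} and g̃ on {y ∈ M(μ) | y < 0} are differentiably conjugate. Moreover, for any δ > 0 one can choose μ₀ > 0, N = (−p, p), and M(μ) = (q⁻(μ), q⁺(μ)) so that (1 − δ)p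 < |q⁻(μ)| < (1 + δ)p and (1 − δ)p < |q⁺(μ)| < (1 + δ)p for all μ ∈ (−μ₀, μ₀). -/

import Mathlib

/-- The piecewise-smooth family: `f(x;μ) = f_L(x;μ)` for `x ≤ 0` and `f_R(x;μ)` for `x > 0`
(these agree when the continuity condition `f_L(0;μ) = f_R(0;μ)` holds). -/
noncomputable def pwFam (fL fR : ℝ → ℝ → ℝ) (μ : ℝ) : ℝ → ℝ :=
  fun x => if x ≤ 0 then fL x μ else fR x μ

/-- The extended normal form `g(y; ν, s_L, s_R, t)`. -/
noncomputable def enf (ν sL sR t : ℝ) : ℝ → ℝ :=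
  fun y => if y ≤ 0 then ν + sL * y + t * y ^ 2 else ν + sR * y

/-- `h` is a `C¹` diffeomorphism from `U` onto `V`. -/
def IsDiffeoOn (h : ℝ → ℝ) (U V : Set ℝ) : Prop :=
  Set.BijOn h U V ∧ ContDiffOn ℝ 1 h U ∧
    ∃ hinv : ℝ → ℝ, Set.InvOn hinv h U V ∧ ContDiffOn ℝ 1 hinv V

/-- `h` intertwines `f` and `g` on `U`: `h (f x) = g (h x)` for all `x ∈ U` with `f x ∈ U`. -/
def ConjRelOn (h f g : ℝ → ℝ) (U : Set ℝ) : Prop :=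
  ∀ x ∈ U, f x ∈ U → h (f x) = g (h x)

/-- `f` on `U` is differentiably conjugate to `g` on `V`. -/
def DiffConjOn (f g : ℝ → ℝ) (U V : Set ℝ) : Prop :=
  ∃ h : ℝ → ℝ, IsDiffeoOn h U V ∧ ConjRelOn h f g U

/-- The basin of attraction within `N` of a stable fixed point `p` of `F`:
points whose forward orbit stays in `N` and converges to `p`. -/
def basinAttr (F : ℝ → ℝ) (N : Set ℝ) (p : ℝ) : Set ℝ :=
  {x ∈ N | (∀ n : ℕ, F^[n] x ∈ N) ∧ Filter.Tendsto (fun n => F^[n] x) Filter.atTop (nhds p)}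

/-- The basin of repulsion within `N` of an unstable fixed point `p` of `F`:
points admitting a backward orbit in `N` converging to `p`. -/
def basinRep (F : ℝ → ℝ) (N : Set ℝ) (p : ℝ) : Set ℝ :=
  {x ∈ N | ∃ u : ℕ → ℝ, u 0 = x ∧ (∀ n, u n ∈ N) ∧ (∀ n, F (u (n + 1)) = u n) ∧
    Filter.Tendsto u Filter.atTop (nhds p)}

/-- The conclusions (i)–(iii) of Theorem 2.2, for the data `(μ₀, s_L, s_R, t, N, M)`:
writing `g̃(y;μ) = g(y; ν(μ), s_L(μ), s_R(μ), t(μ))` with `ν(μ) = f(0;μ) = f_L(0;μ)`,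
(i) for `μ ∈ (−μ₀,0]`, `f` on `N` and `g̃` on `M(μ)` are differentiably conjugate;
(ii) for `μ ∈ (0,μ₀)` and `a_R > 0`, `f` has a stable fixed point `x_R > 0` and an unstable
fixed point `x_L < 0` in `N`, `g̃` has corresponding fixed points `y_R > 0`, `y_L < 0` in `M(μ)`,
and `f`, `g̃` are differentiably conjugate on the basins of attraction of their stable fixed
points and on the basins of repulsion of their unstable fixed points;
(iii) for `μ ∈ (0,μ₀)` and `a_R < 0`, `f` on `(x_L, f_R⁻¹(x_L))` and `g̃` on `(y_L, g̃_R⁻¹(y_L))`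
are differentiably conjugate, and `f` on `{x ∈ N | x < 0}` and `g̃` on `{y ∈ M(μ) | y < 0}`
are differentiably conjugate. -/
def SnConclusion (fL fR : ℝ → ℝ → ℝ) (aR μ₀ : ℝ) (sL sR t : ℝ → ℝ)
    (N : Set ℝ) (M : ℝ → Set ℝ) : Prop :=
  (∀ μ ∈ Set.Ioo (-μ₀) μ₀, IsOpen (M μ) ∧ (0:ℝ) ∈ M μ) ∧
  (∀ μ ∈ Set.Ioc (-μ₀) 0,
    DiffConjOn (pwFam fL fR μ) (enf (fL 0 μ) (sL μ) (sR μ) (t μ)) N (M μ)) ∧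
  (0 < aR → ∀ μ ∈ Set.Ioo 0 μ₀,
    ∃ xL xR yL yR : ℝ,
      xL < 0 ∧ 0 < xR ∧ xL ∈ N ∧ xR ∈ N ∧
      yL < 0 ∧ 0 < yR ∧ yL ∈ M μ ∧ yR ∈ M μ ∧
      fL xL μ = xL ∧ fR xR μ = xR ∧
      enf (fL 0 μ) (sL μ) (sR μ) (t μ) yL = yL ∧
      enf (fL 0 μ) (sL μ) (sR μ) (t μ) yR = yR ∧
      |deriv (fun x => fR x μ) xR| < 1 ∧ 1 < |deriv (fun x => fL x μ) xL| ∧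
      DiffConjOn (pwFam fL fR μ) (enf (fL 0 μ) (sL μ) (sR μ) (t μ))
        (basinAttr (pwFam fL fR μ) N xR)
        (basinAttr (enf (fL 0 μ) (sL μ) (sR μ) (t μ)) (M μ) yR) ∧
      DiffConjOn (pwFam fL fR μ) (enf (fL 0 μ) (sL μ) (sR μ) (t μ))
        (basinRep (pwFam fL fR μ) N xL)
        (basinRep (enf (fL 0 μ) (sL μ) (sR μ) (t μ)) (M μ) yL)) ∧
  (aR < 0 → ∀ μ ∈ Set.Ioo 0 μ₀,
    ∃ xL yL w z : ℝ,
      xL < 0 ∧ fL xL μ = xL ∧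
      yL < 0 ∧ enf (fL 0 μ) (sL μ) (sR μ) (t μ) yL = yL ∧
      0 < w ∧ fR w μ = xL ∧ 0 < z ∧ fL 0 μ + sR μ * z = yL ∧
      DiffConjOn (pwFam fL fR μ) (enf (fL 0 μ) (sL μ) (sR μ) (t μ))
        (Set.Ioo xL w) (Set.Ioo yL z) ∧
      DiffConjOn (pwFam fL fR μ) (enf (fL 0 μ) (sL μ) (sR μ) (t μ))
        {x ∈ N | x < 0} {y ∈ M μ | y < 0})

open Set Filter Function
open scoped Topology Manifold ContDiff

/-!
Near the border a map of the family has an expanding left branch and a contracting right branch. By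
Koenigs' theorem each branch, extended to a diffeomorphism of the line, is linearized at its fixed
point by a `C¹` diffeomorphism. Two branches with the same multiplier are therefore conjugate, and
the freedom of a linear factor allows the conjugacy to fix the border `0`. The coefficients `s_R`
and `t` are chosen so that the normal form has the same multipliers as `f`, and `s_L` so that
`f_L' / f_R'` agrees at `0` with its counterpart for the normal form.

The two branch conjugacies need not agree at the border, so they are combined along orbits: a
conjugacy given on a half-line that orbits enter is extended to their preimages by the conjugacy
equation. At the end of the half-line the extension is `C¹` because the ratios of slopes agree.
Where no orbit crosses from one branch to the other, as on a basin of repulsion, a branch conjugacy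
is used directly.

Since the branch conjugacies fix `0` with bounded logarithmic distortion, they are close to the
identity on small intervals, which gives the bounds on `M(μ)`.
-/

/-! ### Diffeomorphisms between subsets of the line -/

theorem isDiffeoOn_image_of_deriv_ne_zero {h : ℝ → ℝ} {U : Set ℝ} (hU : IsOpen U)
    (hinj : InjOn h U) (hh : ContDiffOn ℝ 1 h U) (hd : ∀ x ∈ U, deriv h x ≠ 0) :
    IsDiffeoOn h U (h '' U) := by
  have hC : ∀ x ∈ U, ContDiffAt ℝ 1 h x := fun x hx => hh.contDiffAt (hU.mem_nhds hx)
  have hopen : IsOpenMap (U.domRestrict h) := by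
    refine IsOpenMap.of_nhds_le fun x => ?_
    have hstrict := (hC x x.2).hasStrictDerivAt one_ne_zero
    rw [domRestrict_eq, ← map_map, map_nhds_subtype_val, hU.nhdsWithin_eq x.2]
    exact (hstrict.map_nhds_eq (hd x x.2)).ge
  let e := OpenPartialHomeomorph.ofContinuousOpenRestrict hinj.toPartialEquiv hh.continuousOn
    hopen hU
  refine ⟨hinj.bijOn_image, hh, e.symm, e.invOn, fun y hy => ContDiffAt.contDiffWithinAt ?_⟩
  have hey : e.symm y ∈ U := e.map_target hy
  exact e.contDiffAt_symm_deriv (hd _ hey) hy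
    ((hC _ hey).differentiableAt one_ne_zero).hasDerivAt (hC _ hey)

theorem strictMonoOn_of_contDiffOn_of_deriv_pos {h : ℝ → ℝ} {U : Set ℝ}
    (hconv : U.OrdConnected) (hh : ContDiffOn ℝ 1 h U) (hd : ∀ x ∈ U, 0 < deriv h x) :
    StrictMonoOn h U :=
  strictMonoOn_of_deriv_pos hconv.convex hh.continuousOn fun x hx => hd x (interior_subset hx)

theorem isDiffeoOn_image_of_deriv_pos {h : ℝ → ℝ} {U : Set ℝ} (hU : IsOpen U)
    (hconv : U.OrdConnected) (hh : ContDiffOn ℝ 1 h U) (hd : ∀ x ∈ U, 0 < deriv h x) :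
    IsDiffeoOn h U (h '' U) :=
  isDiffeoOn_image_of_deriv_ne_zero hU
    (strictMonoOn_of_contDiffOn_of_deriv_pos hconv hh hd).injOn hh fun x hx => (hd x hx).ne'

theorem IsDiffeoOn.deriv_pos {h : ℝ → ℝ} {U V : Set ℝ} {x : ℝ} (hh : IsDiffeoOn h U V)
    (hU : IsOpen U) (hV : IsOpen V) (hmono : MonotoneOn h U) (hx : x ∈ U) : 0 < deriv h x := by
  obtain ⟨hbij, hC, k, hk, hkC⟩ := hh
  have hhx : HasDerivAt h (deriv h x) x :=
    ((hC.contDiffAt (hU.mem_nhds hx)).differentiableAt one_ne_zero).hasDerivAt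
  have hkx : HasDerivAt k (deriv k (h x)) (h x) :=
    ((hkC.contDiffAt (hV.mem_nhds (hbij.mapsTo hx))).differentiableAt one_ne_zero).hasDerivAt
  have hid : k ∘ h =ᶠ[𝓝 x] id := EqOn.eventuallyEq_of_mem (fun y hy => hk.1 hy) (hU.mem_nhds hx)
  have hone : deriv k (h x) * deriv h x = 1 :=
    ((hkx.comp x hhx).congr_of_eventuallyEq hid.symm).unique (hasDerivAt_id x)
  refine lt_of_le_of_ne' ?_ (right_ne_zero_of_mul_eq_one hone)
  rw [← derivWithin_of_isOpen hU hx]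
  exact hmono.derivWithin_nonneg

theorem exists_isDiffeoOn_union {f g : ℝ → ℝ} {U V : Set ℝ} (hU : IsOpen U) (hV : IsOpen V)
    (hconv : (U ∪ V).OrdConnected) (hf : ContDiffOn ℝ 1 f U) (hf' : ∀ x ∈ U, 0 < deriv f x)
    (hg : ContDiffOn ℝ 1 g V) (hg' : ∀ x ∈ V, 0 < deriv g x) (heq : EqOn f g (U ∩ V)) :
    ∃ h : ℝ → ℝ, EqOn h f U ∧ EqOn h g V ∧ StrictMonoOn h (U ∪ V) ∧
      IsDiffeoOn h (U ∪ V) (f '' U ∪ g '' V) := by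
  classical
  obtain ⟨h, hhf, hhg⟩ : ∃ h : ℝ → ℝ, EqOn h f U ∧ EqOn h g V := by
    refine ⟨U.piecewise f g, piecewise_eqOn U f g, fun x hx => ?_⟩
    by_cases hxU : x ∈ U
    · rw [piecewise_eq_of_mem _ _ _ hxU, heq ⟨hxU, hx⟩]
    · exact piecewise_eq_of_notMem _ _ _ hxU
  have hh : ContDiffOn ℝ 1 h (U ∪ V) :=
    (hf.congr hhf).union_of_isOpen (hg.congr hhg) hU hV
  have hh' : ∀ x ∈ U ∪ V, 0 < deriv h x := by
    rintro x (hx | hx)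
    · rw [(hhf.eventuallyEq_of_mem (hU.mem_nhds hx)).deriv_eq]
      exact hf' x hx
    · rw [(hhg.eventuallyEq_of_mem (hV.mem_nhds hx)).deriv_eq]
      exact hg' x hx
  refine ⟨h, hhf, hhg, strictMonoOn_of_contDiffOn_of_deriv_pos hconv hh hh', ?_⟩
  rw [← hhf.image_eq, ← hhg.image_eq, ← image_union]
  exact isDiffeoOn_image_of_deriv_pos (hU.union hV) hconv hh hh'

theorem IsDiffeoOn.mono {h : ℝ → ℝ} {U V U' : Set ℝ} (hh : IsDiffeoOn h U V) (hU : U' ⊆ U) :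
    IsDiffeoOn h U' (h '' U') := by
  obtain ⟨hbij, hC, k, hk, hkC⟩ := hh
  have hV : h '' U' ⊆ V := image_subset_iff.2 fun x hx => hbij.mapsTo (hU hx)
  exact ⟨(hbij.injOn.mono hU).bijOn_image, hC.mono hU, k, hk.mono hU hV, hkC.mono hV⟩

/-! ### Diffeomorphisms of the line -/

/-- The `C¹` diffeomorphisms of the real line; an increasing one is a `LineDiffeo` which is
`StrictMono`. -/
abbrev LineDiffeo : Type := ℝ ≃ₘ^1⟮𝓘(ℝ, ℝ), 𝓘(ℝ, ℝ)⟯ ℝ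

theorem deriv_neg_or_deriv_pos {h : ℝ → ℝ} (hh : Differentiable ℝ h) (hne : ∀ x, deriv h x ≠ 0) :
    (∀ x, deriv h x < 0) ∨ ∀ x, 0 < deriv h x := by
  simpa using hasDerivWithinAt_forall_lt_or_forall_gt_of_forall_ne convex_univ
    (fun x _ => (hh x).hasDerivAt.hasDerivWithinAt) fun x _ => hne x

namespace LineDiffeo

theorem exists_coe_eq_of_isDiffeoOn_univ {h : ℝ → ℝ} (hh : IsDiffeoOn h univ univ) :
    ∃ e : LineDiffeo, ⇑e = h := by
  obtain ⟨-, hC, k, hk, hkC⟩ := hh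
  exact ⟨⟨⟨h, k, fun x => hk.1 (mem_univ x), fun x => hk.2 (mem_univ x)⟩,
    (contDiffOn_univ.1 hC).contMDiff, (contDiffOn_univ.1 hkC).contMDiff⟩, rfl⟩

theorem exists_coe_eq_of_deriv_ne_zero {h : ℝ → ℝ} (hC : ContDiff ℝ 1 h)
    (hd : ∀ x, deriv h x ≠ 0) (hbij : Bijective h) : ∃ e : LineDiffeo, ⇑e = h := by
  have := isDiffeoOn_image_of_deriv_ne_zero isOpen_univ hbij.injective.injOn hC.contDiffOn
    fun x _ => hd x
  rw [image_univ, hbij.surjective.range_eq] at this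
  exact exists_coe_eq_of_isDiffeoOn_univ this

theorem exists_coe_eq_of_deriv_pos {h : ℝ → ℝ} (hC : ContDiff ℝ 1 h)
    (hd : ∀ x, 0 < deriv h x) (hsurj : Surjective h) : ∃ e : LineDiffeo, ⇑e = h :=
  exists_coe_eq_of_deriv_ne_zero hC (fun x => (hd x).ne')
    ⟨(strictMono_of_deriv_pos hd).injective, hsurj⟩

theorem exists_coe_eq_of_le_deriv {h : ℝ → ℝ} {c : ℝ} (hC : ContDiff ℝ 1 h) (hc : 0 < c)
    (hd : ∀ x, c ≤ deriv h x) : ∃ e : LineDiffeo, ⇑e = h := by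
  have hdiff : Differentiable ℝ h := hC.differentiable one_ne_zero
  have hgrowth : ∀ x y, x ≤ y → c * (y - x) ≤ h y - h x :=
    mul_sub_le_image_sub_of_le_deriv hdiff hd
  refine exists_coe_eq_of_deriv_pos hC (fun x => hc.trans_le (hd x))
    (hC.continuous.surjective ?_ ?_)
  · refine tendsto_atTop_mono' _ ?_
      (tendsto_atTop_add_const_left _ (h 0) (tendsto_id.const_mul_atTop hc))
    filter_upwards [eventually_ge_atTop 0] with x hx
    rw [id_eq]
    linarith [hgrowth 0 x hx]
  · refine tendsto_atBot_mono' _ ?_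
      (tendsto_atBot_add_const_left _ (h 0) (tendsto_id.const_mul_atBot hc))
    filter_upwards [eventually_le_atBot 0] with x hx
    rw [id_eq]
    linarith [hgrowth x 0 hx]

theorem exists_coe_eq_of_le_abs_deriv {h : ℝ → ℝ} {c : ℝ} (hC : ContDiff ℝ 1 h) (hc : 0 < c)
    (hd : ∀ x, c ≤ |deriv h x|) : ∃ e : LineDiffeo, ⇑e = h := by
  have hne : ∀ x, deriv h x ≠ 0 := fun x => abs_pos.1 (hc.trans_le (hd x))
  rcases deriv_neg_or_deriv_pos (hC.differentiable one_ne_zero) hne with hneg | hpos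
  · obtain ⟨e, he⟩ := exists_coe_eq_of_le_deriv (h := fun x => -h x) hC.neg hc
      fun x => by simpa [abs_of_neg (hneg x)] using hd x
    have hbij : Bijective fun x => -h x := he ▸ e.toEquiv.bijective
    exact exists_coe_eq_of_deriv_ne_zero hC hne
      ((Equiv.neg ℝ).bijective.of_comp_iff' h |>.1 hbij)
  · exact exists_coe_eq_of_le_deriv hC hc fun x => by simpa [abs_of_pos (hpos x)] using hd x

variable (e : LineDiffeo)

protected theorem differentiable : Differentiable ℝ e :=
  e.contDiff.differentiable one_ne_zero

theorem continuous_deriv : Continuous (deriv e) :=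
  e.contDiff.continuous_deriv le_rfl

protected theorem injective : Injective e := e.toEquiv.injective

protected theorem surjective : Surjective e := e.toEquiv.surjective

protected theorem symm_apply_eq {x y : ℝ} : e.symm y = x ↔ y = e x := e.toEquiv.symm_apply_eq

theorem isDiffeoOn (U : Set ℝ) : IsDiffeoOn e U (e '' U) :=
  ⟨e.injective.injOn.bijOn_image, e.contDiff.contDiffOn, e.symm,
    ⟨fun x _ => e.symm_apply_apply x, fun y _ => e.apply_symm_apply y⟩,
    e.symm.contDiff.contDiffOn⟩

theorem deriv_symm_apply_mul (x : ℝ) : deriv e.symm (e x) * deriv e x = 1 := by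
  have hcomp := deriv_comp x (LineDiffeo.differentiable e.symm (e x)) (e.differentiable x)
  rw [← hcomp, show e.symm ∘ e = id from funext e.symm_apply_apply, deriv_id]

theorem deriv_ne_zero (x : ℝ) : deriv e x ≠ 0 :=
  right_ne_zero_of_mul_eq_one (e.deriv_symm_apply_mul x)

theorem deriv_symm (y : ℝ) : deriv e.symm y = (deriv e (e.symm y))⁻¹ := by
  have := e.deriv_symm_apply_mul (e.symm y)
  rw [e.apply_symm_apply] at this
  exact eq_inv_of_mul_eq_one_left this

theorem deriv_div_deriv_pos (x y : ℝ) : 0 < deriv e x / deriv e y := by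
  rcases deriv_neg_or_deriv_pos e.differentiable e.deriv_ne_zero with hneg | hpos
  · exact div_pos_of_neg_of_neg (hneg x) (hneg y)
  · exact div_pos (hpos x) (hpos y)

theorem strictMono_or_strictAnti : StrictMono e ∨ StrictAnti e := by
  rcases deriv_neg_or_deriv_pos e.differentiable e.deriv_ne_zero with hneg | hpos
  exacts [.inr (strictAnti_of_deriv_neg hneg), .inl (strictMono_of_deriv_pos hpos)]

variable {e}

theorem deriv_pos (he : StrictMono e) (x : ℝ) : 0 < deriv e x :=
  he.monotone.deriv_nonneg.lt_of_ne' (e.deriv_ne_zero x)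

theorem deriv_neg (he : StrictAnti e) (x : ℝ) : deriv e x < 0 :=
  he.antitone.deriv_nonpos.lt_of_ne (e.deriv_ne_zero x)

theorem strictMono_of_deriv_apply_pos {x : ℝ} (hx : 0 < deriv e x) : StrictMono e :=
  e.strictMono_or_strictAnti.resolve_right fun he => (deriv_neg he x).not_gt hx

theorem strictAnti_of_deriv_apply_neg {x : ℝ} (hx : deriv e x < 0) : StrictAnti e :=
  e.strictMono_or_strictAnti.resolve_left fun he => (deriv_pos he x).not_gt hx

theorem strictMono_symm (he : StrictMono e) : StrictMono e.symm := fun x y hxy => by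
  rwa [← he.lt_iff_lt, e.apply_symm_apply, e.apply_symm_apply]

theorem strictAnti_symm (he : StrictAnti e) : StrictAnti e.symm := fun x y hxy => by
  rwa [← he.lt_iff_gt, e.apply_symm_apply, e.apply_symm_apply]

end LineDiffeo

/-- Uniform bounds on a diffeomorphism of the line: `|F'|` takes values in `[c, C]` and `F'` is
`K`-Lipschitz. -/
structure HasDerivBounds (F : LineDiffeo) (c C K : ℝ) : Prop where
  le_abs_deriv : ∀ x, c ≤ |deriv F x|
  abs_deriv_le : ∀ x, |deriv F x| ≤ C
  abs_deriv_sub_le : ∀ x y, |deriv F x - deriv F y| ≤ K * |x - y|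

namespace HasDerivBounds

variable {F : LineDiffeo} {c C K z : ℝ}

theorem lipschitz_nonneg (hF : HasDerivBounds F c C K) : 0 ≤ K := by
  simpa using (abs_nonneg _).trans (hF.abs_deriv_sub_le 1 0)

theorem upper_nonneg (hF : HasDerivBounds F c C K) : 0 ≤ C :=
  (abs_nonneg _).trans (hF.abs_deriv_le 0)

theorem abs_sub_le (hF : HasDerivBounds F c C K) (x y : ℝ) : |F x - F y| ≤ C * |x - y| :=
  convex_univ.norm_image_sub_le_of_norm_deriv_le (fun x _ => F.differentiable x)
    (fun x _ => hF.abs_deriv_le x) (mem_univ y) (mem_univ x)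

theorem abs_deriv_symm_le (hF : HasDerivBounds F c C K) (hc : 0 < c) (y : ℝ) :
    |deriv F.symm y| ≤ c⁻¹ := by
  rw [F.deriv_symm, abs_inv]
  exact inv_anti₀ hc (hF.le_abs_deriv _)

theorem abs_symm_sub_le (hF : HasDerivBounds F c C K) (hc : 0 < c) (x y : ℝ) :
    |F.symm x - F.symm y| ≤ c⁻¹ * |x - y| :=
  convex_univ.norm_image_sub_le_of_norm_deriv_le
    (fun x _ => LineDiffeo.differentiable F.symm x) (fun x _ => hF.abs_deriv_symm_le hc x)
    (mem_univ y) (mem_univ x)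

theorem symm (hF : HasDerivBounds F c C K) (hc : 1 ≤ c) : HasDerivBounds F.symm C⁻¹ c⁻¹ K := by
  have hpos : ∀ x, 1 ≤ |deriv F x| := fun x => hc.trans (hF.le_abs_deriv x)
  have hcontr : ∀ x y, |F.symm x - F.symm y| ≤ |x - y| := fun x y =>
    (hF.abs_symm_sub_le (by linarith) x y).trans
      (mul_le_of_le_one_left (abs_nonneg _) (inv_le_one_of_one_le₀ hc))
  refine ⟨fun y => ?_, hF.abs_deriv_symm_le (by linarith), fun x y => ?_⟩
  · rw [F.deriv_symm, abs_inv]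
    exact inv_anti₀ (by linarith [hpos (F.symm y)]) (hF.abs_deriv_le _)
  · rw [F.deriv_symm, F.deriv_symm, inv_sub_inv (F.deriv_ne_zero _) (F.deriv_ne_zero _), abs_div,
      abs_sub_comm, abs_mul]
    calc _ ≤ |deriv F (F.symm x) - deriv F (F.symm y)| / 1 := by
          gcongr
          exact one_le_mul_of_one_le_of_one_le (hpos _) (hpos _)
      _ ≤ K * |F.symm x - F.symm y| := by simpa using hF.abs_deriv_sub_le _ _
      _ ≤ K * |x - y| := mul_le_mul_of_nonneg_left (hcontr x y) hF.lipschitz_nonneg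

theorem abs_iterate_sub_le (hF : HasDerivBounds F c C K) (hz : F z = z) (n : ℕ) (x : ℝ) :
    |F^[n] x - z| ≤ C ^ n * |x - z| := by
  induction n with
  | zero => simp
  | succ n ih =>
    calc |F^[n + 1] x - z| = |F (F^[n] x) - F z| := by rw [iterate_succ_apply', hz]
      _ ≤ C * |F^[n] x - z| := hF.abs_sub_le _ _
      _ ≤ C * (C ^ n * |x - z|) := mul_le_mul_of_nonneg_left ih hF.upper_nonneg
      _ = C ^ (n + 1) * |x - z| := by ring

theorem tendsto_iterate (hF : HasDerivBounds F c C K) (hC : C < 1) (hz : F z = z) (x : ℝ) :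
    Tendsto (fun n => F^[n] x) atTop (𝓝 z) := by
  rw [tendsto_iff_dist_tendsto_zero]
  refine squeeze_zero (fun _ => dist_nonneg) (fun n => hF.abs_iterate_sub_le hz n x) ?_
  simpa using (tendsto_pow_atTop_nhds_zero_of_lt_one hF.upper_nonneg hC).mul_const |x - z|

theorem log_deriv_div_le (hF : HasDerivBounds F c C K) (hc : 0 < c) (x y : ℝ) :
    Real.log (deriv F x / deriv F y) ≤ K / c * |x - y| :=
  calc Real.log (deriv F x / deriv F y) ≤ deriv F x / deriv F y - 1 :=
        Real.log_le_sub_one_of_pos (F.deriv_div_deriv_pos x y)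
    _ = (deriv F x - deriv F y) / deriv F y := by rw [sub_div, div_self (F.deriv_ne_zero y)]
    _ ≤ |deriv F x - deriv F y| / |deriv F y| := by rw [← abs_div]; exact le_abs_self _
    _ ≤ K * |x - y| / c := by
        have := hF.lipschitz_nonneg
        exact div_le_div₀ (by positivity) (hF.abs_deriv_sub_le x y) hc (hF.le_abs_deriv y)
    _ = K / c * |x - y| := by ring

theorem abs_log_deriv_div_le (hF : HasDerivBounds F c C K) (hc : 0 < c) (x y : ℝ) :
    |Real.log (deriv F x / deriv F y)| ≤ K / c * |x - y| := by
  refine abs_le'.2 ⟨hF.log_deriv_div_le hc x y, ?_⟩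
  rw [← Real.log_inv, inv_div, abs_sub_comm]
  exact hF.log_deriv_div_le hc y x

end HasDerivBounds

/-! ### Koenigs linearization and conjugacy of branches -/

/-- The logarithm of the derivative of the Koenigs linearization of `F` at its fixed point `z`. -/
noncomputable def koenigsExponent (F : ℝ → ℝ) (z x : ℝ) : ℝ :=
  ∑' n, Real.log (deriv F (F^[n] x) / deriv F z)

/-- The Koenigs function of `F` at its fixed point `z`; it conjugates a contraction `F` to its
linear part, see `koenigs_apply_map`. -/
noncomputable def koenigs (F : ℝ → ℝ) (z x : ℝ) : ℝ :=
  ∫ t in z..x, Real.exp (koenigsExponent F z t)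

namespace HasDerivBounds

variable {F : LineDiffeo} {c C K z : ℝ}

theorem abs_log_deriv_iterate_le (hF : HasDerivBounds F c C K) (hc : 0 < c) (hz : F z = z)
    (n : ℕ) (x : ℝ) :
    |Real.log (deriv F (F^[n] x) / deriv F z)| ≤ K / c * |x - z| * C ^ n :=
  calc |Real.log (deriv F (F^[n] x) / deriv F z)| ≤ K / c * |F^[n] x - z| :=
        hF.abs_log_deriv_div_le hc _ _
    _ ≤ K / c * (C ^ n * |x - z|) :=
        mul_le_mul_of_nonneg_left (hF.abs_iterate_sub_le hz n x)
          (div_nonneg hF.lipschitz_nonneg hc.le)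
    _ = K / c * |x - z| * C ^ n := by ring

theorem abs_koenigsExponent_le (hF : HasDerivBounds F c C K) (hc : 0 < c) (hC : C < 1)
    (hz : F z = z) (x : ℝ) :
    |koenigsExponent F z x| ≤ K / (c * (1 - C)) * |x - z| := by
  have hsum := tsum_of_norm_bounded (f := fun n => Real.log (deriv F (F^[n] x) / deriv F z))
    ((hasSum_geometric_of_lt_one hF.upper_nonneg hC).mul_left (K / c * |x - z|))
    fun n => hF.abs_log_deriv_iterate_le hc hz n x
  calc |koenigsExponent F z x| ≤ K / c * |x - z| * (1 - C)⁻¹ := hsum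
    _ = K / (c * (1 - C)) * |x - z| := by
        have : 1 - C ≠ 0 := by linarith
        field_simp

theorem koenigsExponent_eq_add (hF : HasDerivBounds F c C K) (hc : 0 < c) (hC : C < 1)
    (hz : F z = z) (x : ℝ) :
    koenigsExponent F z x = Real.log (deriv F x / deriv F z) + koenigsExponent F z (F x) :=
  (Summable.of_norm_bounded
    ((summable_geometric_of_lt_one hF.upper_nonneg hC).mul_left (K / c * |x - z|))
    fun n => hF.abs_log_deriv_iterate_le hc hz n x).tsum_eq_zero_add

theorem continuous_koenigsExponent (hF : HasDerivBounds F c C K) (hc : 0 < c) (hC : C < 1)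
    (hz : F z = z) : Continuous (koenigsExponent F z) := by
  have hball : ∀ r, ContinuousOn (koenigsExponent F z) (Metric.ball z r) := fun r =>
    continuousOn_tsum
      (fun n => Continuous.continuousOn <|
        ((F.continuous_deriv.comp (F.continuous.iterate n)).div_const _).log
          fun y => (F.deriv_div_deriv_pos _ _).ne')
      ((summable_geometric_of_lt_one hF.upper_nonneg hC).mul_left (K / c * r))
      fun n y hy => (hF.abs_log_deriv_iterate_le hc hz n y).trans <| by
        have hy' : |y - z| ≤ r := (Metric.mem_ball.1 hy).le
        have := hF.lipschitz_nonneg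
        have := hF.upper_nonneg
        gcongr
  refine continuous_iff_continuousAt.2 fun x => ?_
  exact (hball (dist x z + 1)).continuousAt (Metric.isOpen_ball.mem_nhds (by simp))

theorem hasDerivAt_koenigs (hF : HasDerivBounds F c C K) (hc : 0 < c) (hC : C < 1)
    (hz : F z = z) (x : ℝ) :
    HasDerivAt (koenigs F z) (Real.exp (koenigsExponent F z x)) x := by
  have hcont := Real.continuous_exp.comp (hF.continuous_koenigsExponent hc hC hz)
  exact intervalIntegral.integral_hasDerivAt_right (hcont.intervalIntegrable _ _)
    hcont.stronglyMeasurable.stronglyMeasurableAtFilter hcont.continuousAt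

theorem koenigs_apply_map (hF : HasDerivBounds F c C K) (hc : 0 < c) (hC : C < 1)
    (hz : F z = z) (x : ℝ) : koenigs F z (F x) = deriv F z * koenigs F z x := by
  have hconst : ∀ x, HasDerivAt (fun x => koenigs F z (F x) - deriv F z * koenigs F z x) 0 x := by
    intro x
    refine (((hF.hasDerivAt_koenigs hc hC hz (F x)).comp x (F.differentiable x).hasDerivAt).sub
      ((hF.hasDerivAt_koenigs hc hC hz x).const_mul (deriv F z))).congr_deriv ?_
    rw [hF.koenigsExponent_eq_add hc hC hz x, Real.exp_add,
      Real.exp_log (F.deriv_div_deriv_pos _ _)]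
    have := F.deriv_ne_zero z
    field_simp
    ring
  have heq := is_const_of_deriv_eq_zero (fun x => (hconst x).differentiableAt)
    (fun x => (hconst x).deriv) x z
  have hz0 : koenigs F z z = 0 := intervalIntegral.integral_same
  simp only [hz, hz0, mul_zero, sub_zero] at heq
  linarith

end HasDerivBounds

theorem surjective_of_map_eq_mul {F : LineDiffeo} {φ : ℝ → ℝ} {z m : ℝ} (hφ : Continuous φ)
    (hmono : StrictMono φ) (hz : φ z = 0) (hm : |m| < 1) (hm0 : m ≠ 0)
    (hF : ∀ x, φ (F x) = m * φ x) : Surjective φ := by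
  intro y
  have hiter : ∀ n x, φ (F^[n] x) = m ^ n * φ x := fun n x => by
    induction n with
    | zero => simp
    | succ n ih => rw [iterate_succ_apply', hF, ih]; ring
  have hneg : φ (z - 1) < 0 := hz ▸ hmono (sub_one_lt z)
  have hpos : 0 < φ (z + 1) := hz ▸ hmono (lt_add_one z)
  have hlim : Tendsto (fun n => m ^ n * y) atTop (𝓝 0) := by
    simpa using (tendsto_pow_atTop_nhds_zero_of_abs_lt_one hm).mul_const y
  obtain ⟨n, hn⟩ := (hlim.eventually (Icc_mem_nhds hneg hpos)).exists
  obtain ⟨x, -, hx⟩ := intermediate_value_Icc (by linarith) hφ.continuousOn hn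
  obtain ⟨w, rfl⟩ := F.surjective.iterate n x
  rw [hiter] at hx
  exact ⟨w, mul_left_cancel₀ (pow_ne_zero n hm0) hx⟩

/-- `φ` is an increasing `C¹` conjugacy from `F` to its linear part at the fixed point `z`,
normalized by `φ z = 0` and `φ' z = 1`, and with `|log φ'| ≤ D |x - z|`. -/
structure IsLinearization (F : LineDiffeo) (z D : ℝ) (φ : LineDiffeo) : Prop where
  strictMono : StrictMono φ
  map_fix : φ z = 0
  deriv_fix : deriv φ z = 1
  map_apply : ∀ x, φ (F x) = deriv F z * φ x
  abs_log_deriv_le : ∀ x, |Real.log (deriv φ x)| ≤ D * |x - z|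

section Linearization

variable {F : LineDiffeo} {c C K z D : ℝ} {φ : LineDiffeo}

theorem HasDerivBounds.exists_isLinearization (hF : HasDerivBounds F c C K) (hc : 0 < c)
    (hC : C < 1) (hz : F z = z) : ∃ φ, IsLinearization F z (K / (c * (1 - C))) φ := by
  have hderiv := hF.hasDerivAt_koenigs hc hC hz
  have hderiv' : deriv (koenigs F z) = fun x => Real.exp (koenigsExponent F z x) :=
    funext fun x => (hderiv x).deriv
  have hpos : ∀ x, 0 < deriv (koenigs F z) x := fun x => by rw [hderiv']; exact Real.exp_pos _
  have hC1 : ContDiff ℝ 1 (koenigs F z) := contDiff_one_iff_deriv.2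
    ⟨fun x => (hderiv x).differentiableAt, by
      rw [hderiv']; exact Real.continuous_exp.comp (hF.continuous_koenigsExponent hc hC hz)⟩
  have hz0 : koenigs F z z = 0 := intervalIntegral.integral_same
  obtain ⟨φ, hφ⟩ := LineDiffeo.exists_coe_eq_of_deriv_pos hC1 hpos
    (surjective_of_map_eq_mul hC1.continuous (strictMono_of_deriv_pos hpos) hz0
      ((hF.abs_deriv_le z).trans_lt hC) (F.deriv_ne_zero z) (hF.koenigs_apply_map hc hC hz))
  have hbound := hF.abs_koenigsExponent_le hc hC hz
  refine ⟨φ, hφ ▸ strictMono_of_deriv_pos hpos, hφ ▸ hz0, ?_, fun x => ?_, fun x => ?_⟩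
  · have : koenigsExponent F z z = 0 := by simpa using hbound z
    simp only [hφ, hderiv', this, Real.exp_zero]
  · rw [hφ]; exact hF.koenigs_apply_map hc hC hz x
  · rw [hφ, hderiv', Real.log_exp]; exact hbound x

theorem IsLinearization.of_symm (hz : F z = z) (hφ : IsLinearization F.symm z D φ) :
    IsLinearization F z D φ where
  __ := hφ
  map_apply x := by
    have h := hφ.map_apply (F x)
    rw [F.symm_apply_apply, F.deriv_symm, F.symm_apply_eq.2 hz.symm,
      eq_inv_mul_iff_mul_eq₀ (F.deriv_ne_zero z)] at h
    exact h.symm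

theorem HasDerivBounds.exists_isLinearization_of_one_lt (hF : HasDerivBounds F c C K) (hc : 1 < c)
    (hz : F z = z) : ∃ φ, IsLinearization F z (K / (C⁻¹ * (1 - c⁻¹))) φ := by
  have hC : 0 < C := by linarith [(hF.le_abs_deriv 0).trans (hF.abs_deriv_le 0)]
  obtain ⟨φ, hφ⟩ := (hF.symm hc.le).exists_isLinearization (inv_pos.2 hC) (inv_lt_one_of_one_lt₀ hc)
    (z := z) (F.symm_apply_eq.2 hz.symm)
  exact ⟨φ, hφ.of_symm hz⟩

namespace IsLinearization

variable {P D' : ℝ}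

theorem mono (hφ : IsLinearization F z D φ) (hD : D ≤ D') : IsLinearization F z D' φ where
  __ := hφ
  abs_log_deriv_le x :=
    (hφ.abs_log_deriv_le x).trans (mul_le_mul_of_nonneg_right hD (abs_nonneg _))

theorem deriv_mem_Icc (hφ : IsLinearization F z D φ) (hD : 0 ≤ D) (hz : |z| ≤ P) {x : ℝ}
    (hx : |x| ≤ 2 * P) : deriv φ x ∈ Icc (Real.exp (3 * D * P))⁻¹ (Real.exp (3 * D * P)) := by
  have hlog : |Real.log (deriv φ x)| ≤ 3 * D * P := by
    have hdist : |x - z| ≤ 3 * P := by linarith [abs_sub x z]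
    calc _ ≤ D * |x - z| := hφ.abs_log_deriv_le x
      _ ≤ D * (3 * P) := mul_le_mul_of_nonneg_left hdist hD
      _ = 3 * D * P := by ring
  have hpos := LineDiffeo.deriv_pos hφ.strictMono x
  rw [mem_Icc, ← Real.exp_neg, ← Real.le_log_iff_exp_le hpos, ← Real.log_le_iff_le_exp hpos]
  exact abs_le.1 hlog

theorem sub_mem_Icc (hφ : IsLinearization F z D φ) (hD : 0 ≤ D) (hz : |z| ≤ P) {x y : ℝ}
    (hx : |x| ≤ 2 * P) (hy : |y| ≤ 2 * P) (hxy : x ≤ y) :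
    φ y - φ x ∈ Icc ((Real.exp (3 * D * P))⁻¹ * (y - x)) (Real.exp (3 * D * P) * (y - x)) := by
  have hderiv : ∀ t ∈ interior (Icc (-(2 * P)) (2 * P)),
      deriv φ t ∈ Icc (Real.exp (3 * D * P))⁻¹ (Real.exp (3 * D * P)) := fun t ht =>
    hφ.deriv_mem_Icc hD hz (abs_le.2 (interior_subset ht : t ∈ Icc _ _))
  have hcont := φ.continuous.continuousOn (s := Icc (-(2 * P)) (2 * P))
  have hdiff := φ.differentiable.differentiableOn (s := interior (Icc (-(2 * P)) (2 * P)))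
  exact ⟨(convex_Icc _ _).mul_sub_le_image_sub_of_le_deriv hcont hdiff
      (fun t ht => (hderiv t ht).1) x (abs_le.1 hx) y (abs_le.1 hy) hxy,
    (convex_Icc _ _).image_sub_le_mul_sub_of_deriv_le hcont hdiff
      (fun t ht => (hderiv t ht).2) x (abs_le.1 hx) y (abs_le.1 hy) hxy⟩

theorem abs_sub_mem_Icc (hφ : IsLinearization F z D φ) (hD : 0 ≤ D) (hz : |z| ≤ P) {x : ℝ}
    (hx : |x| ≤ 2 * P) :
    |φ x - φ 0| ∈ Icc ((Real.exp (3 * D * P))⁻¹ * |x|) (Real.exp (3 * D * P) * |x|) := by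
  have h0 : |(0 : ℝ)| ≤ 2 * P := by rw [abs_zero]; exact (abs_nonneg x).trans hx
  rcases le_total 0 x with hx0 | hx0
  · rw [abs_of_nonneg hx0, abs_of_nonneg (sub_nonneg.2 (hφ.strictMono.monotone hx0))]
    simpa using hφ.sub_mem_Icc hD hz h0 hx hx0
  · rw [abs_of_nonpos hx0, abs_of_nonpos (sub_nonpos.2 (hφ.strictMono.monotone hx0)), neg_sub]
    simpa using hφ.sub_mem_Icc hD hz hx h0 hx0

theorem map_apply_zero_sub (hφ : IsLinearization F z D φ) :
    φ (F 0) - φ 0 = (deriv F z - 1) * φ 0 := by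
  rw [hφ.map_apply]; ring

theorem fix_eq_zero (hφ : IsLinearization F z D φ) (hm : deriv F z ≠ 1) (h0 : F 0 = 0) :
    z = 0 := by
  have h := hφ.map_apply_zero_sub
  rw [h0, sub_self, zero_eq_mul, or_iff_right (sub_ne_zero.2 hm)] at h
  exact φ.injective (hφ.map_fix.trans h.symm)

end IsLinearization

/-- `h` is an increasing conjugacy from `F` to `G` which fixes the origin, and which is tangent to
the identity there if the origin is a fixed point. -/
structure IsBranchConj (F G h : LineDiffeo) : Prop where
  strictMono : StrictMono h
  map_zero : h 0 = 0
  map_apply : ∀ x, h (F x) = G (h x)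
  deriv_zero : F 0 = 0 → deriv h 0 = 1

/-- `h` moves the points of `[-P, P]` by at most the fraction `ε` of their distance to `0`. -/
def IsNearId (ε P : ℝ) (h : ℝ → ℝ) : Prop := ∀ x, |x| ≤ P → |h x - x| ≤ ε * |x|

variable {G h ψ : LineDiffeo} {w P κ : ℝ}

theorem IsBranchConj.deriv_map_apply (hh : IsBranchConj F G h) (x : ℝ) :
    deriv h (F x) * deriv F x = deriv G (h x) * deriv h x := by
  rw [← deriv_comp x (h.differentiable _) (F.differentiable x),
    ← deriv_comp x (G.differentiable _) (h.differentiable x)]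
  exact congrArg (fun k => deriv k x) (funext hh.map_apply)

theorem exists_coe_eq_const_mul (hκ : 0 < κ) : ∃ e : LineDiffeo, ∀ x, e x = κ * x := by
  obtain ⟨e, he⟩ := LineDiffeo.exists_coe_eq_of_le_deriv (h := fun x => κ * x) (by fun_prop) hκ
    fun x => by simp
  exact ⟨e, congrFun he⟩

/-- Both linearizations transport the displacement `F 0 - 0 = G 0 - 0`, which fixes the sign of the
ratio. -/
theorem exists_pos_mul_eq (hφ : IsLinearization F z D φ) (hψ : IsLinearization G w D ψ)
    (hm : deriv F z = deriv G w) (hm1 : deriv F z ≠ 1) (h0 : F 0 = G 0) :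
    ∃ κ > 0, κ * φ 0 = ψ 0 ∧ (F 0 = 0 → κ = 1) := by
  by_cases hν : F 0 = 0
  · have hz := hφ.fix_eq_zero hm1 hν
    have hw := hψ.fix_eq_zero (hm ▸ hm1) (h0 ▸ hν)
    have hφ0 : φ 0 = 0 := hz ▸ hφ.map_fix
    have hψ0 : ψ 0 = 0 := hw ▸ hψ.map_fix
    exact ⟨1, one_pos, by rw [hφ0, hψ0, mul_zero], fun _ => rfl⟩
  have hm1' : deriv F z - 1 ≠ 0 := sub_ne_zero.2 hm1
  have hφν := hφ.map_apply_zero_sub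
  have hψν := hψ.map_apply_zero_sub
  rw [← hm, ← h0] at hψν
  refine ⟨(ψ (F 0) - ψ 0) / (φ (F 0) - φ 0), ?_, ?_, fun h => absurd h hν⟩
  · rcases lt_or_gt_of_ne hν with hν | hν
    · exact div_pos_of_neg_of_neg (sub_neg.2 (hψ.strictMono hν)) (sub_neg.2 (hφ.strictMono hν))
    · exact div_pos (sub_pos.2 (hψ.strictMono hν)) (sub_pos.2 (hφ.strictMono hν))
  · have hφ0 : φ 0 ≠ 0 := fun h => hν <| φ.injective <| by rw [hφ.map_apply, h, mul_zero]
    rw [hφν, hψν]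
    field_simp

theorem IsLinearization.isBranchConj (hφ : IsLinearization F z D φ) (hψ : IsLinearization G w D ψ)
    (hm : deriv F z = deriv G w) (hm1 : deriv F z ≠ 1) (h0 : F 0 = G 0) (hκ : 0 < κ)
    (hκ0 : κ * φ 0 = ψ 0) (hκ1 : F 0 = 0 → κ = 1) (hh : ∀ x, ψ (h x) = κ * φ x) :
    IsBranchConj F G h where
  strictMono x y hxy := by
    rw [← hψ.strictMono.lt_iff_lt, hh, hh]
    exact mul_lt_mul_of_pos_left (hφ.strictMono hxy) hκ
  map_zero := ψ.injective ((hh 0).trans hκ0)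
  map_apply x := ψ.injective <| by rw [hh, hφ.map_apply, hψ.map_apply, hh, hm]; ring
  deriv_zero hν := by
    have hz := hφ.fix_eq_zero hm1 hν
    have hw := hψ.fix_eq_zero (hm ▸ hm1) (h0 ▸ hν)
    have hcomp := deriv_comp 0 (ψ.differentiable (h 0)) (h.differentiable 0)
    rw [show ψ ∘ h = φ from funext fun x => by simp [hh, hκ1 hν],
      show h 0 = 0 from ψ.injective ((hh 0).trans hκ0)] at hcomp
    have hφ' : deriv φ 0 = 1 := hz ▸ hφ.deriv_fix
    have hψ' : deriv ψ 0 = 1 := hw ▸ hψ.deriv_fix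
    rw [hφ', hψ', one_mul] at hcomp
    exact hcomp.symm

theorem abs_le_abs_of_abs_sub_le (hψ : StrictMono ψ) {a b : ℝ} (hab : 0 ≤ a * b)
    (h : |ψ a - ψ 0| ≤ |ψ b - ψ 0|) : |a| ≤ |b| := by
  by_contra! hlt
  have hsign : 0 ≤ b ∧ b < a ∨ b ≤ 0 ∧ a < b := by
    rcases mul_nonneg_iff.1 hab with ⟨ha, hb⟩ | ⟨ha, hb⟩
    · exact Or.inl ⟨hb, by rwa [abs_of_nonneg ha, abs_of_nonneg hb] at hlt⟩
    · exact Or.inr ⟨hb, by rw [abs_of_nonpos ha, abs_of_nonpos hb] at hlt; linarith⟩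
  rcases hsign with ⟨hb, hba⟩ | ⟨hb, hab⟩
  · have hb' := hψ.monotone hb
    have ha' := hψ hba
    rw [abs_of_nonneg (by linarith), abs_of_nonneg (by linarith)] at h
    linarith
  · have hb' := hψ.monotone hb
    have ha' := hψ hab
    rw [abs_of_nonpos (by linarith), abs_of_nonpos (by linarith)] at h
    linarith

theorem scale_mem_Icc (hφ : IsLinearization F z D φ) (hψ : IsLinearization G w D ψ)
    (hD : 0 ≤ D) (h0 : F 0 = G 0) (hκ : 0 < κ) (hκ1 : F 0 = 0 → κ = 1)
    (hscale : ψ (G 0) - ψ 0 = κ * (φ (F 0) - φ 0)) (hz : |z| ≤ P) (hw : |w| ≤ P)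
    (hν : |F 0| ≤ P) :
    κ ∈ Icc ((Real.exp (3 * D * P))⁻¹ ^ 2) (Real.exp (3 * D * P) ^ 2) := by
  have hP : 0 ≤ P := (abs_nonneg z).trans hz
  set E := Real.exp (3 * D * P)
  have hE : 1 ≤ E := Real.one_le_exp (by positivity)
  by_cases hν0 : F 0 = 0
  · rw [hκ1 hν0]
    exact ⟨pow_le_one₀ (by positivity) (inv_le_one_of_one_le₀ hE), one_le_pow₀ hE⟩
  have hνpos : 0 < |F 0| := abs_pos.2 hν0
  obtain ⟨hφ1, hφ2⟩ := hφ.abs_sub_mem_Icc hD hz (x := F 0) (by linarith)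
  obtain ⟨hψ1, hψ2⟩ := hψ.abs_sub_mem_Icc hD hw (x := F 0) (by linarith)
  rw [h0, hscale, abs_mul, abs_of_pos hκ, ← h0] at hψ1 hψ2
  constructor
  · refine le_of_mul_le_mul_right ?_ (mul_pos (show 0 < E by positivity) hνpos)
    calc E⁻¹ ^ 2 * (E * |F 0|) = E⁻¹ * |F 0| := by field_simp
      _ ≤ κ * |φ (F 0) - φ 0| := hψ1
      _ ≤ κ * (E * |F 0|) := mul_le_mul_of_nonneg_left hφ2 hκ.le
  · refine le_of_mul_le_mul_right ?_ (mul_pos (show 0 < E⁻¹ by positivity) hνpos)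
    calc κ * (E⁻¹ * |F 0|) ≤ κ * |φ (F 0) - φ 0| := mul_le_mul_of_nonneg_left hφ1 hκ.le
      _ ≤ E * |F 0| := hψ2
      _ = E ^ 2 * (E⁻¹ * |F 0|) := by field_simp

theorem abs_conj_mem_Icc (hφ : IsLinearization F z D φ) (hψ : IsLinearization G w D ψ)
    (hD : 0 ≤ D) (hz : |z| ≤ P) (hw : |w| ≤ P) (hκ : 0 < κ)
    (hκE : κ ∈ Icc ((Real.exp (3 * D * P))⁻¹ ^ 2) (Real.exp (3 * D * P) ^ 2))
    (hE2 : Real.exp (3 * D * P) ^ 4 ≤ 2)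
    (hh : ∀ x, ψ (h x) - ψ 0 = κ * (φ x - φ 0)) {x : ℝ} (hx : |x| ≤ P) (hsign : 0 ≤ h x * x) :
    |h x| ∈ Icc ((Real.exp (3 * D * P))⁻¹ ^ 4 * |x|) (Real.exp (3 * D * P) ^ 4 * |x|) := by
  have hP : 0 ≤ P := (abs_nonneg z).trans hz
  set E := Real.exp (3 * D * P)
  have hE : 1 ≤ E := Real.one_le_exp (by positivity)
  obtain ⟨hφ1, hφ2⟩ := hφ.abs_sub_mem_Icc hD hz (x := x) (by linarith)
  have habs : |ψ (h x) - ψ 0| = κ * |φ x - φ 0| := by rw [hh, abs_mul, abs_of_pos hκ]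
  have hcompare : ∀ ρ : ℝ, 0 ≤ ρ → |ρ * x| = ρ * |x| ∧ 0 ≤ h x * (ρ * x) := fun ρ hρ =>
    ⟨by rw [abs_mul, abs_of_nonneg hρ], by rw [mul_left_comm]; exact mul_nonneg hρ hsign⟩
  constructor
  · obtain ⟨habsρ, hsignρ⟩ := hcompare (E⁻¹ ^ 4) (by positivity)
    have hle : |E⁻¹ ^ 4 * x| ≤ 2 * P := by
      rw [habsρ]
      have : E⁻¹ ^ 4 ≤ 1 := pow_le_one₀ (by positivity) (inv_le_one_of_one_le₀ hE)
      nlinarith [abs_nonneg x]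
    rw [← habsρ]
    refine abs_le_abs_of_abs_sub_le hψ.strictMono (by rwa [mul_comm]) ?_
    calc |ψ (E⁻¹ ^ 4 * x) - ψ 0| ≤ E * |E⁻¹ ^ 4 * x| := (hψ.abs_sub_mem_Icc hD hw hle).2
      _ = E⁻¹ ^ 2 * (E⁻¹ * |x|) := by rw [habsρ]; field_simp
      _ ≤ κ * |φ x - φ 0| := mul_le_mul hκE.1 hφ1 (by positivity) hκ.le
      _ = |ψ (h x) - ψ 0| := habs.symm
  · obtain ⟨habsρ, hsignρ⟩ := hcompare (E ^ 4) (by positivity)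
    have hle : |E ^ 4 * x| ≤ 2 * P := by rw [habsρ]; gcongr
    rw [← habsρ]
    refine abs_le_abs_of_abs_sub_le hψ.strictMono hsignρ ?_
    calc |ψ (h x) - ψ 0| = κ * |φ x - φ 0| := habs
      _ ≤ E ^ 2 * (E * |x|) := mul_le_mul hκE.2 hφ2 (abs_nonneg _) (by positivity)
      _ = E⁻¹ * |E ^ 4 * x| := by rw [habsρ]; field_simp
      _ ≤ |ψ (E ^ 4 * x) - ψ 0| := (hψ.abs_sub_mem_Icc hD hw hle).1

theorem abs_sub_le_of_abs_mem_Icc {a x M : ℝ} (hM : 1 ≤ M) (hsign : 0 ≤ a * x)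
    (h : |a| ∈ Icc (M⁻¹ * |x|) (M * |x|)) : |a - x| ≤ (M - 1) * |x| := by
  have hinv : 2 - M ≤ M⁻¹ := by
    rw [← one_div, le_div_iff₀ (by linarith)]
    nlinarith [sq_nonneg (M - 1)]
  have habs : |a - x| = |(|a| - |x|)| := by
    rcases mul_nonneg_iff.1 hsign with ⟨ha, hx⟩ | ⟨ha, hx⟩
    · rw [abs_of_nonneg ha, abs_of_nonneg hx]
    · rw [abs_of_nonpos ha, abs_of_nonpos hx, neg_sub_neg, abs_sub_comm]
  rw [habs, abs_le]
  constructor <;> nlinarith [h.1, h.2, abs_nonneg x]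

theorem IsLinearization.exists_isBranchConj (hφ : IsLinearization F z D φ)
    (hψ : IsLinearization G w D ψ) (hD : 0 ≤ D) (hm : deriv F z = deriv G w)
    (hm1 : deriv F z ≠ 1) (h0 : F 0 = G 0) (hz : |z| ≤ P) (hw : |w| ≤ P) (hν : |F 0| ≤ P)
    (hE2 : Real.exp (3 * D * P) ^ 4 ≤ 2) :
    ∃ h : LineDiffeo, IsBranchConj F G h ∧ IsNearId (Real.exp (3 * D * P) ^ 4 - 1) P h := by
  have hP : 0 ≤ P := (abs_nonneg z).trans hz
  obtain ⟨κ, hκ, hκ0, hκ1⟩ := exists_pos_mul_eq hφ hψ hm hm1 h0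
  obtain ⟨e, he⟩ := exists_coe_eq_const_mul hκ
  let h : LineDiffeo := φ.trans (e.trans ψ.symm)
  have hh : ∀ x, ψ (h x) = κ * φ x := fun x => by simp [h, he]
  have hconj := hφ.isBranchConj hψ hm hm1 h0 hκ hκ0 hκ1 hh
  have hsub : ∀ x, ψ (h x) - ψ 0 = κ * (φ x - φ 0) := fun x => by rw [hh, ← hκ0]; ring
  have hκE := scale_mem_Icc hφ hψ hD h0 hκ hκ1
    (by rw [← hsub, hconj.map_apply, hconj.map_zero]) hz hw hν
  refine ⟨h, hconj, fun x hx => ?_⟩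
  have hsign : 0 ≤ h x * x := by
    rcases le_total 0 x with hx0 | hx0
    · exact mul_nonneg (hconj.map_zero ▸ hconj.strictMono.monotone hx0) hx0
    · exact mul_nonneg_of_nonpos_of_nonpos (hconj.map_zero ▸ hconj.strictMono.monotone hx0) hx0
  refine abs_sub_le_of_abs_mem_Icc (one_le_pow₀ (Real.one_le_exp (by positivity))) hsign ?_
  simpa only [inv_pow] using abs_conj_mem_Icc hφ hψ hD hz hw hκ hκE hE2 hsub hx hsign

end Linearization

/-! ### Extending a conjugacy along orbits -/

theorem hasDerivAt_piecewise {l r l' r' : ℝ → ℝ} {A : Set ℝ} {c x : ℝ}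
    [∀ y, Decidable (y ∈ A)] (hA : frontier A ⊆ {c}) (hl : HasDerivAt l (l' x) x)
    (hr : HasDerivAt r (r' x) x) (h0 : l c = r c) (h1 : l' c = r' c) :
    HasDerivAt (A.piecewise l r) (A.piecewise l' r' x) x := by
  by_cases hint : x ∈ interior A
  · rw [piecewise_eq_of_mem _ _ _ (interior_subset hint)]
    exact hl.congr_of_eventuallyEq ((A.piecewise_eqOn l r).eventuallyEq_of_mem
      (mem_interior_iff_mem_nhds.1 hint))
  by_cases hext : x ∈ interior Aᶜ
  · rw [piecewise_eq_of_notMem _ _ _ (interior_subset hext)]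
    exact hr.congr_of_eventuallyEq ((A.piecewise_eqOn_compl l r).eventuallyEq_of_mem
      (mem_interior_iff_mem_nhds.1 hext))
  obtain rfl : x = c := hA ⟨by rwa [interior_compl, notMem_compl_iff] at hext, hint⟩
  have hval : A.piecewise l r x = l x := by by_cases hx : x ∈ A <;> simp [hx, h0]
  have hder : A.piecewise l' r' x = l' x := by by_cases hx : x ∈ A <;> simp [hx, h1]
  rw [hder, ← hasDerivWithinAt_univ, ← union_compl_self A]
  exact (hl.hasDerivWithinAt.congr (A.piecewise_eqOn l r) hval).union
    ((h1 ▸ hr.hasDerivWithinAt).congr (A.piecewise_eqOn_compl l r) (hval.trans h0))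

theorem contDiff_piecewise {l r : ℝ → ℝ} {A : Set ℝ} {c : ℝ} [∀ y, Decidable (y ∈ A)]
    (hA : frontier A ⊆ {c}) (hl : ContDiff ℝ 1 l) (hr : ContDiff ℝ 1 r) (h0 : l c = r c)
    (h1 : deriv l c = deriv r c) : ContDiff ℝ 1 (A.piecewise l r) := by
  have hderiv : ∀ x, HasDerivAt (A.piecewise l r) (A.piecewise (deriv l) (deriv r) x) x := fun x =>
    hasDerivAt_piecewise hA (hl.differentiable one_ne_zero x).hasDerivAt
      (hr.differentiable one_ne_zero x).hasDerivAt h0 h1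
  refine contDiff_one_iff_deriv.2 ⟨fun x => (hderiv x).differentiableAt, ?_⟩
  rw [funext fun x => (hderiv x).deriv]
  exact Continuous.piecewise (fun x hx => by rw [hA hx, h1]) (hl.continuous_deriv le_rfl)
    (hr.continuous_deriv le_rfl)

namespace LineDiffeo

section

variable {e : LineDiffeo} (he : StrictMono e)
include he

theorem image_Iic (c : ℝ) : e '' Iic c = Iic (e c) :=
  (he.orderIsoOfSurjective e e.surjective).image_Iic c

theorem image_Ici (c : ℝ) : e '' Ici c = Ici (e c) :=
  (he.orderIsoOfSurjective e e.surjective).image_Ici c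

theorem image_Ioo (a b : ℝ) : e '' Ioo a b = Ioo (e a) (e b) :=
  (he.orderIsoOfSurjective e e.surjective).image_Ioo a b

end

theorem image_Ioo_of_strictAnti {e : LineDiffeo} (he : StrictAnti e) (a b : ℝ) :
    e '' Ioo a b = Ioo (e b) (e a) := by
  ext y
  obtain ⟨x, rfl⟩ := e.surjective y
  rw [e.injective.mem_set_image, mem_Ioo, mem_Ioo, he.lt_iff_gt, he.lt_iff_gt, and_comm]

theorem image_eq_image_of_apply_eq {l r : LineDiffeo} {A : Set ℝ} {c : ℝ}
    (hA : A = Iic c ∨ A = Ici c) (hl : StrictMono l) (hr : StrictMono r) (h0 : l c = r c) :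
    l '' A = r '' A := by
  rcases hA with rfl | rfl
  · rw [image_Iic hl, image_Iic hr, h0]
  · rw [image_Ici hl, image_Ici hr, h0]

theorem exists_coe_eq_piecewise {l r : LineDiffeo} {A : Set ℝ} {c : ℝ} [∀ y, Decidable (y ∈ A)]
    (hA : A = Iic c ∨ A = Ici c) (hl : StrictMono l) (hr : StrictMono r) (h0 : l c = r c)
    (h1 : deriv l c = deriv r c) :
    ∃ e : LineDiffeo, ⇑e = A.piecewise l r ∧ StrictMono e := by
  have hfr : frontier A ⊆ {c} := by
    rcases hA with rfl | rfl
    exacts [frontier_Iic_subset c, frontier_Ici_subset c]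
  have hpos : ∀ x, 0 < deriv (A.piecewise l r) x := fun x => by
    rw [(hasDerivAt_piecewise hfr (l.differentiable x).hasDerivAt (r.differentiable x).hasDerivAt
      h0 h1).deriv]
    by_cases hx : x ∈ A <;> simp [hx, deriv_pos hl, deriv_pos hr]
  have hsurj : Surjective (A.piecewise l r) := fun y => by
    obtain ⟨x, rfl⟩ := r.surjective y
    by_cases hx : x ∈ A
    · obtain ⟨x', hx', hxx'⟩ := (image_eq_image_of_apply_eq hA hl hr h0).ge (mem_image_of_mem r hx)
      exact ⟨x', by rw [piecewise_eq_of_mem _ _ _ hx', hxx']⟩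
    · exact ⟨x, piecewise_eq_of_notMem _ _ _ hx⟩
  obtain ⟨e, he⟩ := exists_coe_eq_of_deriv_pos (contDiff_piecewise hfr l.contDiff r.contDiff h0 h1)
    hpos hsurj
  exact ⟨e, he, he ▸ strictMono_of_deriv_pos hpos⟩

end LineDiffeo

/-- Data for extending `h₀`, which is to conjugate `P` to `Q` on the half-line `A` with endpoint
`c`, along the orbits of `P` that enter `A`: at `c` the germs of `h₀ ∘ P` and `Q ∘ h₀` agree to
first order. -/
structure IsEntry (P Q h₀ : LineDiffeo) (A : Set ℝ) (c : ℝ) : Prop where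
  strictMono_source : StrictMono P
  strictMono_target : StrictMono Q
  strictMono_conj : StrictMono h₀
  halfLine : A = Iic c ∨ A = Ici c
  apply_mem_interior : P c ∈ interior A
  map_apply : h₀ (P c) = Q (h₀ c)
  deriv_map_apply : deriv h₀ (P c) * deriv P c = deriv Q (h₀ c) * deriv h₀ c

open Classical in
/-- The `n`-th extension of `h₀`: it is `h₀` on `A`, and it conjugates `P` to `Q` on the points
outside `A` whose orbit under `P` enters `A` within `n` steps. -/
noncomputable def entryExtension (P Q h₀ : LineDiffeo) (A : Set ℝ) : ℕ → ℝ → ℝ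
  | 0 => h₀
  | n + 1 => A.piecewise h₀ (Q.symm ∘ entryExtension P Q h₀ A n ∘ P)

section

variable {P Q h₀ : LineDiffeo} {A : Set ℝ} {c : ℝ}

theorem eqOn_entryExtension (n : ℕ) : EqOn (entryExtension P Q h₀ A n) h₀ A := by
  cases n with
  | zero => exact fun x _ => rfl
  | succ n => classical exact piecewise_eqOn A _ _

theorem apply_entryExtension_succ (n : ℕ) {x : ℝ} (hx : x ∉ A) :
    Q (entryExtension P Q h₀ A (n + 1) x) = entryExtension P Q h₀ A n (P x) := by
  simp [entryExtension, hx]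

theorem entryExtension_succ_eq (n : ℕ) {x : ℝ} (hx : P^[n] x ∈ A) :
    entryExtension P Q h₀ A (n + 1) x = entryExtension P Q h₀ A n x := by
  by_cases hxA : x ∈ A
  · rw [eqOn_entryExtension _ hxA, eqOn_entryExtension _ hxA]
  induction n generalizing x with
  | zero => exact absurd hx hxA
  | succ n ih =>
    apply Q.injective
    rw [apply_entryExtension_succ _ hxA, apply_entryExtension_succ _ hxA]
    by_cases hPx : P x ∈ A
    · rw [eqOn_entryExtension _ hPx, eqOn_entryExtension _ hPx]
    · exact ih hx hPx

theorem entryExtension_eq_of_le {m n : ℕ} (hmn : m ≤ n) {x : ℝ}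
    (hx : ∀ k, m ≤ k → P^[k] x ∈ A) :
    entryExtension P Q h₀ A n x = entryExtension P Q h₀ A m x := by
  induction n, hmn using Nat.le_induction with
  | base => rfl
  | succ n hmn ih => rw [entryExtension_succ_eq n (hx n hmn), ih]

namespace IsEntry

variable (hE : IsEntry P Q h₀ A c)
include hE

theorem mapsTo_interior : MapsTo P A (interior A) := by
  have hPc := hE.apply_mem_interior
  rcases hE.halfLine with rfl | rfl
  · rw [interior_Iic] at hPc ⊢
    exact fun x hx => (hE.strictMono_source.monotone hx).trans_lt hPc
  · rw [interior_Ici] at hPc ⊢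
    exact fun x hx => hPc.trans_le (hE.strictMono_source.monotone hx)

theorem mapsTo_iterate (n : ℕ) : MapsTo P^[n] A A :=
  MapsTo.iterate (fun _ hx => interior_subset (hE.mapsTo_interior hx)) n

theorem iterate_mem_of_le {m n : ℕ} (hmn : m ≤ n) {x : ℝ} (hx : P^[m] x ∈ A) :
    P^[n] x ∈ A := by
  obtain ⟨k, rfl⟩ := Nat.exists_eq_add_of_le' hmn
  rw [iterate_add_apply]
  exact hE.mapsTo_iterate k hx

theorem exists_coe_eq_entryExtension (n : ℕ) :
    ∃ e : LineDiffeo, ⇑e = entryExtension P Q h₀ A n ∧ StrictMono e := by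
  induction n with
  | zero => exact ⟨h₀, rfl, hE.strictMono_conj⟩
  | succ n ih =>
    obtain ⟨e, he, hmono⟩ := ih
    have heqOn : EqOn e h₀ A := he ▸ eqOn_entryExtension n
    have heq : e =ᶠ[𝓝 (P c)] h₀ := heqOn.eventuallyEq_of_mem
      (mem_interior_iff_mem_nhds.1 hE.apply_mem_interior)
    have hval : Q.symm (e (P c)) = h₀ c := by
      rw [heq.self_of_nhds, hE.map_apply, Q.symm_apply_apply]
    let r : LineDiffeo := (P.trans e).trans Q.symm
    have hrderiv : deriv r c = deriv h₀ c := by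
      have hchain : HasDerivAt (Q.symm ∘ e ∘ P) _ c :=
        (LineDiffeo.differentiable Q.symm (e (P c))).hasDerivAt.comp c
          ((e.differentiable (P c)).hasDerivAt.comp c (P.differentiable c).hasDerivAt)
      rw [show deriv r c = _ from hchain.deriv, heq.deriv_eq, LineDiffeo.deriv_symm, hval,
        hE.deriv_map_apply, inv_mul_cancel_left₀ (Q.deriv_ne_zero _)]
    have hrmono : StrictMono r :=
      (LineDiffeo.strictMono_symm hE.strictMono_target).comp (hmono.comp hE.strictMono_source)
    classical
    obtain ⟨e', he', hmono'⟩ := LineDiffeo.exists_coe_eq_piecewise hE.halfLine hE.strictMono_conj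
      hrmono (show h₀ c = r c from hval.symm) hrderiv.symm
    refine ⟨e', he'.trans ?_, hmono'⟩
    rw [entryExtension, ← he]
    rfl

theorem mapsTo_image : MapsTo Q (h₀ '' A) (h₀ '' A) := by
  have himage : P.trans h₀ '' A = h₀.trans Q '' A :=
    LineDiffeo.image_eq_image_of_apply_eq hE.halfLine
      (hE.strictMono_conj.comp hE.strictMono_source) (hE.strictMono_target.comp hE.strictMono_conj)
      hE.map_apply
  rintro _ ⟨x, hx, rfl⟩
  obtain ⟨x', hx', hxx'⟩ := himage.ge (mem_image_of_mem _ hx)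
  exact ⟨P x', interior_subset (hE.mapsTo_interior hx'), hxx'⟩

theorem iterate_entryExtension_mem_iff (n : ℕ) (x : ℝ) :
    Q^[n] (entryExtension P Q h₀ A n x) ∈ h₀ '' A ↔ P^[n] x ∈ A := by
  induction n generalizing x with
  | zero => exact h₀.injective.mem_set_image
  | succ n ih =>
    by_cases hxA : x ∈ A
    · rw [eqOn_entryExtension _ hxA]
      exact iff_of_true (hE.mapsTo_image.iterate _ (mem_image_of_mem h₀ hxA))
        (hE.mapsTo_iterate _ hxA)
    · rw [iterate_succ_apply, iterate_succ_apply, apply_entryExtension_succ _ hxA]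
      exact ih (P x)

theorem exists_eqOn_entryExtension :
    ∃ h : ℝ → ℝ, ∀ n, EqOn h (entryExtension P Q h₀ A n) (P^[n] ⁻¹' A) := by
  refine ⟨fun x => entryExtension P Q h₀ A (sInf {n | P^[n] x ∈ A}) x, fun n x hx => ?_⟩
  have hmem : P^[sInf {n | P^[n] x ∈ A}] x ∈ A := Nat.sInf_mem (s := {n | P^[n] x ∈ A}) ⟨n, hx⟩
  exact (entryExtension_eq_of_le (Nat.sInf_le hx) fun k hk => hE.iterate_mem_of_le hk hmem).symm

theorem preimage_iterate_succ_mem_nhds {n : ℕ} {x : ℝ} (hx : P^[n] x ∈ A) :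
    P^[n + 1] ⁻¹' A ∈ 𝓝 x := by
  refine (P.continuous.iterate (n + 1)).continuousAt.preimage_mem_nhds
    (mem_interior_iff_mem_nhds.1 ?_)
  rw [iterate_succ_apply']
  exact hE.mapsTo_interior hx

theorem image_eq_of_eqOn {h : ℝ → ℝ}
    (hh : ∀ n, EqOn h (entryExtension P Q h₀ A n) (P^[n] ⁻¹' A)) :
    h '' {x | ∃ n, P^[n] x ∈ A} = {y | ∃ n, Q^[n] y ∈ h₀ '' A} := by
  ext y
  constructor
  · rintro ⟨x, ⟨n, hn⟩, rfl⟩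
    exact ⟨n, by rwa [hh n hn, hE.iterate_entryExtension_mem_iff]⟩
  · rintro ⟨n, hn⟩
    obtain ⟨e, he, -⟩ := hE.exists_coe_eq_entryExtension n
    obtain ⟨x, rfl⟩ := e.surjective y
    rw [he, hE.iterate_entryExtension_mem_iff] at hn
    exact ⟨x, ⟨n, hn⟩, he ▸ hh n hn⟩

theorem exists_isDiffeoOn : ∃ h : ℝ → ℝ,
    IsDiffeoOn h {x | ∃ n, P^[n] x ∈ A} {y | ∃ n, Q^[n] y ∈ h₀ '' A} ∧
    StrictMonoOn h {x | ∃ n, P^[n] x ∈ A} ∧ EqOn h h₀ A ∧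
    ∀ x ∉ A, (∃ n, P^[n] x ∈ A) → h (P x) = Q (h x) := by
  obtain ⟨h, hh⟩ := hE.exists_eqOn_entryExtension
  have himage := hE.image_eq_of_eqOn hh
  choose e he hmono using hE.exists_coe_eq_entryExtension
  simp only [← he] at hh
  have hstrict : StrictMonoOn h {x | ∃ n, P^[n] x ∈ A} := by
    rintro x ⟨m, hm⟩ y ⟨n, hn⟩ hxy
    rw [hh (max m n) (hE.iterate_mem_of_le (le_max_left m n) hm),
      hh (max m n) (hE.iterate_mem_of_le (le_max_right m n) hn)]
    exact hmono _ hxy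
  refine ⟨h, ?_, hstrict, fun x hx => ?_, fun x hxA hx => ?_⟩
  · rw [← himage]
    refine isDiffeoOn_image_of_deriv_ne_zero ?_ hstrict.injOn ?_ ?_
    · exact isOpen_iff_mem_nhds.2 fun x ⟨n, hn⟩ =>
        mem_of_superset (hE.preimage_iterate_succ_mem_nhds hn) fun y hy => ⟨_, hy⟩
    · exact fun x ⟨n, hn⟩ => ((e (n + 1)).contDiff.contDiffAt.congr_of_eventuallyEq
        ((hh (n + 1)).eventuallyEq_of_mem (hE.preimage_iterate_succ_mem_nhds hn))).contDiffWithinAt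
    · rintro x ⟨n, hn⟩
      rw [((hh (n + 1)).eventuallyEq_of_mem (hE.preimage_iterate_succ_mem_nhds hn)).deriv_eq]
      exact (e (n + 1)).deriv_ne_zero x
  · rw [hh 0 hx, he]
    rfl
  · obtain ⟨n, hn⟩ := hx
    rw [hh n (show P^[n] (P x) ∈ A from hE.iterate_mem_of_le n.le_succ hn),
      hh (n + 1) (hE.iterate_mem_of_le n.le_succ hn), he, he, apply_entryExtension_succ n hxA]

end IsEntry

end

/-! ### Border maps -/

/-- The map equal to `l` on `(-∞, 0]` and to `r` on `(0, ∞)`. -/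
noncomputable def glue (l r : ℝ → ℝ) (x : ℝ) : ℝ := if x ≤ 0 then l x else r x

/-- Constants shared by a family of border maps: the slopes of the left branches lie in
`[b, B]`, the absolute slopes of the right branches in `[c, l]`, and `K` is a common Lipschitz
constant of the slopes. -/
structure BorderBounds where
  (b B c l K : ℝ)
  one_lt_b : 1 < b
  c_pos : 0 < c
  l_lt_one : l < 1

/-- A continuous map of the line made of an increasing expanding branch on the left of `0` and a
contracting branch on the right of `0`. Both branches are diffeomorphisms of the whole line, and
their fixed points may be virtual, that is, lie on the wrong side of `0`. -/
structure BorderMap (k : BorderBounds) where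
  (left right : LineDiffeo)
  left_zero : left 0 = right 0
  strictMono_left : StrictMono left
  left_bounds : HasDerivBounds left k.b k.B k.K
  right_bounds : HasDerivBounds right k.c k.l k.K
  (leftFix rightFix : ℝ)
  left_leftFix : left leftFix = leftFix
  right_rightFix : right rightFix = rightFix

namespace BorderMap

variable {k : BorderBounds} (F : BorderMap k)

/-- The border map as a function, which is also its coercion. -/
noncomputable def toFun : ℝ → ℝ := glue F.left F.right

noncomputable instance : CoeFun (BorderMap k) fun _ => ℝ → ℝ := ⟨toFun⟩

theorem apply_of_nonpos {x : ℝ} (hx : x ≤ 0) : F x = F.left x := if_pos hx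

theorem apply_of_nonneg {x : ℝ} (hx : 0 ≤ x) : F x = F.right x := by
  rcases hx.eq_or_lt with rfl | hx
  · rw [F.apply_of_nonpos le_rfl, F.left_zero]
  · exact if_neg hx.not_ge

theorem one_lt_deriv_left (x : ℝ) : 1 < deriv F.left x := by
  have := F.left_bounds.le_abs_deriv x
  rw [abs_of_pos (LineDiffeo.deriv_pos F.strictMono_left x)] at this
  exact k.one_lt_b.trans_le this

theorem abs_deriv_right_lt_one (x : ℝ) : |deriv F.right x| < 1 :=
  (F.right_bounds.abs_deriv_le x).trans_lt k.l_lt_one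

theorem strictMono_left_sub : StrictMono fun x => F.left x - x :=
  strictMono_of_deriv_pos fun x => by
    rw [deriv_fun_sub (F.left.differentiable x) differentiableAt_fun_id, deriv_id'']
    linarith [F.one_lt_deriv_left x]

theorem strictMono_sub_right : StrictMono fun x => x - F.right x :=
  strictMono_of_deriv_pos fun x => by
    rw [deriv_fun_sub differentiableAt_fun_id (F.right.differentiable x), deriv_id'']
    linarith [(abs_lt.1 (F.abs_deriv_right_lt_one x)).2]

theorem lt_left_iff {x : ℝ} : x < F.left x ↔ F.leftFix < x := by
  simpa [F.left_leftFix] using F.strictMono_left_sub.lt_iff_lt (a := F.leftFix) (b := x)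

theorem left_lt_iff {x : ℝ} : F.left x < x ↔ x < F.leftFix := by
  simpa [F.left_leftFix] using F.strictMono_left_sub.lt_iff_lt (a := x) (b := F.leftFix)

theorem lt_right_iff {x : ℝ} : x < F.right x ↔ x < F.rightFix := by
  simpa [F.right_rightFix] using F.strictMono_sub_right.lt_iff_lt (a := x) (b := F.rightFix)

theorem right_lt_iff {x : ℝ} : F.right x < x ↔ F.rightFix < x := by
  simpa [F.right_rightFix] using F.strictMono_sub_right.lt_iff_lt (a := F.rightFix) (b := x)

theorem eq_leftFix {x : ℝ} (hx : F.left x = x) : x = F.leftFix :=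
  F.strictMono_left_sub.injective (by simp [hx, F.left_leftFix])

theorem eq_rightFix {x : ℝ} (hx : F.right x = x) : x = F.rightFix :=
  F.strictMono_sub_right.injective (by simp [hx, F.right_rightFix])

theorem leftFix_neg_iff : F.leftFix < 0 ↔ 0 < F.left 0 := F.lt_left_iff.symm

theorem rightFix_pos_iff : 0 < F.rightFix ↔ 0 < F.left 0 := by
  rw [F.left_zero, F.lt_right_iff]

theorem rightFix_neg_iff : F.rightFix < 0 ↔ F.left 0 < 0 := by
  rw [F.left_zero, F.right_lt_iff]

theorem left_zero_lt_rightFix (hF : StrictMono F.right) (hν : 0 < F.left 0) :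
    F.left 0 < F.rightFix := by
  rw [F.left_zero, ← F.right_rightFix]
  exact hF (F.rightFix_pos_iff.2 hν)

theorem tendsto_iterate_left_symm (x : ℝ) :
    Tendsto (fun n => F.left.symm^[n] x) atTop (𝓝 F.leftFix) :=
  (F.left_bounds.symm k.one_lt_b.le).tendsto_iterate (inv_lt_one_of_one_lt₀ k.one_lt_b)
    (F.left.symm_apply_eq.2 F.left_leftFix.symm) x

theorem tendsto_iterate_right (x : ℝ) :
    Tendsto (fun n => F.right^[n] x) atTop (𝓝 F.rightFix) :=
  F.right_bounds.tendsto_iterate k.l_lt_one F.right_rightFix x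

end BorderMap

namespace LineDiffeo

variable {e : LineDiffeo} {a x z : ℝ}

theorem exists_le_iterate_iff (he : StrictMono e) (hz : e z = z)
    (hlim : Tendsto (fun n => e.symm^[n] a) atTop (𝓝 z)) (ha : z < a) :
    (∃ n, a ≤ e^[n] x) ↔ z < x := by
  constructor
  · rintro ⟨n, hn⟩
    rw [← (he.iterate n).lt_iff_lt, iterate_fixed hz]
    exact ha.trans_le hn
  · intro hx
    obtain ⟨n, hn⟩ := (hlim.eventually (gt_mem_nhds hx)).exists
    refine ⟨n, ?_⟩
    simpa [LeftInverse.iterate e.apply_symm_apply n a] using ((he.iterate n) hn).le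

theorem exists_iterate_le_iff (he : StrictMono e) (hz : e z = z)
    (hlim : Tendsto (fun n => e.symm^[n] a) atTop (𝓝 z)) (ha : a < z) :
    (∃ n, e^[n] x ≤ a) ↔ x < z := by
  constructor
  · rintro ⟨n, hn⟩
    rw [← (he.iterate n).lt_iff_lt, iterate_fixed hz]
    exact hn.trans_lt ha
  · intro hx
    obtain ⟨n, hn⟩ := (hlim.eventually (lt_mem_nhds hx)).exists
    refine ⟨n, ?_⟩
    simpa [LeftInverse.iterate e.apply_symm_apply n a] using ((he.iterate n) hn).le

end LineDiffeo

/-! ### Conjugacies of border maps -/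

/-- Conjugacies `hL` and `hR` between the branches of two border maps whose branches have the same
ratio of slopes at `0`. The conjugacies between the border maps are built out of `hL` and `hR`, and
the ratio of slopes is what makes them differentiable. -/
structure IsBorderConj {k : BorderBounds} (F G : BorderMap k) (hL hR : LineDiffeo) : Prop where
  left : IsBranchConj F.left G.left hL
  right : IsBranchConj F.right G.right hR
  kink : deriv F.right 0 * deriv G.left 0 = deriv G.right 0 * deriv F.left 0

namespace IsBorderConj

variable {k : BorderBounds} {F G : BorderMap k} {hL hR : LineDiffeo}
  (H : IsBorderConj F G hL hR)
include H

theorem strictMono_right (hF : StrictMono F.right) : StrictMono G.right := fun x y hxy => by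
  have := H.right.strictMono.comp (hF.comp (LineDiffeo.strictMono_symm H.right.strictMono)) hxy
  simpa [H.right.map_apply] using this

theorem strictAnti_right (hF : StrictAnti F.right) : StrictAnti G.right := fun x y hxy => by
  have := H.right.strictMono.comp_strictAnti
    (hF.comp_strictMono (LineDiffeo.strictMono_symm H.right.strictMono)) hxy
  simpa [H.right.map_apply] using this

theorem left_map_left_zero : hL (F.left 0) = G.left 0 := by rw [H.left.map_apply, H.left.map_zero]

theorem right_map_left_zero : hR (F.left 0) = G.left 0 := by
  rw [F.left_zero, G.left_zero, H.right.map_apply, H.right.map_zero]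

theorem left_zero_pos_iff : 0 < G.left 0 ↔ 0 < F.left 0 := by
  rw [← H.left_map_left_zero, ← H.left.map_zero, H.left.strictMono.lt_iff_lt, H.left.map_zero]

theorem left_zero_neg_iff : G.left 0 < 0 ↔ F.left 0 < 0 := by
  rw [← H.left_map_left_zero, ← H.left.map_zero, H.left.strictMono.lt_iff_lt, H.left.map_zero]

theorem left_map_leftFix : hL F.leftFix = G.leftFix :=
  G.eq_leftFix (by rw [← H.left.map_apply, F.left_leftFix])

theorem right_map_rightFix : hR F.rightFix = G.rightFix :=
  G.eq_rightFix (by rw [← H.right.map_apply, F.right_rightFix])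

theorem deriv_left_mul : deriv hL (F.left 0) * deriv F.right 0 = deriv G.right 0 * deriv hL 0 := by
  have hchain := H.left.deriv_map_apply 0
  rw [H.left.map_zero] at hchain
  apply mul_right_cancel₀ (F.left.deriv_ne_zero 0)
  linear_combination deriv F.right 0 * hchain + deriv hL 0 * H.kink

theorem deriv_right_mul : deriv hR (F.left 0) * deriv F.left 0 = deriv G.left 0 * deriv hR 0 := by
  have hchain := H.right.deriv_map_apply 0
  rw [H.right.map_zero, ← F.left_zero] at hchain
  apply mul_right_cancel₀ (F.right.deriv_ne_zero 0)
  linear_combination deriv F.left 0 * hchain - deriv hR 0 * H.kink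

theorem isEntry_left (hν : 0 < F.left 0) : IsEntry F.left G.left hR (Ici 0) 0 where
  strictMono_source := F.strictMono_left
  strictMono_target := G.strictMono_left
  strictMono_conj := H.right.strictMono
  halfLine := .inr rfl
  apply_mem_interior := by rwa [interior_Ici]
  map_apply := by rw [H.right_map_left_zero, H.right.map_zero]
  deriv_map_apply := by rw [H.deriv_right_mul, H.right.map_zero]

theorem isEntry_right (hF : StrictMono F.right) (hν : F.left 0 < 0) :
    IsEntry F.right G.right hL (Iic 0) 0 where
  strictMono_source := hF
  strictMono_target := H.strictMono_right hF
  strictMono_conj := H.left.strictMono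
  halfLine := .inl rfl
  apply_mem_interior := by rwa [interior_Iic, ← F.left_zero]
  map_apply := by rw [← F.left_zero, H.left_map_left_zero, H.left.map_zero, G.left_zero]
  deriv_map_apply := by rw [← F.left_zero, H.deriv_left_mul, H.left.map_zero]

theorem isEntry_right_symm (hF : StrictMono F.right) (hν : 0 < F.left 0) :
    IsEntry F.right.symm G.right.symm hL (Iic (F.left 0)) (F.left 0) := by
  have hF0 : F.right.symm (F.left 0) = 0 := F.right.symm_apply_eq.2 F.left_zero
  have hG0 : G.right.symm (G.left 0) = 0 := G.right.symm_apply_eq.2 G.left_zero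
  refine ⟨LineDiffeo.strictMono_symm hF, LineDiffeo.strictMono_symm (H.strictMono_right hF),
    H.left.strictMono, .inl rfl, by rwa [interior_Iic, hF0], ?_, ?_⟩
  · rw [hF0, H.left_map_left_zero, hG0, H.left.map_zero]
  · rw [F.right.deriv_symm, H.left_map_left_zero, G.right.deriv_symm, hF0, hG0]
    have := H.deriv_left_mul
    field_simp [F.right.deriv_ne_zero 0, G.right.deriv_ne_zero 0]
    linear_combination -this

theorem exists_conj_Ioi (hν : 0 < F.left 0) : ∃ h : ℝ → ℝ,
    IsDiffeoOn h (Ioi F.leftFix) (Ioi G.leftFix) ∧ StrictMonoOn h (Ioi F.leftFix) ∧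
    EqOn h hR (Ici 0) ∧ ∀ x ∈ Ioc F.leftFix 0, h (F.left x) = G.left (h x) := by
  have hE := H.isEntry_left hν
  obtain ⟨h, hdiff, hmono, heq, hrel⟩ := hE.exists_isDiffeoOn
  have hU : {x | ∃ n, F.left^[n] x ∈ Ici 0} = Ioi F.leftFix := ext fun x =>
    LineDiffeo.exists_le_iterate_iff F.strictMono_left F.left_leftFix
      (F.tendsto_iterate_left_symm 0) (F.leftFix_neg_iff.2 hν)
  have hV : {y | ∃ n, G.left^[n] y ∈ hR '' Ici 0} = Ioi G.leftFix := ext fun y => by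
    rw [LineDiffeo.image_Ici H.right.strictMono, H.right.map_zero]
    exact LineDiffeo.exists_le_iterate_iff G.strictMono_left G.left_leftFix
      (G.tendsto_iterate_left_symm 0) (G.leftFix_neg_iff.2 (H.left_zero_pos_iff.2 hν))
  rw [hU] at hdiff hmono
  rw [hV] at hdiff
  refine ⟨h, hdiff, hmono, heq, fun x hx => ?_⟩
  rcases hx.2.eq_or_lt with rfl | hx0
  · rw [heq hν.le, H.right_map_left_zero, heq self_mem_Ici, H.right.map_zero]
  · exact hrel x hx0.not_ge (hU.ge hx.1)

theorem exists_conj_Iio (hF : StrictMono F.right) (hν : 0 < F.left 0) : ∃ h : ℝ → ℝ,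
    IsDiffeoOn h (Iio F.rightFix) (Iio G.rightFix) ∧ StrictMonoOn h (Iio F.rightFix) ∧
    EqOn h hL (Iic (F.left 0)) ∧ ∀ x ∈ Ico 0 F.rightFix, h (F.right x) = G.right (h x) := by
  have hE := H.isEntry_right_symm hF hν
  have hG := H.strictMono_right hF
  have hνG := H.left_zero_pos_iff.2 hν
  obtain ⟨h, hdiff, hmono, heq, hrel⟩ := hE.exists_isDiffeoOn
  have hU : {x | ∃ n, F.right.symm^[n] x ∈ Iic (F.left 0)} = Iio F.rightFix := ext fun x =>
    LineDiffeo.exists_iterate_le_iff (LineDiffeo.strictMono_symm hF)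
      (F.right.symm_apply_eq.2 F.right_rightFix.symm) (F.tendsto_iterate_right _)
      (F.left_zero_lt_rightFix hF hν)
  have hV : {y | ∃ n, G.right.symm^[n] y ∈ hL '' Iic (F.left 0)} = Iio G.rightFix :=
    ext fun y => by
      rw [LineDiffeo.image_Iic H.left.strictMono, H.left_map_left_zero]
      exact LineDiffeo.exists_iterate_le_iff (LineDiffeo.strictMono_symm hG)
        (G.right.symm_apply_eq.2 G.right_rightFix.symm) (G.tendsto_iterate_right _)
        (G.left_zero_lt_rightFix hG hνG)
  rw [hU] at hdiff hmono
  rw [hV] at hdiff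
  refine ⟨h, hdiff, hmono, heq, fun x hx => ?_⟩
  rcases hx.1.eq_or_lt with rfl | hx0
  · rw [← F.left_zero, heq self_mem_Iic, H.left_map_left_zero, heq hν.le, H.left.map_zero,
      G.left_zero]
  · have hxν : F.right x ∉ Iic (F.left 0) := by
      rw [F.left_zero]
      exact (hF hx0).not_ge
    have hxfix : F.right x < F.rightFix := by
      rw [← F.right_rightFix]
      exact hF hx.2
    have := hrel (F.right x) hxν (hU.ge hxfix)
    rwa [F.right.symm_apply_apply, eq_comm, G.right.symm_apply_eq] at this

end IsBorderConj

/-- `h` extends the conjugacy `hL` of the left branches to a conjugacy of the border maps when the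
fixed points are virtual, that is, `F 0 ≤ 0`. At the bifurcation `F 0 = 0` the orbits on the right
of `0` never enter the left half-line if the right branch is increasing, and `hR` has to be used
there. -/
structure IsVirtualConj {k : BorderBounds} (F G : BorderMap k) (hL hR h : LineDiffeo) : Prop where
  strictMono : StrictMono h
  eqOn_left : EqOn h hL (Iic 0)
  map_right : ∀ x, 0 ≤ x → h (F.right x) = G.right (h x)
  eqOn_right : F.left 0 = 0 → StrictMono F.right → EqOn h hR (Ici 0)

namespace IsBorderConj

variable {k : BorderBounds} {F G : BorderMap k} {hL hR h : LineDiffeo}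
  (H : IsBorderConj F G hL hR)
include H

theorem virtual_map_apply (hh : IsVirtualConj F G hL hR h) (hν : F.left 0 ≤ 0) (x : ℝ) :
    h (F x) = G (h x) := by
  have hh0 : h 0 = 0 := by rw [hh.eqOn_left self_mem_Iic, H.left.map_zero]
  rcases le_total x 0 with hx | hx
  · have hFx : F.left x ∈ Iic 0 := (F.strictMono_left.monotone hx).trans hν
    rw [F.apply_of_nonpos hx, hh.eqOn_left hFx, H.left.map_apply, ← hh.eqOn_left hx,
      G.apply_of_nonpos (hh0 ▸ hh.strictMono.monotone hx)]
  · rw [F.apply_of_nonneg hx, hh.map_right x hx,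
      G.apply_of_nonneg (hh0 ▸ hh.strictMono.monotone hx)]

theorem exists_isVirtualConj_of_neg (hF : StrictMono F.right) (hν : F.left 0 < 0) :
    ∃ h, IsVirtualConj F G hL hR h := by
  have hE := H.isEntry_right hF hν
  obtain ⟨h, hdiff, hmono, heq, hrel⟩ := hE.exists_isDiffeoOn
  have hFfix : F.rightFix < 0 := F.rightFix_neg_iff.2 hν
  have hGfix : G.rightFix < 0 := G.rightFix_neg_iff.2 (H.left_zero_neg_iff.2 hν)
  have hU : {x | ∃ n, F.right^[n] x ∈ Iic 0} = univ := eq_univ_of_forall fun x =>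
    ((F.tendsto_iterate_right x).eventually (Iic_mem_nhds hFfix)).exists
  have hV : {y | ∃ n, G.right^[n] y ∈ hL '' Iic 0} = univ := eq_univ_of_forall fun y => by
    rw [LineDiffeo.image_Iic H.left.strictMono, H.left.map_zero]
    exact ((G.tendsto_iterate_right y).eventually (Iic_mem_nhds hGfix)).exists
  rw [hU, hV] at hdiff
  obtain ⟨e, rfl⟩ := LineDiffeo.exists_coe_eq_of_isDiffeoOn_univ hdiff
  refine ⟨e, strictMonoOn_univ.1 (hU ▸ hmono), heq, fun x hx => ?_, fun h0 => absurd h0 hν.ne⟩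
  rcases hx.eq_or_lt with rfl | hx
  · rw [← F.left_zero, heq hν.le, H.left_map_left_zero, heq self_mem_Iic, H.left.map_zero,
      G.left_zero]
  · exact hrel x hx.not_ge (hU.ge trivial)

theorem exists_isVirtualConj_of_eq_zero (hF : StrictMono F.right) (hν : F.left 0 = 0) :
    ∃ h, IsVirtualConj F G hL hR h := by
  have hderiv : deriv hL 0 = deriv hR 0 := by
    rw [H.left.deriv_zero hν, H.right.deriv_zero (F.left_zero ▸ hν)]
  have h0 : hL 0 = hR 0 := by rw [H.left.map_zero, H.right.map_zero]
  obtain ⟨e, he, hmono⟩ := LineDiffeo.exists_coe_eq_piecewise (.inl rfl) H.left.strictMono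
    H.right.strictMono h0 hderiv
  have heqL : EqOn e hL (Iic 0) := he ▸ piecewise_eqOn _ _ _
  have heqR : EqOn e hR (Ici 0) := fun x hx => by
    rcases (mem_Ici.1 hx).eq_or_lt with rfl | hx
    · rw [heqL self_mem_Iic, h0]
    · simp [he, hx]
  refine ⟨e, hmono, heqL, fun x hx => ?_, fun _ _ => heqR⟩
  have hFx : 0 ≤ F.right x := by
    rw [← hν, F.left_zero]
    exact hF.monotone hx
  rw [heqR hFx, H.right.map_apply, heqR hx]

theorem exists_isVirtualConj_of_strictAnti (hF : StrictAnti F.right) (hν : F.left 0 ≤ 0) :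
    ∃ h, IsVirtualConj F G hL hR h := by
  let r : LineDiffeo := (F.right.trans hL).trans G.right.symm
  have hGr : ∀ x, G.right (r x) = hL (F.right x) := fun x => G.right.apply_symm_apply _
  have hrmono : StrictMono r := fun x y hxy => by
    rw [← (H.strictAnti_right hF).lt_iff_gt, hGr, hGr]
    exact H.left.strictMono (hF hxy)
  have hr0 : r 0 = 0 := G.right.injective (by
    rw [hGr, ← F.left_zero, H.left_map_left_zero, G.left_zero])
  have hr0' : hL 0 = r 0 := by rw [hr0, H.left.map_zero]
  have hderiv : deriv hL 0 = deriv r 0 := by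
    have hchain : deriv G.right (r 0) * deriv r 0 = deriv hL (F.right 0) * deriv F.right 0 := by
      rw [← deriv_comp 0 (G.right.differentiable _) (r.differentiable 0),
        ← deriv_comp 0 (hL.differentiable _) (F.right.differentiable 0)]
      exact congrArg (fun f => deriv f 0) (funext hGr)
    rw [hr0, ← F.left_zero, H.deriv_left_mul] at hchain
    exact (mul_left_cancel₀ (G.right.deriv_ne_zero 0) hchain).symm
  obtain ⟨e, he, hmono⟩ := LineDiffeo.exists_coe_eq_piecewise (.inl rfl) H.left.strictMono
    hrmono hr0' hderiv
  have heqL : EqOn e hL (Iic 0) := he ▸ piecewise_eqOn _ _ _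
  refine ⟨e, hmono, heqL, fun x hx => ?_, fun _ h => ?_⟩
  · have hFx : F.right x ≤ 0 := (hF.antitone hx).trans (F.left_zero ▸ hν)
    rw [heqL hFx, ← hGr]
    rcases hx.eq_or_lt with rfl | hx
    · rw [heqL self_mem_Iic, hr0']
    · simp [he, hx]
  · exact absurd (hF zero_lt_one) (h zero_lt_one).not_gt

theorem exists_isVirtualConj (hF : StrictMono F.right ∨ StrictAnti F.right) (hν : F.left 0 ≤ 0) :
    ∃ h, IsVirtualConj F G hL hR h := by
  rcases hF with hF | hF
  · rcases hν.eq_or_lt with hν | hν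
    exacts [H.exists_isVirtualConj_of_eq_zero hF hν, H.exists_isVirtualConj_of_neg hF hν]
  · exact H.exists_isVirtualConj_of_strictAnti hF hν

end IsBorderConj

theorem image_inter_Iio_of_strictMonoOn {h : ℝ → ℝ} {U : Set ℝ} {c : ℝ} (hh : StrictMonoOn h U)
    (hc : c ∈ U) : h '' (U ∩ Iio c) = h '' U ∩ Iio (h c) := by
  rw [← image_inter_preimage]
  exact congrArg _ (ext fun x => and_congr_right fun hx => (hh.lt_iff_lt hx hc).symm)

theorem image_inter_Ioi_of_strictMonoOn {h : ℝ → ℝ} {U : Set ℝ} {c : ℝ} (hh : StrictMonoOn h U)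
    (hc : c ∈ U) : h '' (U ∩ Ioi c) = h '' U ∩ Ioi (h c) := by
  rw [← image_inter_preimage]
  exact congrArg _ (ext fun x => and_congr_right fun hx => (hh.lt_iff_lt hc hx).symm)

namespace IsBorderConj

variable {k : BorderBounds} {F G : BorderMap k} {hL hR h : LineDiffeo} {p : ℝ}
  (H : IsBorderConj F G hL hR)
include H

theorem diffConjOn_of_isVirtualConj (hh : IsVirtualConj F G hL hR h) (hν : F.left 0 ≤ 0)
    (hp : 0 < p) : DiffConjOn F G (Ioo (-p) p) (Ioo (hL (-p)) (h p)) := by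
  refine ⟨h, ?_, fun x _ _ => H.virtual_map_apply hh hν x⟩
  rw [← hh.eqOn_left (neg_nonpos.2 hp.le), ← LineDiffeo.image_Ioo hh.strictMono]
  exact h.isDiffeoOn _

theorem diffConjOn_Ioo_neg : DiffConjOn F G (Ioo (-p) 0) (Ioo (hL (-p)) 0) := by
  refine ⟨hL, ?_, fun x hx _ => ?_⟩
  · rw [← H.left.map_zero, ← LineDiffeo.image_Ioo H.left.strictMono, H.left.map_zero]
    exact hL.isDiffeoOn _
  · rw [F.apply_of_nonpos hx.2.le, H.left.map_apply, G.apply_of_nonpos]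
    exact H.left.map_zero ▸ H.left.strictMono.monotone hx.2.le

theorem diffConjOn_Ioo_leftFix (hF : StrictMono F.right) (hν : 0 < F.left 0) (hp : 0 < p) :
    DiffConjOn F G (Ioo F.leftFix p) (Ioo G.leftFix (hR p)) := by
  obtain ⟨h, hdiff, hmono, heq, hrel⟩ := H.exists_conj_Ioi hν
  have hfix : F.leftFix < 0 := F.leftFix_neg_iff.2 hν
  have hh0 : h 0 = 0 := (heq self_mem_Ici).trans H.right.map_zero
  refine ⟨h, ?_, fun x hx _ => ?_⟩
  · rw [← heq hp.le, ← Ioi_inter_Iio, ← Ioi_inter_Iio, ← hdiff.1.image_eq,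
      ← image_inter_Iio_of_strictMonoOn hmono (hfix.trans hp)]
    exact hdiff.mono inter_subset_left
  rcases le_total x 0 with hx0 | hx0
  · rw [F.apply_of_nonpos hx0, hrel x ⟨hx.1, hx0⟩, G.apply_of_nonpos]
    exact hh0 ▸ hmono.monotoneOn hx.1 hfix hx0
  · have hFx : 0 ≤ F.right x := hν.le.trans (F.left_zero ▸ hF.monotone hx0)
    rw [F.apply_of_nonneg hx0, heq hFx, H.right.map_apply, heq hx0, G.apply_of_nonneg]
    exact H.right.map_zero ▸ H.right.strictMono.monotone hx0

theorem diffConjOn_Ioo_rightFix (hF : StrictMono F.right) (hν : 0 < F.left 0) (hp : 0 < p) :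
    DiffConjOn F G (Ioo (-p) F.rightFix) (Ioo (hL (-p)) G.rightFix) := by
  obtain ⟨h, hdiff, hmono, heq, hrel⟩ := H.exists_conj_Iio hF hν
  have hfix : 0 < F.rightFix := F.rightFix_pos_iff.2 hν
  have hh0 : h 0 = 0 := (heq hν.le).trans H.left.map_zero
  have hpν : -p ≤ F.left 0 := (neg_nonpos.2 hp.le).trans hν.le
  refine ⟨h, ?_, fun x hx _ => ?_⟩
  · rw [← heq hpν, ← Ioi_inter_Iio, ← Ioi_inter_Iio, inter_comm, inter_comm (Ioi _),
      ← hdiff.1.image_eq, ← image_inter_Ioi_of_strictMonoOn hmono ((neg_neg_of_pos hp).trans hfix)]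
    exact hdiff.mono inter_subset_left
  rcases le_total x 0 with hx0 | hx0
  · have hFx : F.left x ∈ Iic (F.left 0) := F.strictMono_left.monotone hx0
    rw [F.apply_of_nonpos hx0, heq hFx, H.left.map_apply, heq (hx0.trans hν.le),
      G.apply_of_nonpos]
    exact H.left.map_zero ▸ H.left.strictMono.monotone hx0
  · rw [F.apply_of_nonneg hx0, hrel x ⟨hx0, hx.2⟩, G.apply_of_nonneg]
    exact hh0 ▸ hmono.monotoneOn hfix hx.2 hx0

end IsBorderConj

namespace BorderMap

variable {k : BorderBounds} (F : BorderMap k)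

theorem right_symm_zero_pos (hF : StrictAnti F.right) (hν : 0 < F.left 0) :
    0 < F.right.symm 0 := by
  rw [← hF.lt_iff_gt, F.right.apply_symm_apply, ← F.left_zero]
  exact hν

theorem left_zero_lt_right_symm_zero (hF : StrictAnti F.right) (hν : 0 < F.left 0) :
    F.left 0 < F.right.symm 0 := by
  rw [← hF.lt_iff_gt, F.right.apply_symm_apply]
  have hcontr : |F.right (F.left 0) - F.left 0| < F.left 0 := by
    have := F.right_bounds.abs_sub_le (F.left 0) 0
    rw [← F.left_zero, sub_zero, abs_of_pos hν] at this
    exact this.trans_lt (mul_lt_of_lt_one_left hν k.l_lt_one)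
  linarith [(abs_lt.1 hcontr).1]

theorem Ioo_union_Ioo_right_symm (hF : StrictAnti F.right) (hν : 0 < F.left 0) :
    Ioo F.leftFix (F.right.symm 0) ∪ Ioo 0 (F.right.symm F.leftFix) =
      Ioo F.leftFix (F.right.symm F.leftFix) := by
  have hfix : F.leftFix < 0 := F.leftFix_neg_iff.2 hν
  have hpos : 0 < F.right.symm 0 := F.right_symm_zero_pos hF hν
  have hlt : F.right.symm 0 < F.right.symm F.leftFix := LineDiffeo.strictAnti_symm hF hfix
  rw [Ioo_union_Ioo' hpos (hfix.trans (hpos.trans hlt)), min_eq_left hfix.le, max_eq_right hlt.le]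

end BorderMap

namespace IsBorderConj

variable {k : BorderBounds} {F G : BorderMap k} {hL hR : LineDiffeo} {h : ℝ → ℝ}
  (H : IsBorderConj F G hL hR)
include H

theorem eqOn_symm_comp (heq : EqOn h hR (Ici 0)) :
    EqOn h (G.right.symm ∘ h ∘ F.right) (Ici 0 ∩ F.right ⁻¹' Ici 0) := fun x hx => by
  rw [comp_apply, comp_apply, heq hx.2, H.right.map_apply, G.right.symm_apply_apply, heq hx.1]

theorem image_symm_comp (hF : StrictAnti F.right) (hν : 0 < F.left 0)
    (hdiff : IsDiffeoOn h (Ioi F.leftFix) (Ioi G.leftFix)) (hmono : StrictMonoOn h (Ioi F.leftFix))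
    (heq : EqOn h hR (Ici 0)) :
    (G.right.symm ∘ h ∘ F.right) '' Ioo 0 (F.right.symm F.leftFix) =
      Ioo 0 (G.right.symm G.leftFix) := by
  have hνmem : F.left 0 ∈ Ioi F.leftFix := (F.leftFix_neg_iff.2 hν).trans hν
  rw [image_comp, image_comp, LineDiffeo.image_Ioo_of_strictAnti hF, F.right.apply_symm_apply,
    ← F.left_zero, ← Ioi_inter_Iio, image_inter_Iio_of_strictMonoOn hmono hνmem, hdiff.1.image_eq,
    Ioi_inter_Iio, heq hν.le, H.right_map_left_zero,
    LineDiffeo.image_Ioo_of_strictAnti (LineDiffeo.strictAnti_symm (H.strictAnti_right hF)),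
    G.left_zero, G.right.symm_apply_apply]

theorem deriv_symm_comp_pos (hF : StrictAnti F.right)
    (hdiff : IsDiffeoOn h (Ioi F.leftFix) (Ioi G.leftFix)) (hmono : StrictMonoOn h (Ioi F.leftFix))
    {x : ℝ} (hx : F.leftFix < F.right x) : 0 < deriv (G.right.symm ∘ h ∘ F.right) x := by
  have hG : StrictAnti G.right.symm := LineDiffeo.strictAnti_symm (H.strictAnti_right hF)
  have hdh : 0 < deriv h (F.right x) := hdiff.deriv_pos isOpen_Ioi isOpen_Ioi hmono.monotoneOn hx
  have hchain : HasDerivAt (G.right.symm ∘ h ∘ F.right) _ x :=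
    (LineDiffeo.differentiable G.right.symm (h (F.right x))).hasDerivAt.comp x
      ((differentiableAt_of_deriv_ne_zero hdh.ne').hasDerivAt.comp x
        (F.right.differentiable x).hasDerivAt)
  rw [hchain.deriv]
  exact mul_pos_of_neg_of_neg (LineDiffeo.deriv_neg hG _)
    (mul_neg_of_pos_of_neg hdh (LineDiffeo.deriv_neg hF x))

/-- The conjugacy `h` on `(leftFix, ∞)` has to be replaced at the points which the right branch
maps to the left of `0`; it agrees with its replacement wherever the right branch is positive. -/
theorem exists_isDiffeoOn_Ioo (hF : StrictAnti F.right) (hν : 0 < F.left 0)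
    (hdiff : IsDiffeoOn h (Ioi F.leftFix) (Ioi G.leftFix)) (hmono : StrictMonoOn h (Ioi F.leftFix))
    (heq : EqOn h hR (Ici 0)) :
    ∃ e : ℝ → ℝ, EqOn e h (Ioo F.leftFix (F.right.symm 0)) ∧
      EqOn e (G.right.symm ∘ h ∘ F.right) (Ioo 0 (F.right.symm F.leftFix)) ∧
      StrictMonoOn e (Ioo F.leftFix (F.right.symm F.leftFix)) ∧
      IsDiffeoOn e (Ioo F.leftFix (F.right.symm F.leftFix))
        (Ioo G.leftFix (G.right.symm G.leftFix)) := by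
  have hG := H.strictAnti_right hF
  have hpos : 0 < F.right.symm 0 := F.right_symm_zero_pos hF hν
  have hmap : MapsTo F.right (Ioo 0 (F.right.symm F.leftFix)) (Ioi F.leftFix) := fun x hx => by
    simpa using hF hx.2
  have heqOn : EqOn h (G.right.symm ∘ h ∘ F.right)
      (Ioo F.leftFix (F.right.symm 0) ∩ Ioo 0 (F.right.symm F.leftFix)) :=
    fun x hx => H.eqOn_symm_comp heq ⟨hx.2.1.le, by simpa using hF.antitone hx.1.2.le⟩
  have himage : h '' Ioo F.leftFix (F.right.symm 0) = Ioo G.leftFix (G.right.symm 0) := by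
    have hmap0 : G.right.symm 0 = hR (F.right.symm 0) := G.right.symm_apply_eq.2 (by
      rw [← H.right.map_apply, F.right.apply_symm_apply, H.right.map_zero])
    rw [← Ioi_inter_Iio, image_inter_Iio_of_strictMonoOn hmono
      ((F.leftFix_neg_iff.2 hν).trans hpos), hdiff.1.image_eq, Ioi_inter_Iio, heq hpos.le, hmap0]
  have hconv : (Ioo F.leftFix (F.right.symm 0) ∪ Ioo 0 (F.right.symm F.leftFix)).OrdConnected := by
    rw [F.Ioo_union_Ioo_right_symm hF hν]
    exact ordConnected_Ioo
  obtain ⟨e, heh, her, hemono, hediff⟩ := exists_isDiffeoOn_union isOpen_Ioo isOpen_Ioo hconv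
    (hdiff.2.1.mono Ioo_subset_Ioi_self)
    (fun x hx => hdiff.deriv_pos isOpen_Ioi isOpen_Ioi hmono.monotoneOn hx.1)
    (G.right.symm.contDiff.comp_contDiffOn (hdiff.2.1.comp F.right.contDiff.contDiffOn hmap))
    (fun x hx => H.deriv_symm_comp_pos hF hdiff hmono (hmap hx)) heqOn
  rw [himage, H.image_symm_comp hF hν hdiff hmono heq,
    G.Ioo_union_Ioo_right_symm hG (H.left_zero_pos_iff.2 hν),
    F.Ioo_union_Ioo_right_symm hF hν] at hediff
  exact ⟨e, heh, her, F.Ioo_union_Ioo_right_symm hF hν ▸ hemono, hediff⟩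

theorem diffConjOn_of_strictAnti (hF : StrictAnti F.right) (hν : 0 < F.left 0) :
    DiffConjOn F G (Ioo F.leftFix (F.right.symm F.leftFix))
      (Ioo G.leftFix (G.right.symm G.leftFix)) := by
  obtain ⟨h, hdiff, hmono, heq, hrel⟩ := H.exists_conj_Ioi hν
  obtain ⟨e, heh, her, hemono, hediff⟩ := H.exists_isDiffeoOn_Ioo hF hν hdiff hmono heq
  have hfix : F.leftFix < 0 := F.leftFix_neg_iff.2 hν
  have hpos : 0 < F.right.symm 0 := F.right_symm_zero_pos hF hν
  have hwpos : 0 < F.right.symm F.leftFix :=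
    hpos.trans (LineDiffeo.strictAnti_symm hF hfix)
  have he0 : e 0 = 0 := by rw [heh ⟨hfix, hpos⟩, heq self_mem_Ici, H.right.map_zero]
  have hνlt := F.left_zero_lt_right_symm_zero hF hν
  refine ⟨e, hediff, fun x hx hFx => ?_⟩
  rcases le_or_gt x 0 with hx0 | hx0
  · rw [F.apply_of_nonpos hx0] at hFx ⊢
    have hlt : F.left x < F.right.symm 0 := (F.strictMono_left.monotone hx0).trans_lt hνlt
    rw [heh ⟨hFx.1, hlt⟩, hrel x ⟨hx.1, hx0⟩, ← heh ⟨hx.1, hx0.trans_lt hpos⟩, G.apply_of_nonpos]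
    exact he0 ▸ hemono.monotoneOn hx ⟨hfix, hwpos⟩ hx0
  · rw [F.apply_of_nonneg hx0.le] at hFx ⊢
    have hlt : F.right x < F.right.symm 0 := (F.left_zero ▸ hF hx0 :).trans hνlt
    rw [heh ⟨hFx.1, hlt⟩, G.apply_of_nonneg (he0 ▸ (hemono ⟨hfix, hwpos⟩ hx hx0).le),
      her ⟨hx0, hx.2⟩, comp_apply, comp_apply, G.right.apply_symm_apply]

end IsBorderConj

/-! ### Basins -/

theorem iterate_eq_of_eqOn {α : Type*} {f g : α → α} {A : Set α} {x : α} (hfg : EqOn f g A)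
    (hg : MapsTo g A A) (hx : x ∈ A) (n : ℕ) : f^[n] x = g^[n] x := by
  induction n with
  | zero => rfl
  | succ n ih => rw [iterate_succ_apply', iterate_succ_apply', ih, hfg (hg.iterate n hx)]

theorem tendsto_iterate_of_eqOn {f P Q : ℝ → ℝ} {A : Set ℝ} {x z : ℝ} (hP : EqOn f P Aᶜ)
    (hQ : EqOn f Q A) (hA : MapsTo Q A A) (hx : ∃ n, P^[n] x ∈ A)
    (hlim : ∀ y, Tendsto (fun n => Q^[n] y) atTop (𝓝 z)) :
    Tendsto (fun n => f^[n] x) atTop (𝓝 z) := by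
  by_cases hxA : x ∈ A
  · exact (hlim x).congr fun n => (iterate_eq_of_eqOn hQ hA hxA n).symm
  obtain ⟨n, hn⟩ := hx
  induction n generalizing x with
  | zero => exact absurd hn hxA
  | succ n ih =>
    rw [← tendsto_add_atTop_iff_nat 1]
    simp only [iterate_succ_apply, hP hxA]
    by_cases hPx : P x ∈ A
    · exact (hlim _).congr fun n => (iterate_eq_of_eqOn hQ hA hPx n).symm
    · exact ih hPx hn

theorem basinAttr_eq_inter {f : ℝ → ℝ} {N S : Set ℝ} {z : ℝ} (hN : MapsTo f (N ∩ S) (N ∩ S))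
    (hS : IsOpen S) (hSc : MapsTo f Sᶜ Sᶜ) (hz : z ∈ S)
    (hlim : ∀ x ∈ S, Tendsto (fun n => f^[n] x) atTop (𝓝 z)) : basinAttr f N z = N ∩ S := by
  ext x
  constructor
  · rintro ⟨hxN, -, hx⟩
    obtain ⟨n, hn⟩ := (hx.eventually (hS.mem_nhds hz)).exists
    exact ⟨hxN, by_contra fun hxS => hSc.iterate n hxS hn⟩
  · exact fun hx => ⟨hx.1, fun n => (hN.iterate n hx).1, hlim x hx.2⟩

theorem basinRep_eq_basinAttr_symm (e : ℝ ≃ ℝ) (N : Set ℝ) (z : ℝ) :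
    basinRep e N z = basinAttr e.symm N z := by
  ext x
  constructor
  · rintro ⟨hxN, u, rfl, huN, hu, hlim⟩
    have hiter : ∀ n, e.symm^[n] (u 0) = u n := fun n => by
      induction n with
      | zero => rfl
      | succ n ih => rw [iterate_succ_apply', ih, ← hu, e.symm_apply_apply]
    exact ⟨hxN, fun n => hiter n ▸ huN n, hlim.congr fun n => (hiter n).symm⟩
  · rintro ⟨hxN, horbit, hlim⟩
    refine ⟨hxN, fun n => e.symm^[n] x, rfl, horbit, fun n => ?_, hlim⟩
    change e (e.symm^[n + 1] x) = e.symm^[n] x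
    rw [iterate_succ_apply', e.apply_symm_apply]

namespace BorderMap

variable {k : BorderBounds} (F : BorderMap k) {a p : ℝ}

theorem strictMono (hF : StrictMono F.right) : StrictMono F := by
  have hleft : StrictMonoOn F (Iic 0) := (F.strictMono_left.strictMonoOn _).congr
    fun x hx => (F.apply_of_nonpos hx).symm
  have hright : StrictMonoOn F (Ici 0) := (hF.strictMonoOn _).congr
    fun x hx => (F.apply_of_nonneg hx).symm
  exact hleft.Iic_union_Ici hright

theorem exists_orderIso (hF : StrictMono F.right) :
    ∃ e : ℝ ≃o ℝ, ⇑e = F ∧ EqOn e.symm F.left.symm (Iic (F.left 0)) ∧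
      EqOn e.symm F.right.symm (Ici (F.left 0)) := by
  have hleft : EqOn (F ∘ F.left.symm) id (Iic (F.left 0)) := fun y hy => by
    rw [comp_apply, F.apply_of_nonpos, F.left.apply_symm_apply, id]
    rwa [← F.strictMono_left.le_iff_le, F.left.apply_symm_apply]
  have hright : EqOn (F ∘ F.right.symm) id (Ici (F.left 0)) := fun y hy => by
    rw [comp_apply, F.apply_of_nonneg, F.right.apply_symm_apply, id]
    rwa [← hF.le_iff_le, F.right.apply_symm_apply, ← F.left_zero]
  have hsurj : Surjective F := fun y => by
    rcases le_total y (F.left 0) with hy | hy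
    exacts [⟨_, hleft hy⟩, ⟨_, hright hy⟩]
  refine ⟨(F.strictMono hF).orderIsoOfSurjective F hsurj, rfl, fun y hy => ?_, fun y hy => ?_⟩
  · exact (OrderIso.symm_apply_eq _).2 (hleft hy).symm
  · exact (OrderIso.symm_apply_eq _).2 (hright hy).symm

theorem apply_leftFix (hν : 0 < F.left 0) : F F.leftFix = F.leftFix := by
  rw [F.apply_of_nonpos (F.leftFix_neg_iff.2 hν).le, F.left_leftFix]

theorem apply_rightFix (hν : 0 < F.left 0) : F F.rightFix = F.rightFix := by
  rw [F.apply_of_nonneg (F.rightFix_pos_iff.2 hν).le, F.right_rightFix]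

theorem basinAttr_eq (hF : StrictMono F.right) (hν : 0 < F.left 0) (ha : a < F.leftFix)
    (hp : F.rightFix < p) : basinAttr F (Ioo a p) F.rightFix = Ioo F.leftFix p := by
  have hfixL : F.leftFix < 0 := F.leftFix_neg_iff.2 hν
  have hfixR : 0 < F.rightFix := F.rightFix_pos_iff.2 hν
  have hmono := F.strictMono hF
  have hfix := F.apply_leftFix hν
  have hFp : F p < p := by
    rw [F.apply_of_nonneg (hfixR.trans hp).le]
    exact F.right_lt_iff.2 hp
  have hinter : Ioo a p ∩ Ioi F.leftFix = Ioo F.leftFix p := by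
    rw [inter_comm, Ioi_inter_Ioo, max_eq_left ha.le]
  rw [← hinter]
  refine basinAttr_eq_inter ?_ isOpen_Ioi ?_ (hfixL.trans hfixR) fun x hx => ?_
  · rw [hinter]
    exact fun x hx => ⟨hfix ▸ hmono hx.1, (hmono hx.2).trans hFp⟩
  · rw [compl_Ioi]
    exact fun x hx => hfix ▸ hmono.monotone hx
  · refine tendsto_iterate_of_eqOn (A := Ici 0) ?_ (fun y hy => F.apply_of_nonneg hy) ?_
      ((LineDiffeo.exists_le_iterate_iff F.strictMono_left F.left_leftFix
        (F.tendsto_iterate_left_symm 0) hfixL).2 hx) F.tendsto_iterate_right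
    · exact fun y hy => F.apply_of_nonpos (notMem_Ici.1 hy).le
    · exact fun y hy => hν.le.trans (F.left_zero ▸ hF.monotone hy)

theorem basinRep_eq (hF : StrictMono F.right) (hν : 0 < F.left 0) (ha : a < F.leftFix)
    (hp : F.rightFix < p) : basinRep F (Ioo a p) F.leftFix = Ioo a F.rightFix := by
  have hfixL : F.leftFix < 0 := F.leftFix_neg_iff.2 hν
  have hfixR : 0 < F.rightFix := F.rightFix_pos_iff.2 hν
  obtain ⟨e, he, heL, heR⟩ := F.exists_orderIso hF
  have hfix : e.symm F.rightFix = F.rightFix :=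
    e.symm_apply_eq.2 (by rw [he, F.apply_rightFix hν])
  have haa : a < e.symm a := by
    rw [e.lt_symm_apply, he, F.apply_of_nonpos (ha.trans hfixL).le]
    exact F.left_lt_iff.2 ha
  have hinter : Ioo a p ∩ Iio F.rightFix = Ioo a F.rightFix := by
    rw [Ioo_inter_Iio, min_eq_right hp.le]
  rw [← hinter, ← he, show basinRep e _ _ = _ from basinRep_eq_basinAttr_symm e.toEquiv _ _]
  refine basinAttr_eq_inter ?_ isOpen_Iio ?_ (hfixL.trans hfixR) fun x hx => ?_
  · rw [hinter]
    exact fun x hx => ⟨haa.trans (e.symm.strictMono hx.1), hfix ▸ e.symm.strictMono hx.2⟩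
  · rw [compl_Iio]
    exact fun x hx => hfix ▸ e.symm.monotone hx
  · refine tendsto_iterate_of_eqOn (A := Iic (F.left 0)) ?_ heL ?_
      ((LineDiffeo.exists_iterate_le_iff (LineDiffeo.strictMono_symm hF)
        (F.right.symm_apply_eq.2 F.right_rightFix.symm) (F.tendsto_iterate_right _)
        (F.left_zero_lt_rightFix hF hν)).2 hx) F.tendsto_iterate_left_symm
    · exact fun y hy => heR (notMem_Iic.1 hy).le
    · exact fun y hy => (F.strictMono_left.le_iff_le.1 <| by
        rwa [F.left.apply_symm_apply]).trans hν.le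

end BorderMap

/-! ### Size of the conjugate neighbourhood -/

theorem IsNearId.abs_sub_le {ε P x : ℝ} {h h' : ℝ → ℝ} (hh : IsNearId ε P h)
    (hh' : IsNearId ε P h') (hx : |x| ≤ P) : |h x - h' x| ≤ 2 * ε * |x| := by
  linarith [_root_.abs_sub_le (h x) x (h' x), hh x hx, hh' x hx, abs_sub_comm x (h' x)]

namespace IsBorderConj

variable {k : BorderBounds} {F G : BorderMap k} {hL hR h : LineDiffeo} {s ε P p x : ℝ}

section NormalForm

variable (haff : ∀ y, G.right y = G.left 0 + s * y)
include haff

theorem slope_mem_Icc_of_strictMono (hG : StrictMono G.right) : s ∈ Icc k.c k.l := by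
  have hderiv : deriv G.right 0 = s := by simp [show ⇑G.right = _ from funext haff]
  have hs := LineDiffeo.deriv_pos hG 0
  rw [← hderiv, ← abs_of_pos hs]
  exact ⟨G.right_bounds.le_abs_deriv 0, G.right_bounds.abs_deriv_le 0⟩

theorem c_le_abs_slope : k.c ≤ |s| := by
  simpa [show ⇑G.right = _ from funext haff] using G.right_bounds.le_abs_deriv 0

end NormalForm

variable (H : IsBorderConj F G hL hR) (hh : IsVirtualConj F G hL hR h)
  (haff : ∀ y, G.right y = G.left 0 + s * y) (nL : IsNearId ε P hL) (nR : IsNearId ε P hR)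
include H hh haff nL nR

theorem mul_abs_sub_le_of_strictAnti (hF : StrictAnti F.right) (hν : F.left 0 ≤ 0)
    (hx : 0 ≤ x) (hFx : |F.right x| ≤ P) :
    k.c * |h x - hR x| ≤ 2 * ε * |F.right x| := by
  have hFx0 : F.right x ≤ 0 := (hF.antitone hx).trans (F.left_zero ▸ hν)
  calc k.c * |h x - hR x| ≤ |s| * |h x - hR x| :=
        mul_le_mul_of_nonneg_right (c_le_abs_slope haff) (abs_nonneg _)
    _ = |h (F.right x) - hR (F.right x)| := by
      rw [← abs_mul, hh.map_right x hx, H.right.map_apply, haff, haff]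
      ring_nf
    _ = |hL (F.right x) - hR (F.right x)| := by rw [hh.eqOn_left hFx0]
    _ ≤ 2 * ε * |F.right x| := nL.abs_sub_le nR hFx

variable (h0 : F.left 0 = G.left 0) (hε : 0 ≤ ε)
include h0 hε

theorem mul_abs_sub_le_of_nonpos (hF : StrictMono F.right) (hν : F.left 0 < 0)
    (hνP : |F.left 0| ≤ P) (hx : x ∈ Icc (F.left 0) 0) :
    k.c * |h x - hR x| ≤ 2 * ε * (hR x - G.rightFix) := by
  obtain ⟨hcs, -⟩ := slope_mem_Icc_of_strictMono haff (H.strictMono_right hF)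
  have hfix : G.left 0 + s * G.rightFix = G.rightFix := by rw [← haff, G.right_rightFix]
  have hneg : G.rightFix < 0 := G.rightFix_neg_iff.2 (H.left_zero_neg_iff.2 hν)
  have hxν : |x| ≤ |F.left 0| := by
    rw [abs_of_nonpos hx.2, abs_of_neg hν]
    linarith [hx.1]
  have hclose : |h x - hR x| ≤ 2 * ε * -G.rightFix := calc
    |h x - hR x| = |hL x - hR x| := by rw [hh.eqOn_left hx.2]
    _ ≤ 2 * ε * |x| := nL.abs_sub_le nR (hxν.trans hνP)
    _ ≤ 2 * ε * -G.rightFix := by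
      refine mul_le_mul_of_nonneg_left (hxν.trans ?_) (by linarith)
      rw [abs_of_neg hν, h0]
      nlinarith [k.c_pos]
  have hfar : k.c * -G.rightFix ≤ hR x - G.rightFix := calc
    k.c * -G.rightFix ≤ s * -G.rightFix := mul_le_mul_of_nonneg_right hcs (by linarith)
    _ = hR (F.left 0) - G.rightFix := by rw [H.right_map_left_zero]; linarith
    _ ≤ hR x - G.rightFix := sub_le_sub_right (H.right.strictMono.monotone hx.1) _
  calc k.c * |h x - hR x| ≤ k.c * (2 * ε * -G.rightFix) :=
        mul_le_mul_of_nonneg_left hclose k.c_pos.le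
    _ = 2 * ε * (k.c * -G.rightFix) := by ring
    _ ≤ 2 * ε * (hR x - G.rightFix) := mul_le_mul_of_nonneg_left hfar (by linarith)

/-- Both sides scale by the slope of the affine branch of `G` along an orbit of `F`, so the estimate
spreads from the fundamental domain `[F 0, 0]` to the right. -/
theorem mul_abs_sub_le_of_strictMono (hF : StrictMono F.right) (hν : F.left 0 < 0)
    (hνP : |F.left 0| ≤ P) (hx : F.left 0 ≤ x) :
    k.c * |h x - hR x| ≤ 2 * ε * (hR x - G.rightFix) := by
  have hs : 0 < s := k.c_pos.trans_le
    (slope_mem_Icc_of_strictMono haff (H.strictMono_right hF)).1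
  obtain ⟨n, hn⟩ := ((F.tendsto_iterate_right x).eventually
    (gt_mem_nhds (F.rightFix_neg_iff.2 hν))).exists
  induction n generalizing x with
  | zero => exact H.mul_abs_sub_le_of_nonpos hh haff nL nR h0 hε hF hν hνP ⟨hx, hn.le⟩
  | succ n ih =>
    rcases le_total x 0 with hx0 | hx0
    · exact H.mul_abs_sub_le_of_nonpos hh haff nL nR h0 hε hF hν hνP ⟨hx, hx0⟩
    have hstep := ih (x := F.right x) (F.left_zero ▸ hF.monotone hx0) hn
    have hdiff : h (F.right x) - hR (F.right x) = s * (h x - hR x) := by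
      rw [hh.map_right x hx0, H.right.map_apply, haff, haff]; ring
    have hfix : hR (F.right x) - G.rightFix = s * (hR x - G.rightFix) := by
      rw [H.right.map_apply, haff]
      linear_combination (haff G.rightFix).symm.trans G.right_rightFix
    rw [hdiff, hfix, abs_mul, abs_of_pos hs] at hstep
    exact le_of_mul_le_mul_left (by linarith) hs

theorem mul_abs_sub_le (hF : StrictMono F.right ∨ StrictAnti F.right) (hν : F.left 0 ≤ 0)
    (hp : 0 ≤ p) (hpP : 2 * p ≤ P) (hνp : |F.left 0| ≤ p) (hyp : |G.rightFix| ≤ p)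
    (hε1 : ε ≤ 1) : k.c * |h p - hR p| ≤ 6 * ε * p := by
  rcases hF with hF | hF
  · rcases hν.eq_or_lt with hν | hν
    · rw [hh.eqOn_right hν hF hp, sub_self, abs_zero, mul_zero]
      positivity
    have hRp : hR p ≤ 2 * p := by
      have := nR p (by rw [abs_of_nonneg hp]; linarith)
      rw [abs_of_nonneg hp] at this
      nlinarith [le_abs_self (hR p - p)]
    have := H.mul_abs_sub_le_of_strictMono hh haff nL nR h0 hε hF hν (by linarith) (x := p)
      (by linarith)
    nlinarith [neg_abs_le G.rightFix]
  · have hFp : |F.right p| ≤ 2 * p := by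
      have hdist := F.right_bounds.abs_sub_le p 0
      rw [sub_zero, abs_of_nonneg hp, ← F.left_zero] at hdist
      have := abs_sub_abs_le_abs_sub (F.right p) (F.left 0)
      nlinarith [k.l_lt_one]
    have := H.mul_abs_sub_le_of_strictAnti hh haff nL nR hF hν hp (hFp.trans hpP)
    nlinarith

theorem abs_sub_self_le (hF : StrictMono F.right ∨ StrictAnti F.right) (hν : F.left 0 ≤ 0)
    (hp : 0 ≤ p) (hpP : 2 * p ≤ P) (hνp : |F.left 0| ≤ p) (hyp : |G.rightFix| ≤ p)
    (hε1 : ε ≤ 1) : |h p - p| ≤ ε * (1 + 6 / k.c) * p := by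
  have hR_near := nR p (by rw [abs_of_nonneg hp]; linarith)
  have hsub : |h p - hR p| ≤ 6 * ε * p / k.c := by
    rw [le_div_iff₀' k.c_pos]
    exact H.mul_abs_sub_le hh haff nL nR h0 hε hF hν hp hpP hνp hyp hε1
  calc |h p - p| ≤ |h p - hR p| + |hR p - p| := _root_.abs_sub_le _ _ _
    _ ≤ 6 * ε * p / k.c + ε * p := by rw [abs_of_nonneg hp] at hR_near; gcongr
    _ = ε * (1 + 6 / k.c) * p := by ring

end IsBorderConj

/-- The germs at `0` and at the fixed points of the branches `l, r` and `l', r'` have the same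
invariants: the value and the ratio of slopes at `0`, and the multipliers of the fixed points `xL`,
`yL` of the left branches and `xR`, `yR` of the right branches. -/
structure IsMatched (l r l' r' : ℝ → ℝ) (xL xR yL yR : ℝ) : Prop where
  map_zero : l 0 = l' 0
  left_multiplier : deriv l xL = deriv l' yL
  right_multiplier : deriv r xR = deriv r' yR
  kink : deriv r 0 * deriv l' 0 = deriv r' 0 * deriv l 0

namespace BorderBounds

variable (k : BorderBounds)

/-- A bound for the logarithmic derivatives of the linearizations of both branches of a border
map, relative to the distance to the fixed point. -/
noncomputable def distortion : ℝ :=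
  max 0 (max (k.K / (k.B⁻¹ * (1 - k.b⁻¹))) (k.K / (k.c * (1 - k.l))))

/-- A bound on `[-P, P]` for the relative distance to the identity of the conjugacies between
matched branches. -/
noncomputable def deviation (P : ℝ) : ℝ := Real.exp (3 * k.distortion * P) ^ 4 - 1

theorem distortion_nonneg : 0 ≤ k.distortion := le_max_left _ _

theorem deviation_nonneg {P : ℝ} (hP : 0 ≤ P) : 0 ≤ k.deviation P :=
  sub_nonneg.2 <| one_le_pow₀ <| Real.one_le_exp <|
    mul_nonneg (mul_nonneg zero_le_three k.distortion_nonneg) hP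

theorem tendsto_deviation : Tendsto k.deviation (𝓝 0) (𝓝 0) := by
  have hcont : Continuous k.deviation := by unfold deviation; fun_prop
  simpa [deviation] using hcont.tendsto 0

end BorderBounds

namespace BorderMap

variable {k : BorderBounds} {F G : BorderMap k} {P : ℝ}

theorem exists_isLinearization_left (F : BorderMap k) :
    ∃ φ, IsLinearization F.left F.leftFix k.distortion φ := by
  obtain ⟨φ, hφ⟩ := F.left_bounds.exists_isLinearization_of_one_lt k.one_lt_b F.left_leftFix
  exact ⟨φ, hφ.mono ((le_max_left _ _).trans (le_max_right _ _))⟩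

theorem exists_isLinearization_right (F : BorderMap k) :
    ∃ φ, IsLinearization F.right F.rightFix k.distortion φ := by
  obtain ⟨φ, hφ⟩ := F.right_bounds.exists_isLinearization k.c_pos k.l_lt_one F.right_rightFix
  exact ⟨φ, hφ.mono ((le_max_right _ _).trans (le_max_right _ _))⟩

/-- The fixed points of both branches and the image of `0` are at distance at most `η` from `0`. -/
structure IsSmall (F : BorderMap k) (η : ℝ) : Prop where
  left_zero : |F.left 0| ≤ η
  leftFix : |F.leftFix| ≤ η
  rightFix : |F.rightFix| ≤ η

theorem IsSmall.mono {η η' : ℝ} (h : F.IsSmall η) (hη : η ≤ η') : F.IsSmall η' :=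
  ⟨h.left_zero.trans hη, h.leftFix.trans hη, h.rightFix.trans hη⟩

theorem exists_isBorderConj
    (hFG : IsMatched F.left F.right G.left G.right F.leftFix F.rightFix G.leftFix G.rightFix)
    (hF : F.IsSmall P) (hG : G.IsSmall P) (hP : k.deviation P ≤ 1) :
    ∃ hL hR : LineDiffeo, IsBorderConj F G hL hR ∧
      IsNearId (k.deviation P) P hL ∧ IsNearId (k.deviation P) P hR := by
  have hE : Real.exp (3 * k.distortion * P) ^ 4 ≤ 2 := by
    unfold BorderBounds.deviation at hP
    linarith
  obtain ⟨φL, hφL⟩ := F.exists_isLinearization_left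
  obtain ⟨ψL, hψL⟩ := G.exists_isLinearization_left
  obtain ⟨φR, hφR⟩ := F.exists_isLinearization_right
  obtain ⟨ψR, hψR⟩ := G.exists_isLinearization_right
  obtain ⟨hL, hconjL, nearL⟩ := hφL.exists_isBranchConj hψL k.distortion_nonneg
    hFG.left_multiplier (F.one_lt_deriv_left _).ne' hFG.map_zero hF.leftFix hG.leftFix
    hF.left_zero hE
  obtain ⟨hR, hconjR, nearR⟩ := hφR.exists_isBranchConj hψR k.distortion_nonneg
    hFG.right_multiplier (lt_of_abs_lt (F.abs_deriv_right_lt_one _)).ne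
    (by rw [← F.left_zero, ← G.left_zero, hFG.map_zero]) hF.rightFix hG.rightFix
    (F.left_zero ▸ hF.left_zero) hE
  exact ⟨hL, hR, ⟨hconjL, hconjR, hFG.kink⟩, nearL, nearR⟩

end BorderMap

/-! ### Saddle-node-like border collisions -/

/-- The maps glued from `l, r` and from `l', r'` are differentiably conjugate on the basins in `N`
and `M` of their stable fixed points `xR`, `yR` and of their unstable fixed points `xL`, `yL`. -/
structure BasinConj (l r l' r' : ℝ → ℝ) (N M : Set ℝ) (xL xR yL yR : ℝ) : Prop where
  xL_neg : xL < 0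
  xR_pos : 0 < xR
  yL_neg : yL < 0
  yR_pos : 0 < yR
  xL_mem : xL ∈ N
  xR_mem : xR ∈ N
  yL_mem : yL ∈ M
  yR_mem : yR ∈ M
  map_xL : l xL = xL
  map_xR : r xR = xR
  map_yL : l' yL = yL
  map_yR : r' yR = yR
  stable : |deriv r xR| < 1
  unstable : 1 < |deriv l xL|
  attr : DiffConjOn (glue l r) (glue l' r') (basinAttr (glue l r) N xR)
    (basinAttr (glue l' r') M yR)
  rep : DiffConjOn (glue l r) (glue l' r') (basinRep (glue l r) N xL) (basinRep (glue l' r') M yL)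

/-- The maps glued from `l, r` and from `l', r'` are differentiably conjugate on the intervals
`(xL, w)` and `(yL, z)`, where `w` and `z` are the preimages under `r` and `r'` of the fixed points
`xL` and `yL`, and on the negative parts of `N` and `M`. -/
structure TrapConj (l r l' r' : ℝ → ℝ) (N M : Set ℝ) (xL w yL z : ℝ) : Prop where
  xL_neg : xL < 0
  w_pos : 0 < w
  yL_neg : yL < 0
  z_pos : 0 < z
  xL_mem : xL ∈ N
  w_mem : w ∈ N
  yL_mem : yL ∈ M
  z_mem : z ∈ M
  map_xL : l xL = xL
  map_w : r w = xL
  map_yL : l' yL = yL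
  map_z : r' z = yL
  trap : DiffConjOn (glue l r) (glue l' r') (Ioo xL w) (Ioo yL z)
  neg : DiffConjOn (glue l r) (glue l' r') {x ∈ N | x < 0} {y ∈ M | y < 0}

/-- The conjugacies between the maps glued from `l, r` and from `l', r'` in the three cases of a
saddle-node-like border collision: virtual fixed points, admissible fixed points with an increasing
right branch, and admissible fixed points with a decreasing right branch. -/
structure SaddleNodeConj (l r l' r' : ℝ → ℝ) (N M : Set ℝ) : Prop where
  virtual : l 0 ≤ 0 → DiffConjOn (glue l r) (glue l' r') N M
  basin : 0 < l 0 → 0 < deriv r 0 → ∃ xL xR yL yR, BasinConj l r l' r' N M xL xR yL yR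
  trap : 0 < l 0 → deriv r 0 < 0 → ∃ xL w yL z, TrapConj l r l' r' N M xL w yL z

namespace IsBorderConj

variable {k : BorderBounds} {F G : BorderMap k} {hL hR h : LineDiffeo} {p : ℝ}
  (H : IsBorderConj F G hL hR)
include H

theorem basinConj (hF : StrictMono F.right) (hν : 0 < F.left 0) (ha : -p < F.leftFix)
    (hp : F.rightFix < p) : BasinConj F.left F.right G.left G.right (Ioo (-p) p)
      (Ioo (hL (-p)) (hR p)) F.leftFix F.rightFix G.leftFix G.rightFix := by
  have hνG := H.left_zero_pos_iff.2 hν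
  have hxL := F.leftFix_neg_iff.2 hν
  have hxR := F.rightFix_pos_iff.2 hν
  have hyL := G.leftFix_neg_iff.2 hνG
  have hyR := G.rightFix_pos_iff.2 hνG
  have hLp : hL (-p) < G.leftFix := H.left_map_leftFix ▸ H.left.strictMono ha
  have hRp : G.rightFix < hR p := H.right_map_rightFix ▸ H.right.strictMono hp
  have hG := H.strictMono_right hF
  refine ⟨hxL, hxR, hyL, hyR, ⟨ha, by linarith⟩, ⟨by linarith, hp⟩, ⟨hLp, by linarith⟩,
    ⟨by linarith, hRp⟩, F.left_leftFix, F.right_rightFix, G.left_leftFix, G.right_rightFix,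
    F.abs_deriv_right_lt_one _, (F.one_lt_deriv_left _).trans_le (le_abs_self _), ?_, ?_⟩
  · change DiffConjOn F G (basinAttr F _ _) (basinAttr G _ _)
    rw [F.basinAttr_eq hF hν ha hp, G.basinAttr_eq hG hνG hLp hRp]
    exact H.diffConjOn_Ioo_leftFix hF hν (hxR.trans hp)
  · change DiffConjOn F G (basinRep F _ _) (basinRep G _ _)
    rw [F.basinRep_eq hF hν ha hp, G.basinRep_eq hG hνG hLp hRp]
    exact H.diffConjOn_Ioo_rightFix hF hν (hxR.trans hp)

theorem trapConj (hF : StrictAnti F.right) (hν : 0 < F.left 0) (ha : -p < F.leftFix)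
    (hp : F.right.symm F.leftFix < p) (hRp : G.right.symm G.leftFix < hR p) :
    TrapConj F.left F.right G.left G.right (Ioo (-p) p) (Ioo (hL (-p)) (hR p)) F.leftFix
      (F.right.symm F.leftFix) G.leftFix (G.right.symm G.leftFix) := by
  have hνG := H.left_zero_pos_iff.2 hν
  have hG := H.strictAnti_right hF
  have hxL := F.leftFix_neg_iff.2 hν
  have hyL := G.leftFix_neg_iff.2 hνG
  have hLp : hL (-p) < G.leftFix := H.left_map_leftFix ▸ H.left.strictMono ha
  have hw : 0 < F.right.symm F.leftFix :=
    (F.right_symm_zero_pos hF hν).trans (LineDiffeo.strictAnti_symm hF hxL)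
  have hz : 0 < G.right.symm G.leftFix :=
    (G.right_symm_zero_pos hG hνG).trans (LineDiffeo.strictAnti_symm hG hyL)
  have hneg : ∀ {a b : ℝ}, 0 < b → {x ∈ Ioo a b | x < 0} = Ioo a 0 := fun {a b} hb => by
    change Ioo a b ∩ Iio 0 = _
    rw [Ioo_inter_Iio, min_eq_right hb.le]
  refine ⟨hxL, hw, hyL, hz, ⟨ha, by linarith⟩, ⟨by linarith, hp⟩, ⟨hLp, by linarith⟩,
    ⟨by linarith, hRp⟩, F.left_leftFix, F.right.apply_symm_apply _, G.left_leftFix,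
    G.right.apply_symm_apply _, H.diffConjOn_of_strictAnti hF hν, ?_⟩
  rw [hneg (hw.trans hp), hneg (hz.trans hRp)]
  exact H.diffConjOn_Ioo_neg

end IsBorderConj

namespace BorderMap

variable {k : BorderBounds} {F G : BorderMap k} {p η δ s : ℝ}

theorem IsSmall.abs_right_symm_leftFix_le (hF : F.IsSmall η) :
    k.c * |F.right.symm F.leftFix| ≤ 2 * η := by
  have h := F.right_bounds.abs_symm_sub_le k.c_pos F.leftFix (F.left 0)
  rw [F.left_zero, F.right.symm_apply_apply, sub_zero, ← F.left_zero, ← div_eq_inv_mul,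
    le_div_iff₀' k.c_pos] at h
  linarith [abs_sub F.leftFix (F.left 0), hF.left_zero, hF.leftFix]

theorem c_lt_one (F : BorderMap k) : k.c < 1 :=
  (F.right_bounds.le_abs_deriv 0).trans_lt (F.abs_deriv_right_lt_one 0)

end BorderMap

namespace IsBorderConj

variable {k : BorderBounds} {F G : BorderMap k} {hL hR h : LineDiffeo} {p η : ℝ}
  (H : IsBorderConj F G hL hR)
include H

theorem saddleNodeConj_of_nonpos (hh : IsVirtualConj F G hL hR h) (hν : F.left 0 ≤ 0)
    (hp : 0 < p) :
    SaddleNodeConj F.left F.right G.left G.right (Ioo (-p) p) (Ioo (hL (-p)) (h p)) where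
  virtual _ := H.diffConjOn_of_isVirtualConj hh hν hp
  basin hν' := absurd hν hν'.not_ge
  trap hν' := absurd hν hν'.not_ge

theorem saddleNodeConj_of_pos (hν : 0 < F.left 0) (hF : F.IsSmall η) (hG : G.IsSmall η)
    (hη : 4 * η < k.c * p) (hRp : p / 2 < hR p) :
    SaddleNodeConj F.left F.right G.left G.right (Ioo (-p) p) (Ioo (hL (-p)) (hR p)) := by
  have hη0 : 0 ≤ η := (abs_nonneg _).trans hF.left_zero
  have hηp : η < p := by nlinarith [F.c_lt_one, k.c_pos]
  have hleft : -p < F.leftFix := by linarith [neg_abs_le F.leftFix, hF.leftFix]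
  have hpreimage : ∀ E : BorderMap k, E.IsSmall η → E.right.symm E.leftFix < p / 2 := by
    intro E hE
    refine (le_abs_self _).trans_lt (lt_of_mul_lt_mul_left ?_ k.c_pos.le)
    linarith [hE.abs_right_symm_leftFix_le]
  refine ⟨fun hν' => absurd hν hν'.not_gt, fun _ hderiv => ?_, fun _ hderiv => ?_⟩
  · exact ⟨_, _, _, _, H.basinConj (LineDiffeo.strictMono_of_deriv_apply_pos hderiv) hν hleft
      (by linarith [le_abs_self F.rightFix, hF.rightFix])⟩
  · exact ⟨_, _, _, _, H.trapConj (LineDiffeo.strictAnti_of_deriv_apply_neg hderiv) hν hleft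
      (by linarith [hpreimage F hF]) ((hpreimage G hG).trans hRp)⟩

end IsBorderConj

theorem BorderMap.exists_saddleNodeConj {k : BorderBounds} {F G : BorderMap k} {p η δ s : ℝ}
    (hFG : IsMatched F.left F.right G.left G.right F.leftFix F.rightFix G.leftFix G.rightFix)
    (haff : ∀ y, G.right y = G.left 0 + s * y) (hF : F.IsSmall η) (hG : G.IsSmall η)
    (hη : 4 * η < k.c * p) (hδ : δ ≤ 1 / 2) (hdev : k.deviation (2 * p) * (1 + 6 / k.c) < δ) :
    ∃ qm qp, |qm + p| < δ * p ∧ |qp - p| < δ * p ∧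
      SaddleNodeConj F.left F.right G.left G.right (Ioo (-p) p) (Ioo qm qp) := by
  have hη0 : 0 ≤ η := (abs_nonneg _).trans hF.left_zero
  have hηp : η < p := by nlinarith [F.c_lt_one, k.c_pos]
  have hp : 0 < p := hη0.trans_lt hηp
  have hε0 := k.deviation_nonneg (P := 2 * p) (by linarith)
  have hεδ : k.deviation (2 * p) < δ := by
    have := mul_nonneg hε0 (div_nonneg (by norm_num : (0 : ℝ) ≤ 6) k.c_pos.le)
    linarith
  obtain ⟨hL, hR, H, nL, nR⟩ := BorderMap.exists_isBorderConj hFG (hF.mono (by linarith))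
    (hG.mono (by linarith)) (by linarith : k.deviation (2 * p) ≤ 1)
  have hLp : |hL (-p) + p| < δ * p := by
    have := nL (-p) (by rw [abs_neg, abs_of_pos hp]; linarith)
    rw [abs_neg, abs_of_pos hp, sub_neg_eq_add] at this
    exact this.trans_lt (mul_lt_mul_of_pos_right hεδ hp)
  rcases le_or_gt (F.left 0) 0 with hν | hν
  · have hmono := F.right.strictMono_or_strictAnti
    obtain ⟨h, hh⟩ := H.exists_isVirtualConj hmono hν
    refine ⟨_, _, hLp, ?_, H.saddleNodeConj_of_nonpos hh hν hp⟩
    exact (H.abs_sub_self_le hh haff nL nR hFG.map_zero hε0 hmono hν hp.le le_rfl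
      (hF.left_zero.trans hηp.le) (hG.rightFix.trans hηp.le) (by linarith)).trans_lt
      (mul_lt_mul_of_pos_right hdev hp)
  · have hRp : |hR p - p| < δ * p := by
      have := nR p (by rw [abs_of_pos hp]; linarith)
      rw [abs_of_pos hp] at this
      exact this.trans_lt (mul_lt_mul_of_pos_right hεδ hp)
    refine ⟨_, _, hLp, hRp, H.saddleNodeConj_of_pos hν hF hG hη ?_⟩
    nlinarith [(abs_lt.1 hRp).1]

/-! ### Localization -/

section Congr

variable {f f₂ g g₂ l r l' r' l₂ r₂ l₂' r₂' : ℝ → ℝ} {N M U V : Set ℝ} {z : ℝ}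

theorem DiffConjOn.congr (h : DiffConjOn f g U V) (hf : EqOn f f₂ U) (hg : EqOn g g₂ V) :
    DiffConjOn f₂ g₂ U V := by
  obtain ⟨e, hdiff, hrel⟩ := h
  refine ⟨e, hdiff, fun x hx hfx => ?_⟩
  rw [← hf hx] at hfx ⊢
  rw [hrel x hx hfx, hg (hdiff.1.mapsTo hx)]

theorem basinAttr_subset_of_eqOn (hfg : EqOn f g N) : basinAttr f N z ⊆ basinAttr g N z := by
  rintro x ⟨hxN, horbit, hlim⟩
  have hiter : ∀ n, g^[n] x = f^[n] x := fun n => by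
    induction n with
    | zero => rfl
    | succ n ih => rw [iterate_succ_apply', iterate_succ_apply', ih, hfg (horbit n)]
  exact ⟨hxN, fun n => hiter n ▸ horbit n, by simpa only [hiter] using hlim⟩

theorem basinAttr_congr (hfg : EqOn f g N) : basinAttr f N z = basinAttr g N z :=
  (basinAttr_subset_of_eqOn hfg).antisymm (basinAttr_subset_of_eqOn hfg.symm)

theorem basinRep_subset_of_eqOn (hfg : EqOn f g N) : basinRep f N z ⊆ basinRep g N z := by
  rintro x ⟨hxN, u, hu0, huN, hu, hlim⟩
  exact ⟨hxN, u, hu0, huN, fun n => hfg (huN (n + 1)) ▸ hu n, hlim⟩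

theorem basinRep_congr (hfg : EqOn f g N) : basinRep f N z = basinRep g N z :=
  (basinRep_subset_of_eqOn hfg).antisymm (basinRep_subset_of_eqOn hfg.symm)

theorem eqOn_glue (hl : EqOn l l₂ N) (hr : EqOn r r₂ N) : EqOn (glue l r) (glue l₂ r₂) N :=
  fun x hx => by rw [glue, glue, hl hx, hr hx]

variable (hl : EqOn l l₂ N) (hr : EqOn r r₂ N) (hl' : EqOn l' l₂' M) (hr' : EqOn r' r₂' M)
include hl hr hl' hr'

theorem BasinConj.congr {xL xR yL yR : ℝ} (h : BasinConj l r l' r' N M xL xR yL yR)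
    (hN : IsOpen N) : BasinConj l₂ r₂ l₂' r₂' N M xL xR yL yR where
  __ := h
  map_xL := hl h.xL_mem ▸ h.map_xL
  map_xR := hr h.xR_mem ▸ h.map_xR
  map_yL := hl' h.yL_mem ▸ h.map_yL
  map_yR := hr' h.yR_mem ▸ h.map_yR
  stable := (hr.eventuallyEq_of_mem (hN.mem_nhds h.xR_mem)).deriv_eq ▸ h.stable
  unstable := (hl.eventuallyEq_of_mem (hN.mem_nhds h.xL_mem)).deriv_eq ▸ h.unstable
  attr := by
    have hN := eqOn_glue hl hr
    have hM := eqOn_glue hl' hr'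
    rw [← basinAttr_congr hN, ← basinAttr_congr hM]
    exact h.attr.congr (hN.mono (sep_subset _ _)) (hM.mono (sep_subset _ _))
  rep := by
    have hN := eqOn_glue hl hr
    have hM := eqOn_glue hl' hr'
    rw [← basinRep_congr hN, ← basinRep_congr hM]
    exact h.rep.congr (hN.mono (sep_subset _ _)) (hM.mono (sep_subset _ _))

theorem TrapConj.congr {xL w yL z : ℝ} (h : TrapConj l r l' r' N M xL w yL z)
    (hN : N.OrdConnected) (hM : M.OrdConnected) : TrapConj l₂ r₂ l₂' r₂' N M xL w yL z where
  __ := h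
  map_xL := hl h.xL_mem ▸ h.map_xL
  map_w := hr h.w_mem ▸ h.map_w
  map_yL := hl' h.yL_mem ▸ h.map_yL
  map_z := hr' h.z_mem ▸ h.map_z
  trap := h.trap.congr
    ((eqOn_glue hl hr).mono (Ioo_subset_Icc_self.trans (hN.out h.xL_mem h.w_mem)))
    ((eqOn_glue hl' hr').mono (Ioo_subset_Icc_self.trans (hM.out h.yL_mem h.z_mem)))
  neg := h.neg.congr ((eqOn_glue hl hr).mono (sep_subset _ _))
    ((eqOn_glue hl' hr').mono (sep_subset _ _))

theorem SaddleNodeConj.congr (h : SaddleNodeConj l r l' r' N M) (hN : IsOpen N)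
    (hN' : N.OrdConnected) (hM' : M.OrdConnected) (h0 : 0 ∈ N) :
    SaddleNodeConj l₂ r₂ l₂' r₂' N M where
  virtual hν := (h.virtual (hl h0 ▸ hν)).congr (eqOn_glue hl hr) (eqOn_glue hl' hr')
  basin hν hderiv := by
    rw [← (hr.eventuallyEq_of_mem (hN.mem_nhds h0)).deriv_eq] at hderiv
    obtain ⟨xL, xR, yL, yR, hconj⟩ := h.basin (hl h0 ▸ hν) hderiv
    exact ⟨xL, xR, yL, yR, hconj.congr hl hr hl' hr' hN⟩
  trap hν hderiv := by
    rw [← (hr.eventuallyEq_of_mem (hN.mem_nhds h0)).deriv_eq] at hderiv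
    obtain ⟨xL, w, yL, z, hconj⟩ := h.trap (hl h0 ▸ hν) hderiv
    exact ⟨xL, w, yL, z, hconj.congr hl hr hl' hr' hN' hM'⟩

end Congr

/-- Uniform bounds on the derivative of `f` on `[-P, P]`: `|f'|` takes values in `[c, C]` and `f'`
is `K`-Lipschitz. -/
structure HasDerivBoundsOn (f : ℝ → ℝ) (P c C K : ℝ) : Prop where
  differentiableAt : ∀ x ∈ Icc (-P) P, DifferentiableAt ℝ f x
  le_abs_deriv : ∀ x ∈ Icc (-P) P, c ≤ |deriv f x|
  abs_deriv_le : ∀ x ∈ Icc (-P) P, |deriv f x| ≤ C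
  abs_deriv_sub_le : ∀ x ∈ Icc (-P) P, ∀ y ∈ Icc (-P) P, |deriv f x - deriv f y| ≤ K * |x - y|

namespace HasDerivBoundsOn

variable {f : ℝ → ℝ} {P c C K : ℝ}

theorem abs_deriv_projIcc_sub_le (hf : HasDerivBoundsOn f P c C K) (hP : 0 < P) (x y : ℝ) :
    |deriv f (projIcc (-P) P (neg_le_self hP.le) x) -
      deriv f (projIcc (-P) P (neg_le_self hP.le) y)| ≤ K * |x - y| := by
  have hK : 0 ≤ K := by
    have h := (abs_nonneg _).trans (hf.abs_deriv_sub_le P (right_mem_Icc.2 (by linarith)) 0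
      ⟨by linarith, hP.le⟩)
    exact nonneg_of_mul_nonneg_left h (abs_pos.2 (by linarith))
  refine (hf.abs_deriv_sub_le _ (Subtype.prop _) _ (Subtype.prop _)).trans
    (mul_le_mul_of_nonneg_left ?_ hK)
  simpa [Subtype.dist_eq, Real.dist_eq] using
    (LipschitzWith.projIcc (neg_le_self hP.le)).dist_le_mul x y

theorem exists_lineDiffeo (hf : HasDerivBoundsOn f P c C K) (hP : 0 < P) (hc : 0 < c) :
    ∃ e : LineDiffeo, EqOn e f (Icc (-P) P) ∧
      ∀ x, deriv e x = deriv f (projIcc (-P) P (neg_le_self hP.le) x) := by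
  set d : ℝ → ℝ := fun x => deriv f (projIcc (-P) P (neg_le_self hP.le) x)
  have hd : Continuous d := (LipschitzWith.of_dist_le' (hf.abs_deriv_projIcc_sub_le hP)).continuous
  have hderiv : ∀ x, HasDerivAt (fun x => f 0 + ∫ t in (0 : ℝ)..x, d t) (d x) x := fun x =>
    (intervalIntegral.integral_hasDerivAt_right (hd.intervalIntegrable _ _)
      (hd.stronglyMeasurableAtFilter _ _) hd.continuousAt).const_add _
  have hderiv_eq := fun x => (hderiv x).deriv
  obtain ⟨e, he⟩ := LineDiffeo.exists_coe_eq_of_le_abs_deriv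
    (contDiff_one_iff_deriv.2 ⟨fun x => (hderiv x).differentiableAt, by rwa [funext hderiv_eq]⟩) hc
    (fun x => by rw [hderiv_eq]; exact hf.le_abs_deriv _ (Subtype.prop _))
  refine ⟨e, fun x hx => ?_, fun x => by rw [he, hderiv_eq]⟩
  have hint : ∫ t in (0 : ℝ)..x, d t = f x - f 0 := by
    refine intervalIntegral.integral_eq_sub_of_hasDerivAt (fun t ht => ?_)
      (hd.intervalIntegrable _ _)
    have htP : t ∈ Icc (-P) P := uIcc_subset_Icc ⟨by linarith, hP.le⟩ hx ht
    simpa [d, projIcc_of_mem _ htP] using (hf.differentiableAt t htP).hasDerivAt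
  simp only [he, hint, add_sub_cancel]

theorem hasDerivBounds (hf : HasDerivBoundsOn f P c C K) (hP : 0 < P) {e : LineDiffeo}
    (he : ∀ x, deriv e x = deriv f (projIcc (-P) P (neg_le_self hP.le) x)) :
    HasDerivBounds e c C K where
  le_abs_deriv x := he x ▸ hf.le_abs_deriv _ (Subtype.prop _)
  abs_deriv_le x := he x ▸ hf.abs_deriv_le _ (Subtype.prop _)
  abs_deriv_sub_le x y := by rw [he, he]; exact hf.abs_deriv_projIcc_sub_le hP x y

end HasDerivBoundsOn

/-- The maps `l` and `r` are, on `[-P, P]`, the branches of a border map with bounds `k`, whose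
fixed points `xL`, `xR` and image of `0` are at distance at most `η` from `0`. -/
structure IsLocalBorderMap (k : BorderBounds) (P η : ℝ) (l r : ℝ → ℝ) (xL xR : ℝ) : Prop where
  left_bounds : HasDerivBoundsOn l P k.b k.B k.K
  right_bounds : HasDerivBoundsOn r P k.c k.l k.K
  left_zero : l 0 = r 0
  deriv_left_pos : 0 < deriv l 0
  map_xL : l xL = xL
  map_xR : r xR = xR
  abs_left_zero_le : |l 0| ≤ η
  abs_xL_le : |xL| ≤ η
  abs_xR_le : |xR| ≤ η

/-- The border map `F` extends the restriction of `l`, `r` to `[-P, P]`, without creating new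
slopes on the right. -/
structure BorderMap.IsExtension {k : BorderBounds} (F : BorderMap k) (P : ℝ) (l r : ℝ → ℝ) :
    Prop where
  left_eqOn : EqOn F.left l (Icc (-P) P)
  right_eqOn : EqOn F.right r (Icc (-P) P)
  deriv_left_eqOn : EqOn (deriv F.left) (deriv l) (Icc (-P) P)
  deriv_right_eqOn : EqOn (deriv F.right) (deriv r) (Icc (-P) P)
  deriv_right_mem : ∀ x, deriv F.right x ∈ deriv r '' Icc (-P) P

theorem BorderMap.IsExtension.isMatched {k : BorderBounds} {F G : BorderMap k} {P : ℝ}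
    {l r l' r' : ℝ → ℝ} {xL xR yL yR : ℝ} (hF : F.IsExtension P l r) (hG : G.IsExtension P l' r')
    (h : IsMatched l r l' r' xL xR yL yR) (h0 : 0 ∈ Icc (-P) P) (hxL : xL ∈ Icc (-P) P)
    (hxR : xR ∈ Icc (-P) P) (hyL : yL ∈ Icc (-P) P) (hyR : yR ∈ Icc (-P) P) :
    IsMatched F.left F.right G.left G.right xL xR yL yR where
  map_zero := by rw [hF.left_eqOn h0, hG.left_eqOn h0, h.map_zero]
  left_multiplier := by rw [hF.deriv_left_eqOn hxL, hG.deriv_left_eqOn hyL, h.left_multiplier]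
  right_multiplier := by rw [hF.deriv_right_eqOn hxR, hG.deriv_right_eqOn hyR, h.right_multiplier]
  kink := by
    rw [hF.deriv_left_eqOn h0, hF.deriv_right_eqOn h0, hG.deriv_left_eqOn h0,
      hG.deriv_right_eqOn h0, h.kink]

theorem eq_add_mul_of_deriv_eq {f : ℝ → ℝ} {s : ℝ} (hf : Differentiable ℝ f)
    (hderiv : ∀ x, deriv f x = s) (y : ℝ) : f y = f 0 + s * y := by
  have hconst := is_const_of_deriv_eq_zero (f := fun x => f x - s * x)
    (hf.sub (differentiable_id.const_mul s)) (fun x => by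
      rw [deriv_fun_sub (hf x) (differentiableAt_fun_id.const_mul s), hderiv, deriv_const_mul_id',
        sub_self]) y 0
  linarith

namespace IsLocalBorderMap

variable {k : BorderBounds} {P η : ℝ} {l r l' r' : ℝ → ℝ} {xL xR yL yR : ℝ}

theorem exists_isExtension (h : IsLocalBorderMap k P η l r xL xR) (hP : 0 < P) (hη : η ≤ P) :
    ∃ F : BorderMap k, F.IsExtension P l r ∧ F.leftFix = xL ∧ F.rightFix = xR ∧ F.IsSmall η := by
  obtain ⟨eL, hL, hL'⟩ := h.left_bounds.exists_lineDiffeo hP (zero_lt_one.trans k.one_lt_b)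
  obtain ⟨eR, hR, hR'⟩ := h.right_bounds.exists_lineDiffeo hP k.c_pos
  have h0 : (0 : ℝ) ∈ Icc (-P) P := ⟨by linarith, hP.le⟩
  have hderivL : EqOn (deriv eL) (deriv l) (Icc (-P) P) := fun x hx => by
    rw [hL', projIcc_of_mem _ hx]
  have hderivR : EqOn (deriv eR) (deriv r) (Icc (-P) P) := fun x hx => by
    rw [hR', projIcc_of_mem _ hx]
  let F : BorderMap k :=
    { left := eL
      right := eR
      left_zero := by rw [hL h0, hR h0, h.left_zero]
      strictMono_left := LineDiffeo.strictMono_of_deriv_apply_pos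
        (x := 0) (by rw [hderivL h0]; exact h.deriv_left_pos)
      left_bounds := h.left_bounds.hasDerivBounds hP hL'
      right_bounds := h.right_bounds.hasDerivBounds hP hR'
      leftFix := xL
      rightFix := xR
      left_leftFix := by rw [hL (abs_le.1 (h.abs_xL_le.trans hη)), h.map_xL]
      right_rightFix := by rw [hR (abs_le.1 (h.abs_xR_le.trans hη)), h.map_xR] }
  exact ⟨F, ⟨hL, hR, hderivL, hderivR, fun x => ⟨_, Subtype.prop _, (hR' x).symm⟩⟩, rfl, rfl,
    (congrArg abs (hL h0)).trans_le h.abs_left_zero_le, h.abs_xL_le, h.abs_xR_le⟩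

theorem exists_saddleNodeConj {p δ s : ℝ} (h : IsLocalBorderMap k (2 * p) η l r xL xR)
    (h' : IsLocalBorderMap k (2 * p) η l' r' yL yR) (hmatch : IsMatched l r l' r' xL xR yL yR)
    (haff : ∀ y ∈ Icc (-(2 * p)) (2 * p), deriv r' y = s) (hp : 0 < p)
    (hη : 4 * η < k.c * p) (hδ : δ ≤ 1 / 2) (hdev : k.deviation (2 * p) * (1 + 6 / k.c) < δ) :
    ∃ qm qp, |qm + p| < δ * p ∧ |qp - p| < δ * p ∧
      SaddleNodeConj l r l' r' (Ioo (-p) p) (Ioo qm qp) := by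
  have h0 : (0 : ℝ) ∈ Icc (-(2 * p)) (2 * p) := ⟨by linarith, by linarith⟩
  have hc : k.c < 1 := (h.right_bounds.le_abs_deriv 0 h0).trans_lt
    ((h.right_bounds.abs_deriv_le 0 h0).trans_lt k.l_lt_one)
  have hηp : η ≤ p := by nlinarith [(abs_nonneg _).trans h.abs_xL_le]
  obtain ⟨F, hF, rfl, rfl, hFη⟩ := h.exists_isExtension (by linarith) (by linarith)
  obtain ⟨G, hG, rfl, rfl, hGη⟩ := h'.exists_isExtension (by linarith) (by linarith)
  have hmem : ∀ {x}, |x| ≤ η → x ∈ Icc (-(2 * p)) (2 * p) := fun hx => abs_le.1 (by linarith)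
  have hmatch' := hF.isMatched hG hmatch h0 (hmem h.abs_xL_le) (hmem h.abs_xR_le)
    (hmem h'.abs_xL_le) (hmem h'.abs_xR_le)
  have haff' : ∀ y, G.right y = G.left 0 + s * y := fun y => by
    rw [G.left_zero]
    refine eq_add_mul_of_deriv_eq G.right.differentiable (fun x => ?_) y
    obtain ⟨z, hz, hzx⟩ := hG.deriv_right_mem x
    rw [← hzx, haff z hz]
  obtain ⟨qm, qp, hqm, hqp, hconj⟩ :=
    BorderMap.exists_saddleNodeConj hmatch' haff' hFη hGη hη hδ hdev
  have hδp : δ * p ≤ p := by nlinarith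
  have hM : Ioo qm qp ⊆ Icc (-(2 * p)) (2 * p) := fun y hy =>
    ⟨by linarith [(abs_lt.1 hqm).1, hy.1], by linarith [(abs_lt.1 hqp).2, hy.2]⟩
  have hN : Ioo (-p) p ⊆ Icc (-(2 * p)) (2 * p) := fun y hy =>
    ⟨by linarith [hy.1], by linarith [hy.2]⟩
  exact ⟨qm, qp, hqm, hqp, hconj.congr (hF.left_eqOn.mono hN) (hF.right_eqOn.mono hN)
    (hG.left_eqOn.mono hM) (hG.right_eqOn.mono hM) isOpen_Ioo ordConnected_Ioo ordConnected_Ioo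
    ⟨by linarith, hp⟩⟩

end IsLocalBorderMap

/-! ### Families of border maps -/

section Families

variable {f : ℝ → ℝ → ℝ} {x₀ μ₀ : ℝ} {n : WithTop ℕ∞}

theorem hasDerivAt_fderiv_uncurry (hf : DifferentiableAt ℝ (uncurry f) (x₀, μ₀)) :
    HasDerivAt (fun x => f x μ₀) (fderiv ℝ (uncurry f) (x₀, μ₀) (1, 0)) x₀ :=
  HasFDerivAt.comp_hasDerivAt (f := fun x => (x, μ₀)) x₀ hf.hasFDerivAt
    ((hasDerivAt_id x₀).prodMk (hasDerivAt_const x₀ μ₀))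

theorem contDiffAt_deriv_fst {m : WithTop ℕ∞} (hf : ContDiffAt ℝ n (uncurry f) (x₀, μ₀))
    (hmn : m + 1 ≤ n) (hn : n ≠ ∞) :
    ContDiffAt ℝ m (fun q : ℝ × ℝ => deriv (fun x => f x q.2) q.1) (x₀, μ₀) := by
  refine ((hf.fderiv_right hmn).clm_apply (contDiffAt_const (c := ((1 : ℝ), (0 : ℝ)))))
    |>.congr_of_eventuallyEq ?_
  have hn0 : n ≠ 0 := by rintro rfl; simp at hmn
  filter_upwards [hf.eventually hn] with q hq
  exact (hasDerivAt_fderiv_uncurry (hq.differentiableAt hn0)).deriv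

theorem exists_contDiffAt_fixedPoint (hn : n ≠ 0) (hf : ContDiffAt ℝ n (uncurry f) (x₀, μ₀))
    (hfix : f x₀ μ₀ = x₀) (hne : deriv (fun x => f x μ₀) x₀ ≠ 1) :
    ∃ X : ℝ → ℝ, ContDiffAt ℝ n X μ₀ ∧ X μ₀ = x₀ ∧ ∀ᶠ μ in 𝓝 μ₀, f (X μ) μ = X μ := by
  have hG : ContDiffAt ℝ n (fun q : ℝ × ℝ => f q.2 q.1 - q.2) (μ₀, x₀) :=
    (hf.comp (μ₀, x₀) (contDiffAt_snd.prodMk contDiffAt_fst)).sub contDiffAt_snd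
  have hpartial : fderiv ℝ (fun q : ℝ × ℝ => f q.2 q.1 - q.2) (μ₀, x₀) (0, 1) =
      deriv (fun x => f x μ₀) x₀ - 1 :=
    ((hG.differentiableAt hn).hasFDerivAt.comp_hasDerivAt x₀
      ((hasDerivAt_const x₀ μ₀).prodMk (hasDerivAt_id x₀))).unique
      ((hasDerivAt_fderiv_uncurry (hf.differentiableAt hn)).differentiableAt.hasDerivAt.sub
        (hasDerivAt_id x₀))
  have hinv : (fderiv ℝ (fun q : ℝ × ℝ => f q.2 q.1 - q.2) (μ₀, x₀) ∘L
      .inr ℝ ℝ ℝ).IsInvertible := by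
    refine ⟨ContinuousLinearEquiv.unitsEquivAut ℝ (Units.mk0 _ (sub_ne_zero.2 hne)), ?_⟩
    ext
    simp [hpartial]
  refine ⟨hG.implicitFunction hn hinv, hG.contDiffAt_implicitFunction hn hinv,
    hG.implicitFunction_apply_self hn hinv, ?_⟩
  filter_upwards [hG.eventually_apply_implicitFunction hn hinv] with μ hμ
  simp only [hfix, sub_self] at hμ
  exact sub_eq_zero.1 hμ

/-- Near `(0, 0)` the family `f · μ` is differentiable, with a derivative that depends continuously
on `(x, μ)` at `(0, 0)` and is `K`-Lipschitz in `x`. -/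
structure HasLipschitzSlope (f : ℝ → ℝ → ℝ) (K : ℝ) : Prop where
  differentiableAt : ∀ᶠ q : ℝ × ℝ in 𝓝 0, DifferentiableAt ℝ (fun x => f x q.2) q.1
  continuousAt : ContinuousAt (fun q : ℝ × ℝ => deriv (fun x => f x q.2) q.1) 0
  lipschitz : ∃ s ∈ 𝓝 (0 : ℝ × ℝ), ∀ x y μ, (x, μ) ∈ s → (y, μ) ∈ s →
    |deriv (fun x => f x μ) x - deriv (fun x => f x μ) y| ≤ K * |x - y|

theorem HasLipschitzSlope.mono {K K' : ℝ} (hf : HasLipschitzSlope f K) (hK : K ≤ K') :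
    HasLipschitzSlope f K' where
  __ := hf
  lipschitz := by
    obtain ⟨s, hs, hlip⟩ := hf.lipschitz
    exact ⟨s, hs, fun x y μ hx hy =>
      (hlip x y μ hx hy).trans (mul_le_mul_of_nonneg_right hK (abs_nonneg _))⟩

theorem exists_hasLipschitzSlope (hf : ContDiffAt ℝ 2 (uncurry f) 0) :
    ∃ K, HasLipschitzSlope f K := by
  have hderiv := contDiffAt_deriv_fst (m := 1) hf (by norm_num) (by decide)
  obtain ⟨K, s, hs, hlip⟩ := hderiv.exists_lipschitzOnWith
  refine ⟨K, ?_, hderiv.continuousAt, s, hs, fun x y μ hx hy => ?_⟩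
  · filter_upwards [hf.eventually (by decide)] with q hq
    exact (hasDerivAt_fderiv_uncurry (hq.differentiableAt two_ne_zero)).differentiableAt
  · simpa [Prod.dist_eq, Real.dist_eq] using hlip.dist_le_mul _ hx _ hy

theorem eventually_forall_mem_Icc {Q : ℝ × ℝ → Prop} (h : ∀ᶠ q in 𝓝 0, Q q) :
    ∀ᶠ P in 𝓝[>] (0 : ℝ), ∀ᶠ μ in 𝓝 0, ∀ x ∈ Icc (-P) P, Q (x, μ) := by
  obtain ⟨ρ, hρ, hQ⟩ := Metric.eventually_nhds_iff.1 h
  filter_upwards [Ioo_mem_nhdsGT hρ] with P hP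
  filter_upwards [Metric.ball_mem_nhds 0 hρ] with μ hμ x hx
  refine hQ (max_lt ?_ hμ)
  rw [Real.dist_eq, Prod.fst_zero, sub_zero]
  exact (abs_le.2 hx).trans_lt hP.2

theorem HasLipschitzSlope.eventually_hasDerivBoundsOn {c C K : ℝ} (hf : HasLipschitzSlope f K)
    (hc : c < |deriv (fun x => f x 0) 0|) (hC : |deriv (fun x => f x 0) 0| < C) :
    ∀ᶠ P in 𝓝[>] (0 : ℝ), ∀ᶠ μ in 𝓝 0, HasDerivBoundsOn (fun x => f x μ) P c C K := by
  obtain ⟨s, hs, hlip⟩ := hf.lipschitz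
  have hlow := hf.continuousAt.abs.eventually (eventually_gt_nhds hc)
  have hup := hf.continuousAt.abs.eventually (eventually_lt_nhds hC)
  filter_upwards [eventually_forall_mem_Icc
    ((hf.differentiableAt.and hs).and (hlow.and hup))] with P hP
  filter_upwards [hP] with μ hμ
  exact ⟨fun x hx => (hμ x hx).1.1, fun x hx => (hμ x hx).2.1.le, fun x hx => (hμ x hx).2.2.le,
    fun x hx y hy => hlip x y μ (hμ x hx).1.2 (hμ y hy).1.2⟩

end Families

/-- The pairs `l · μ`, `r · μ` are the branches of continuous maps with fixed points `xL μ`, `xR μ`;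
at `μ = 0` these collide with the border at `0`, the left branch expanding and the right one
contracting there. -/
structure IsBorderFamily (K : ℝ) (l r : ℝ → ℝ → ℝ) (xL xR : ℝ → ℝ) : Prop where
  left_slope : HasLipschitzSlope l K
  right_slope : HasLipschitzSlope r K
  left_zero : ∀ᶠ μ in 𝓝 0, l 0 μ = r 0 μ
  one_lt_deriv_left : 1 < deriv (fun x => l x 0) 0
  abs_deriv_right_pos : 0 < |deriv (fun x => r x 0) 0|
  abs_deriv_right_lt_one : |deriv (fun x => r x 0) 0| < 1
  map_xL : ∀ᶠ μ in 𝓝 0, l (xL μ) μ = xL μ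
  map_xR : ∀ᶠ μ in 𝓝 0, r (xR μ) μ = xR μ
  tendsto_left_zero : Tendsto (fun μ => l 0 μ) (𝓝 0) (𝓝 0)
  tendsto_xL : Tendsto xL (𝓝 0) (𝓝 0)
  tendsto_xR : Tendsto xR (𝓝 0) (𝓝 0)

namespace IsBorderFamily

variable {K : ℝ} {l r l' r' : ℝ → ℝ → ℝ} {xL xR yL yR : ℝ → ℝ} {k : BorderBounds}

theorem eventually_isLocalBorderMap (h : IsBorderFamily k.K l r xL xR)
    (hb : k.b < deriv (fun x => l x 0) 0) (hB : deriv (fun x => l x 0) 0 < k.B)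
    (hc : k.c < |deriv (fun x => r x 0) 0|) (hl : |deriv (fun x => r x 0) 0| < k.l) :
    ∀ᶠ P in 𝓝[>] (0 : ℝ), ∀ η > 0, ∀ᶠ μ in 𝓝 0,
      IsLocalBorderMap k P η (fun x => l x μ) (fun x => r x μ) (xL μ) (xR μ) := by
  have hpos : 0 < deriv (fun x => l x 0) 0 := zero_lt_one.trans h.one_lt_deriv_left
  rw [← abs_of_pos hpos] at hb hB
  have hderiv : ∀ᶠ μ in 𝓝 (0 : ℝ), 0 < deriv (fun x => l x μ) 0 :=
    ((Continuous.prodMk_right (0 : ℝ)).tendsto' 0 0 rfl).eventually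
      (h.left_slope.continuousAt.eventually (eventually_gt_nhds hpos))
  have hsmall : ∀ {u : ℝ → ℝ}, Tendsto u (𝓝 0) (𝓝 0) → ∀ η > 0, ∀ᶠ μ in 𝓝 0, |u μ| < η :=
    fun hu η hη => hu.abs.eventually (eventually_lt_nhds (by rwa [abs_zero]))
  filter_upwards [h.left_slope.eventually_hasDerivBoundsOn hb hB,
    h.right_slope.eventually_hasDerivBoundsOn hc hl] with P hPL hPR η hη
  filter_upwards [hPL, hPR, h.left_zero, hderiv, h.map_xL, h.map_xR,
    hsmall h.tendsto_left_zero η hη, hsmall h.tendsto_xL η hη, hsmall h.tendsto_xR η hη]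
    with μ hL hR h0 hd hxL hxR hν hL' hR'
  exact ⟨hL, hR, h0, hd, hxL, hxR, hν.le, hL'.le, hR'.le⟩

theorem eventually_exists_saddleNodeConj (h : IsBorderFamily K l r xL xR)
    (h' : IsBorderFamily K l' r' yL yR) {s : ℝ → ℝ} {δ : ℝ}
    (hleft : deriv (fun x => l' x 0) 0 = deriv (fun x => l x 0) 0)
    (hright : deriv (fun x => r' x 0) 0 = deriv (fun x => r x 0) 0)
    (hmatch : ∀ᶠ μ in 𝓝 0, IsMatched (fun x => l x μ) (fun x => r x μ) (fun y => l' y μ)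
      (fun y => r' y μ) (xL μ) (xR μ) (yL μ) (yR μ))
    (haff : ∀ μ y, deriv (fun y => r' y μ) y = s μ) (hδ0 : 0 < δ) (hδ : δ ≤ 1 / 2) :
    ∀ᶠ p in 𝓝[>] (0 : ℝ), ∀ᶠ μ in 𝓝 0, ∃ qm qp, |qm + p| < δ * p ∧ |qp - p| < δ * p ∧
      SaddleNodeConj (fun x => l x μ) (fun x => r x μ) (fun y => l' y μ) (fun y => r' y μ)
        (Ioo (-p) p) (Ioo qm qp) := by
  have hL := h.one_lt_deriv_left
  have hR0 := h.abs_deriv_right_pos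
  have hR1 := h.abs_deriv_right_lt_one
  let k : BorderBounds :=
    { b := (1 + deriv (fun x => l x 0) 0) / 2
      B := 2 * deriv (fun x => l x 0) 0
      c := |deriv (fun x => r x 0) 0| / 2
      l := (1 + |deriv (fun x => r x 0) 0|) / 2
      K := K
      one_lt_b := by linarith
      c_pos := by linarith
      l_lt_one := by linarith }
  have hdouble : Tendsto (fun p : ℝ => 2 * p) (𝓝[>] 0) (𝓝[>] 0) := by
    refine tendsto_nhdsWithin_iff.2 ⟨?_, ?_⟩
    · exact ((continuous_const_mul 2).tendsto' 0 0 (mul_zero 2)).mono_left nhdsWithin_le_nhds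
    · filter_upwards [self_mem_nhdsWithin] with p hp using mul_pos two_pos (mem_Ioi.1 hp)
  have hdev : ∀ᶠ P in 𝓝[>] (0 : ℝ), k.deviation P * (1 + 6 / k.c) < δ :=
    nhdsWithin_le_nhds <| (k.tendsto_deviation.mul_const _).eventually
      (eventually_lt_nhds (by rwa [zero_mul]))
  filter_upwards [self_mem_nhdsWithin,
    hdouble.eventually (h.eventually_isLocalBorderMap (k := k) (by simp only [k]; linarith)
      (by simp only [k]; linarith) (by simp only [k]; linarith) (by simp only [k]; linarith)),
    hdouble.eventually (h'.eventually_isLocalBorderMap (k := k)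
      (by simp only [k, hleft]; linarith) (by simp only [k, hleft]; linarith)
      (by simp only [k, hright]; linarith) (by simp only [k, hright]; linarith)),
    hdouble.eventually hdev] with p hp hloc hloc' hdevp
  have hη : 0 < k.c * p / 8 := div_pos (mul_pos k.c_pos hp) (by norm_num)
  filter_upwards [hloc _ hη, hloc' _ hη, hmatch] with μ hμ hμ' hmatchμ
  exact hμ.exists_saddleNodeConj hμ' hmatchμ (fun y _ => haff μ y) hp (by linarith) hδ hdevp

end IsBorderFamily

/-! ### The extended normal form -/

/-- The left branch of the extended normal form. -/
def nfLeft (ν s t y : ℝ) : ℝ := ν + s * y + t * y ^ 2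

/-- The right branch of the extended normal form. -/
def nfRight (ν s y : ℝ) : ℝ := ν + s * y

section NormalForm

theorem hasDerivAt_nfLeft (ν s t y : ℝ) :
    HasDerivAt (fun y => nfLeft ν s t y) (s + 2 * t * y) y := by
  have h := (((hasDerivAt_id y).const_mul s).const_add ν).add ((hasDerivAt_pow 2 y).const_mul t)
  exact h.congr_deriv (by norm_num; ring)

theorem hasDerivAt_nfRight (ν s y : ℝ) : HasDerivAt (fun y => nfRight ν s y) s y :=
  (((hasDerivAt_id y).const_mul s).const_add ν).congr_deriv (mul_one s)

variable {ν m s t : ℝ → ℝ}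

theorem hasLipschitzSlope_nfLeft (hs : ContinuousAt s 0) (ht : ContinuousAt t 0) :
    HasLipschitzSlope (fun y μ => nfLeft (ν μ) (s μ) (t μ) y) (|2 * t 0| + 1) := by
  have hderiv : ∀ y μ, deriv (fun y => nfLeft (ν μ) (s μ) (t μ) y) y = s μ + 2 * t μ * y :=
    fun y μ => (hasDerivAt_nfLeft _ _ _ y).deriv
  have hbound : ∀ᶠ μ in 𝓝 0, |2 * t μ| < |2 * t 0| + 1 :=
    (ht.const_mul 2).abs.eventually (eventually_lt_nhds (lt_add_one _))
  refine ⟨.of_forall fun q => (hasDerivAt_nfLeft _ _ _ _).differentiableAt, ?_,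
    Prod.snd ⁻¹' _, continuousAt_snd hbound, fun x y μ hμ _ => ?_⟩
  · simp only [hderiv]
    have hs' := ContinuousAt.comp' (x := (0 : ℝ × ℝ)) hs continuousAt_snd
    have ht' := ContinuousAt.comp' (x := (0 : ℝ × ℝ)) ht continuousAt_snd
    exact hs'.add ((ht'.const_mul 2).mul continuousAt_fst)
  · rw [hderiv, hderiv, add_sub_add_left_eq_sub, ← mul_sub, abs_mul]
    exact mul_le_mul_of_nonneg_right (le_of_lt hμ) (abs_nonneg _)

theorem hasLipschitzSlope_nfRight (hs : ContinuousAt s 0) :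
    HasLipschitzSlope (fun y μ => nfRight (ν μ) (s μ) y) 0 := by
  have hderiv : ∀ y μ, deriv (fun y => nfRight (ν μ) (s μ) y) y = s μ :=
    fun y μ => (hasDerivAt_nfRight _ _ y).deriv
  refine ⟨.of_forall fun q => (hasDerivAt_nfRight _ _ _).differentiableAt, ?_, univ, univ_mem,
    fun x y μ _ _ => ?_⟩
  · simpa only [hderiv] using ContinuousAt.comp' (x := (0 : ℝ × ℝ)) hs continuousAt_snd
  · rw [hderiv, hderiv, sub_self, abs_zero, zero_mul]

theorem eventually_continuousAt_of_contDiffAt {u : ℝ → ℝ} (hu : ContDiffAt ℝ 1 u 0) :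
    ∀ᶠ μ in 𝓝 0, ContinuousAt u μ := by
  filter_upwards [hu.eventually (by decide)] with μ hμ using hμ.continuousAt

theorem eventually_continuousAt_dslope {u : ℝ → ℝ} (hu : ContDiffAt ℝ 1 u 0) :
    ∀ᶠ μ in 𝓝 0, ContinuousAt (dslope u 0) μ := by
  filter_upwards [eventually_continuousAt_of_contDiffAt hu] with μ hμ
  rcases eq_or_ne μ 0 with rfl | hne
  · exact continuousAt_dslope_same.2 (hu.differentiableAt one_ne_zero)
  · exact (continuousAt_dslope_of_ne hne).2 hμ

theorem eq_mul_dslope {u : ℝ → ℝ} (hu : u 0 = 0) (μ : ℝ) : u μ = μ * dslope u 0 μ := by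
  simpa only [hu, sub_zero, smul_eq_mul] using (sub_smul_dslope u 0 μ).symm

/-- A fixed point `y` of `nfLeft ν s t` with multiplier `m` satisfies `2 * t * y = m - s`, hence
`y = ν / (1 - (s + m) / 2)` and `t = (m - s) / (2 * y)`. The quotient `(m - s) / ν` in the latter
is replaced by a quotient of slopes, which is defined at `μ = 0` as well. -/
noncomputable def nfCurvature (ν s m : ℝ → ℝ) (μ : ℝ) : ℝ :=
  dslope (m - s) 0 μ * (2 - (s μ + m μ)) / (4 * dslope ν 0 μ)

theorem eventually_continuousAt_nfCurvature (hν : ContDiffAt ℝ 1 ν 0) (hs : ContDiffAt ℝ 1 s 0)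
    (hm : ContDiffAt ℝ 1 m 0) (hν' : deriv ν 0 ≠ 0) :
    ∀ᶠ μ in 𝓝 0, ContinuousAt (nfCurvature ν s m) μ := by
  have hslope := eventually_continuousAt_dslope hν
  filter_upwards [hslope, eventually_continuousAt_dslope (hm.sub hs),
    eventually_continuousAt_of_contDiffAt hs, eventually_continuousAt_of_contDiffAt hm,
    hslope.self_of_nhds.eventually_ne (by rwa [dslope_same])] with μ h₁ h₂ h₃ h₄ h₅
  exact (h₂.mul (continuousAt_const.sub (h₃.add h₄))).div (h₁.const_mul 4)
    (mul_ne_zero four_ne_zero h₅)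

theorem exists_fixedPoint_nfLeft (hν : ContDiffAt ℝ 1 ν 0) (hs : ContDiffAt ℝ 1 s 0)
    (hm : ContDiffAt ℝ 1 m 0) (hν0 : ν 0 = 0) (hν' : deriv ν 0 ≠ 0) (hms : m 0 = s 0)
    (hs1 : s 0 ≠ 1) :
    ∃ y : ℝ → ℝ, Tendsto y (𝓝 0) (𝓝 0) ∧ ∀ᶠ μ in 𝓝 0,
      nfLeft (ν μ) (s μ) (nfCurvature ν s m μ) (y μ) = y μ ∧
        s μ + 2 * nfCurvature ν s m μ * y μ = m μ := by
  have hne : 2 - (s 0 + m 0) ≠ 0 := fun h => hs1 (by linarith)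
  have hden : ContinuousAt (fun μ => 2 - (s μ + m μ)) 0 :=
    continuousAt_const.sub (hs.continuousAt.add hm.continuousAt)
  refine ⟨fun μ => 2 * ν μ / (2 - (s μ + m μ)), ?_, ?_⟩
  · have hcont : ContinuousAt (fun μ => 2 * ν μ / (2 - (s μ + m μ))) 0 :=
      (hν.continuousAt.const_mul 2).div hden hne
    simpa [ContinuousAt, hν0] using hcont
  filter_upwards [hden.eventually_ne hne, (eventually_continuousAt_dslope hν).self_of_nhds
    |>.eventually_ne (by rwa [dslope_same])] with μ hμ hslope
  have hmult : s μ + 2 * nfCurvature ν s m μ * (2 * ν μ / (2 - (s μ + m μ))) = m μ := by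
    have hdiff : m μ - s μ = μ * dslope (m - s) 0 μ :=
      eq_mul_dslope (u := m - s) (sub_eq_zero.2 hms) μ
    rw [nfCurvature, eq_mul_dslope hν0 μ]
    field_simp
    linear_combination -4 * hdiff
  refine ⟨?_, hmult⟩
  have hfix : 2 * ν μ / (2 - (s μ + m μ)) * (2 - (s μ + m μ)) = 2 * ν μ := div_mul_cancel₀ _ hμ
  rw [nfLeft]
  linear_combination -(1 / 2) * hfix + 2 * ν μ / (2 - (s μ + m μ)) / 2 * hmult

end NormalForm

theorem tendsto_zero_of_contDiffAt {u : ℝ → ℝ} (hu : ContDiffAt ℝ 1 u 0) (hu0 : u 0 = 0) :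
    Tendsto u (𝓝 0) (𝓝 0) := by
  simpa only [hu0] using hu.continuousAt.tendsto

theorem contDiffAt_comp_prodMk {f : ℝ × ℝ → ℝ} {X : ℝ → ℝ} (hf : ContDiffAt ℝ 1 f 0)
    (hX : ContDiffAt ℝ 1 X 0) (hX0 : X 0 = 0) : ContDiffAt ℝ 1 (fun μ => f (X μ, μ)) 0 :=
  ContDiffAt.comp (f := fun μ => (X μ, μ)) 0 (by rw [hX0]; exact hf) (hX.prodMk contDiffAt_id)

theorem IsBorderFamily.mono {K K' : ℝ} {l r : ℝ → ℝ → ℝ} {xL xR : ℝ → ℝ}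
    (h : IsBorderFamily K l r xL xR) (hK : K ≤ K') : IsBorderFamily K' l r xL xR where
  __ := h
  left_slope := h.left_slope.mono hK
  right_slope := h.right_slope.mono hK

theorem exists_isBorderFamily {fL fR : ℝ → ℝ → ℝ} (hfL : ContDiffAt ℝ 2 (uncurry fL) 0)
    (hfR : ContDiffAt ℝ 2 (uncurry fR) 0) (hcont : ∀ᶠ μ in 𝓝 0, fL 0 μ = fR 0 μ)
    (hbcb : fL 0 0 = 0) (hL : 1 < deriv (fun x => fL x 0) 0)
    (hR0 : 0 < |deriv (fun x => fR x 0) 0|) (hR1 : |deriv (fun x => fR x 0) 0| < 1) :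
    ∃ K xL xR, ContDiffAt ℝ 1 xL 0 ∧ xL 0 = 0 ∧ ContDiffAt ℝ 1 xR 0 ∧ xR 0 = 0 ∧
      IsBorderFamily K fL fR xL xR := by
  have hfL1 := hfL.of_le one_le_two
  obtain ⟨KL, hKL⟩ := exists_hasLipschitzSlope hfL
  obtain ⟨KR, hKR⟩ := exists_hasLipschitzSlope hfR
  obtain ⟨xL, hxL, hxL0, hxLfix⟩ := exists_contDiffAt_fixedPoint one_ne_zero hfL1 hbcb hL.ne'
  obtain ⟨xR, hxR, hxR0, hxRfix⟩ := exists_contDiffAt_fixedPoint one_ne_zero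
    (hfR.of_le one_le_two) (hcont.self_of_nhds ▸ hbcb) (lt_of_abs_lt hR1).ne
  exact ⟨max KL KR, xL, xR, hxL, hxL0, hxR, hxR0,
    { left_slope := hKL.mono (le_max_left _ _)
      right_slope := hKR.mono (le_max_right _ _)
      left_zero := hcont
      one_lt_deriv_left := hL
      abs_deriv_right_pos := hR0
      abs_deriv_right_lt_one := hR1
      map_xL := hxLfix
      map_xR := hxRfix
      tendsto_left_zero := tendsto_zero_of_contDiffAt
        (contDiffAt_comp_prodMk hfL1 contDiffAt_const rfl) hbcb
      tendsto_xL := tendsto_zero_of_contDiffAt hxL hxL0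
      tendsto_xR := tendsto_zero_of_contDiffAt hxR hxR0 }⟩

theorem exists_isBorderFamily_normalForm {ν m sL sR : ℝ → ℝ} (hν : ContDiffAt ℝ 1 ν 0)
    (hm : ContDiffAt ℝ 1 m 0) (hsL : ContDiffAt ℝ 1 sL 0) (hsR : ContDiffAt ℝ 1 sR 0)
    (hν0 : ν 0 = 0) (hν' : deriv ν 0 ≠ 0) (hmL : m 0 = sL 0) (hL : 1 < sL 0) (hR0 : 0 < |sR 0|)
    (hR1 : |sR 0| < 1) :
    ∃ K yL yR, IsBorderFamily K (fun y μ => nfLeft (ν μ) (sL μ) (nfCurvature ν sL m μ) y)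
      (fun y μ => nfRight (ν μ) (sR μ) y) yL yR ∧
      ∀ᶠ μ in 𝓝 0, sL μ + 2 * nfCurvature ν sL m μ * yL μ = m μ := by
  have hderivL : deriv (fun y => nfLeft (ν 0) (sL 0) (nfCurvature ν sL m 0) y) 0 = sL 0 := by
    simpa using (hasDerivAt_nfLeft (ν 0) (sL 0) (nfCurvature ν sL m 0) 0).deriv
  have hderivR : deriv (fun y => nfRight (ν 0) (sR 0) y) 0 = sR 0 :=
    (hasDerivAt_nfRight _ _ _).deriv
  obtain ⟨yL, hyL, hyLfix⟩ := exists_fixedPoint_nfLeft hν hsL hm hν0 hν' hmL hL.ne'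
  have hright : ContDiffAt ℝ 1 (uncurry fun y μ => nfRight (ν μ) (sR μ) y) 0 :=
    (ContDiffAt.comp (0 : ℝ × ℝ) hν contDiffAt_snd).add
      ((ContDiffAt.comp (0 : ℝ × ℝ) hsR contDiffAt_snd).mul contDiffAt_fst)
  obtain ⟨yR, hyR, hyR0, hyRfix⟩ := exists_contDiffAt_fixedPoint one_ne_zero hright
    (by simp [nfRight, hν0]) (by rw [hderivR]; exact (lt_of_abs_lt hR1).ne)
  have hcurv := (eventually_continuousAt_nfCurvature hν hsL hm hν').self_of_nhds
  exact ⟨|2 * nfCurvature ν sL m 0| + 1, yL, yR,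
    { left_slope := hasLipschitzSlope_nfLeft hsL.continuousAt hcurv
      right_slope := (hasLipschitzSlope_nfRight hsR.continuousAt).mono (by positivity)
      left_zero := .of_forall fun μ => by simp [nfLeft, nfRight]
      one_lt_deriv_left := hderivL.symm ▸ hL
      abs_deriv_right_pos := hderivR.symm ▸ hR0
      abs_deriv_right_lt_one := hderivR.symm ▸ hR1
      map_xL := hyLfix.mono fun _ h => h.1
      map_xR := hyRfix
      tendsto_left_zero := by simpa [nfLeft] using tendsto_zero_of_contDiffAt hν hν0
      tendsto_xL := hyL
      tendsto_xR := tendsto_zero_of_contDiffAt hyR hyR0 }, hyLfix.mono fun _ h => h.2⟩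

theorem isMatched_normalForm {l r : ℝ → ℝ} {s s' t xL xR yL : ℝ} (yR : ℝ)
    (hL : s + 2 * t * yL = deriv l xL) (hR : deriv r xR = s')
    (hkink : deriv r 0 * s = s' * deriv l 0) :
    IsMatched l r (nfLeft (l 0) s t) (nfRight (l 0) s') xL xR yL yR where
  map_zero := by simp [nfLeft]
  left_multiplier := by rw [(hasDerivAt_nfLeft _ _ _ _).deriv, hL]
  right_multiplier := hR.trans (hasDerivAt_nfRight _ _ _).deriv.symm
  kink := by rwa [(hasDerivAt_nfLeft _ _ _ _).deriv, (hasDerivAt_nfRight _ _ _).deriv, mul_zero,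
    add_zero]

theorem exists_normalForm_saddleNodeConj {fL fR : ℝ → ℝ → ℝ}
    (hfL : ContDiffAt ℝ 2 (uncurry fL) 0) (hfR : ContDiffAt ℝ 2 (uncurry fR) 0)
    (hcont : ∀ᶠ μ in 𝓝 0, fL 0 μ = fR 0 μ) (hbcb : fL 0 0 = 0) (hβ : deriv (fL 0) 0 ≠ 0)
    (hL : 1 < deriv (fun x => fL x 0) 0) (hR0 : 0 < |deriv (fun x => fR x 0) 0|)
    (hR1 : |deriv (fun x => fR x 0) 0| < 1) :
    ∃ sL sR t : ℝ → ℝ, ContDiffAt ℝ 1 sL 0 ∧ sL 0 = deriv (fun x => fL x 0) 0 ∧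
      ContDiffAt ℝ 1 sR 0 ∧ sR 0 = deriv (fun x => fR x 0) 0 ∧ (∀ᶠ μ in 𝓝 0, ContinuousAt t μ) ∧
      ∀ δ > 0, δ ≤ 1 / 2 → ∀ᶠ p in 𝓝[>] (0 : ℝ), ∀ᶠ μ in 𝓝 0, ∃ qm qp,
        |qm + p| < δ * p ∧ |qp - p| < δ * p ∧
        SaddleNodeConj (fun x => fL x μ) (fun x => fR x μ) (nfLeft (fL 0 μ) (sL μ) (t μ))
          (nfRight (fL 0 μ) (sR μ)) (Ioo (-p) p) (Ioo qm qp) := by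
  obtain ⟨K, xL, xR, hxL, hxL0, hxR, hxR0, hf⟩ :=
    exists_isBorderFamily hfL hfR hcont hbcb hL hR0 hR1
  have hDL := contDiffAt_deriv_fst (m := 1) hfL (by norm_num) (by decide)
  have hDR := contDiffAt_deriv_fst (m := 1) hfR (by norm_num) (by decide)
  let m : ℝ → ℝ := fun μ => deriv (fun x => fL x μ) (xL μ)
  let sR : ℝ → ℝ := fun μ => deriv (fun x => fR x μ) (xR μ)
  let sL : ℝ → ℝ := fun μ => sR μ * deriv (fun x => fL x μ) 0 / deriv (fun x => fR x μ) 0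
  have hR : deriv (fun x => fR x 0) 0 ≠ 0 := abs_pos.1 hR0
  have hν : ContDiffAt ℝ 1 (fL 0) 0 :=
    contDiffAt_comp_prodMk (hfL.of_le one_le_two) contDiffAt_const rfl
  have hm : ContDiffAt ℝ 1 m 0 := contDiffAt_comp_prodMk hDL hxL hxL0
  have hsR : ContDiffAt ℝ 1 sR 0 := contDiffAt_comp_prodMk hDR hxR hxR0
  have hDR0 : ContDiffAt ℝ 1 (fun μ => deriv (fun x => fR x μ) 0) 0 :=
    contDiffAt_comp_prodMk hDR contDiffAt_const rfl
  have hsL : ContDiffAt ℝ 1 sL 0 :=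
    (hsR.mul (contDiffAt_comp_prodMk hDL contDiffAt_const rfl)).div hDR0 hR
  have hsR_zero : sR 0 = deriv (fun x => fR x 0) 0 := by simp only [sR, hxR0]
  have hsL_zero : sL 0 = deriv (fun x => fL x 0) 0 := by
    simp only [sL, hsR_zero, mul_div_cancel_left₀ _ hR]
  obtain ⟨K', yL, yR, hg, hmult⟩ := exists_isBorderFamily_normalForm hν hm hsL hsR hbcb hβ
    (by simp only [m, hxL0, hsL_zero]) (hsL_zero ▸ hL) (hsR_zero ▸ hR0) (hsR_zero ▸ hR1)
  refine ⟨sL, sR, nfCurvature (fL 0) sL m, hsL, hsL_zero, hsR, hsR_zero,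
    eventually_continuousAt_nfCurvature hν hsL hm hβ, fun δ hδ0 hδ => ?_⟩
  have hmatch : ∀ᶠ μ in 𝓝 0, IsMatched (fun x => fL x μ) (fun x => fR x μ)
      (nfLeft (fL 0 μ) (sL μ) (nfCurvature (fL 0) sL m μ)) (nfRight (fL 0 μ) (sR μ))
      (xL μ) (xR μ) (yL μ) (yR μ) := by
    filter_upwards [hmult, hDR0.continuousAt.eventually_ne hR] with μ hμ hne
    exact isMatched_normalForm _ hμ rfl (mul_div_cancel₀ _ hne)
  exact (hf.mono (le_max_left K K')).eventually_exists_saddleNodeConj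
    (hg.mono (le_max_right K K')) (by simp [(hasDerivAt_nfLeft _ _ _ _).deriv, hsL_zero])
    ((hasDerivAt_nfRight _ _ _).deriv.trans hsR_zero) hmatch
    (fun _ _ => (hasDerivAt_nfRight _ _ _).deriv) hδ0 hδ

theorem snConclusion_of_saddleNodeConj {fL fR : ℝ → ℝ → ℝ} {sL sR t : ℝ → ℝ} {aR μ₀ : ℝ}
    {N : Set ℝ} {M : ℝ → Set ℝ} (hM : ∀ μ ∈ Ioo (-μ₀) μ₀, IsOpen (M μ) ∧ 0 ∈ M μ)
    (hν : ∀ μ ∈ Ioo (-μ₀) μ₀, SignType.sign (fL 0 μ) = SignType.sign μ)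
    (hR : ∀ μ ∈ Ioo (-μ₀) μ₀, SignType.sign (deriv (fun x => fR x μ) 0) = SignType.sign aR)
    (H : ∀ μ ∈ Ioo (-μ₀) μ₀, SaddleNodeConj (fun x => fL x μ) (fun x => fR x μ)
      (nfLeft (fL 0 μ) (sL μ) (t μ)) (nfRight (fL 0 μ) (sR μ)) N (M μ)) :
    SnConclusion fL fR aR μ₀ sL sR t N M := by
  have hmem : ∀ {μ}, μ ∈ Ioo 0 μ₀ → μ ∈ Ioo (-μ₀) μ₀ := fun hμ =>
    ⟨by linarith [hμ.1, hμ.2], hμ.2⟩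
  have hν_pos : ∀ {μ}, μ ∈ Ioo 0 μ₀ → 0 < fL 0 μ := fun hμ =>
    sign_eq_one_iff.1 ((hν _ (hmem hμ)).trans (sign_pos hμ.1))
  refine ⟨hM, fun μ hμ => ?_, fun ha μ hμ => ?_, fun ha μ hμ => ?_⟩
  · have hμ' : μ ∈ Ioo (-μ₀) μ₀ := ⟨hμ.1, by linarith [hμ.1, hμ.2]⟩
    refine (H μ hμ').virtual (not_lt.1 fun hlt => hμ.2.not_gt ?_)
    exact sign_eq_one_iff.1 ((hν μ hμ').symm.trans (sign_pos hlt))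
  · obtain ⟨xL, xR, yL, yR, h⟩ := (H μ (hmem hμ)).basin (hν_pos hμ)
      (sign_eq_one_iff.1 ((hR μ (hmem hμ)).trans (sign_pos ha)))
    exact ⟨xL, xR, yL, yR, h.xL_neg, h.xR_pos, h.xL_mem, h.xR_mem, h.yL_neg, h.yR_pos, h.yL_mem,
      h.yR_mem, h.map_xL, h.map_xR, (if_pos h.yL_neg.le).trans h.map_yL,
      (if_neg h.yR_pos.not_ge).trans h.map_yR, h.stable, h.unstable, h.attr, h.rep⟩
  · obtain ⟨xL, w, yL, z, h⟩ := (H μ (hmem hμ)).trap (hν_pos hμ)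
      (sign_eq_neg_one_iff.1 ((hR μ (hmem hμ)).trans (sign_neg ha)))
    exact ⟨xL, yL, w, z, h.xL_neg, h.map_xL, h.yL_neg, (if_pos h.yL_neg.le).trans h.map_yL,
      h.w_pos, h.map_w, h.z_pos, h.map_z, h.trap, h.neg⟩

theorem eventually_sign_eq {f : ℝ → ℝ} {a : ℝ} (hf : ContinuousAt f a) (ha : f a ≠ 0) :
    ∀ᶠ x in 𝓝 a, SignType.sign (f x) = SignType.sign (f a) := by
  have hcomp := ((continuousAt_sign_of_ne_zero ha).comp hf).tendsto
  rwa [nhds_discrete SignType, tendsto_pure] at hcomp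

theorem eventually_forall_mem_Ioo {P : ℝ → Prop} (h : ∀ᶠ μ in 𝓝 0, P μ) :
    ∀ᶠ μ₀ in 𝓝[>] (0 : ℝ), ∀ μ ∈ Ioo (-μ₀) μ₀, P μ := by
  obtain ⟨ρ, hρ, hP⟩ := Metric.eventually_nhds_iff.1 h
  filter_upwards [Ioo_mem_nhdsGT hρ] with μ₀ hμ₀ μ hμ
  refine hP ?_
  rw [Real.dist_eq, sub_zero]
  exact (abs_lt.2 hμ).trans hμ₀.2

theorem abs_bounds_of_abs_sub_lt {q p δ δ' : ℝ} (hp : 0 < p) (hδ : δ' ≤ δ) (hδ' : δ' ≤ 1)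
    (h : |q - p| < δ' * p) : 0 < q ∧ (1 - δ) * p < |q| ∧ |q| < (1 + δ) * p := by
  obtain ⟨h₁, h₂⟩ := abs_lt.1 h
  have hq : 0 < q := by nlinarith
  rw [abs_of_pos hq]
  exact ⟨hq, by nlinarith, by nlinarith⟩

theorem eventually_exists_snConclusion {fL fR : ℝ → ℝ → ℝ} {sL sR t : ℝ → ℝ} {p δ δ' : ℝ}
    (hp : 0 < p) (hδ : δ' ≤ δ) (hδ' : δ' ≤ 1) {aR : ℝ}
    (hν : ∀ᶠ μ in 𝓝 0, SignType.sign (fL 0 μ) = SignType.sign μ)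
    (hR : ∀ᶠ μ in 𝓝 0, SignType.sign (deriv (fun x => fR x μ) 0) = SignType.sign aR)
    (H : ∀ᶠ μ in 𝓝 0, ∃ qm qp, |qm + p| < δ' * p ∧ |qp - p| < δ' * p ∧
      SaddleNodeConj (fun x => fL x μ) (fun x => fR x μ) (nfLeft (fL 0 μ) (sL μ) (t μ))
        (nfRight (fL 0 μ) (sR μ)) (Ioo (-p) p) (Ioo qm qp)) :
    ∀ᶠ μ₀ in 𝓝[>] (0 : ℝ), ∃ qm qp : ℝ → ℝ,
      SnConclusion fL fR aR μ₀ sL sR t (Ioo (-p) p) (fun μ => Ioo (qm μ) (qp μ)) ∧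
      ∀ μ ∈ Ioo (-μ₀) μ₀, qm μ < 0 ∧ 0 < qp μ ∧
        (1 - δ) * p < |qm μ| ∧ |qm μ| < (1 + δ) * p ∧
        (1 - δ) * p < |qp μ| ∧ |qp μ| < (1 + δ) * p := by
  filter_upwards [eventually_forall_mem_Ioo hν, eventually_forall_mem_Ioo hR,
    eventually_forall_mem_Ioo H] with μ₀ hν hR H
  choose! qm qp hqm hqp hconj using H
  have hbounds : ∀ μ ∈ Ioo (-μ₀) μ₀, qm μ < 0 ∧ 0 < qp μ ∧
      (1 - δ) * p < |qm μ| ∧ |qm μ| < (1 + δ) * p ∧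
      (1 - δ) * p < |qp μ| ∧ |qp μ| < (1 + δ) * p := fun μ hμ => by
    obtain ⟨hm, hm₁, hm₂⟩ := abs_bounds_of_abs_sub_lt (q := -qm μ) hp hδ hδ'
      (by rw [← abs_neg]; convert hqm μ hμ using 2; ring)
    rw [abs_neg] at hm₁ hm₂
    obtain ⟨hp, hp₁, hp₂⟩ := abs_bounds_of_abs_sub_lt hp hδ hδ' (hqp μ hμ)
    exact ⟨neg_pos.1 hm, hp, hm₁, hm₂, hp₁, hp₂⟩
  exact ⟨qm, qp, snConclusion_of_saddleNodeConj
    (fun μ hμ => ⟨isOpen_Ioo, (hbounds μ hμ).1, (hbounds μ hμ).2.1⟩) hν hR hconj, hbounds⟩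

theorem exists_normalForm_snConclusion {fL fR : ℝ → ℝ → ℝ}
    (hfL : ContDiffAt ℝ 2 (uncurry fL) 0) (hfR : ContDiffAt ℝ 2 (uncurry fR) 0)
    (hcont : ∀ᶠ μ in 𝓝 0, fL 0 μ = fR 0 μ) (hbcb : fL 0 0 = 0) (hβ : 0 < deriv (fL 0) 0)
    (hL : 1 < deriv (fun x => fL x 0) 0) (hR0 : 0 < |deriv (fun x => fR x 0) 0|)
    (hR1 : |deriv (fun x => fR x 0) 0| < 1) :
    ∃ sL sR t : ℝ → ℝ, ContDiffAt ℝ 1 sL 0 ∧ sL 0 = deriv (fun x => fL x 0) 0 ∧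
      ContDiffAt ℝ 1 sR 0 ∧ sR 0 = deriv (fun x => fR x 0) 0 ∧ (∀ᶠ μ in 𝓝 0, ContinuousAt t μ) ∧
      ∀ δ > 0, ∀ᶠ p in 𝓝[>] (0 : ℝ), ∀ᶠ μ₀ in 𝓝[>] (0 : ℝ), ∃ qm qp : ℝ → ℝ,
        SnConclusion fL fR (deriv (fun x => fR x 0) 0) μ₀ sL sR t (Ioo (-p) p)
          (fun μ => Ioo (qm μ) (qp μ)) ∧
        ∀ μ ∈ Ioo (-μ₀) μ₀, qm μ < 0 ∧ 0 < qp μ ∧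
          (1 - δ) * p < |qm μ| ∧ |qm μ| < (1 + δ) * p ∧
          (1 - δ) * p < |qp μ| ∧ |qp μ| < (1 + δ) * p := by
  obtain ⟨sL, sR, t, hsL, hsL0, hsR, hsR0, ht, H⟩ :=
    exists_normalForm_saddleNodeConj hfL hfR hcont hbcb hβ.ne' hL hR0 hR1
  refine ⟨sL, sR, t, hsL, hsL0, hsR, hsR0, ht, fun δ hδ => ?_⟩
  have hν : ∀ᶠ μ in 𝓝 0, SignType.sign (fL 0 μ) = SignType.sign μ := by
    simpa only [sub_zero] using eventually_nhdsWithin_sign_eq_of_deriv_pos hβ hbcb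
  have hDR : ContDiffAt ℝ 1 (fun μ => deriv (fun x => fR x μ) 0) 0 := contDiffAt_comp_prodMk
    (contDiffAt_deriv_fst hfR (by norm_num) (by decide)) contDiffAt_const rfl
  filter_upwards [H (min δ (1 / 2)) (by positivity) (min_le_right _ _), self_mem_nhdsWithin]
    with p hconj hp
  exact eventually_exists_snConclusion hp (min_le_left _ _)
    ((min_le_right _ _).trans one_half_lt_one.le) hν
    (eventually_sign_eq hDR.continuousAt (abs_pos.1 hR0)) hconj

theorem eventually_Ioo_neg_subset_Ioo {a b : ℝ} (ha : a < 0) (hb : 0 < b) :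
    ∀ᶠ r in 𝓝[>] (0 : ℝ), Ioo (-r) r ⊆ Ioo a b :=
  eventually_forall_mem_Ioo (Ioo_mem_nhds ha hb)

theorem stmt1_general (ω₁ ω₂ ι₁ ι₂ aL aR β : ℝ) (fL fR : ℝ → ℝ → ℝ)
    (hω₁ : ω₁ < 0) (hω₂ : 0 < ω₂) (hι₁ : ι₁ < 0) (hι₂ : 0 < ι₂)
    (hfL : ContDiffOn ℝ 2 (fun p : ℝ × ℝ => fL p.1 p.2) (Ioo ω₁ ω₂ ×ˢ Ioo ι₁ ι₂))
    (hfR : ContDiffOn ℝ 2 (fun p : ℝ × ℝ => fR p.1 p.2) (Ioo ω₁ ω₂ ×ˢ Ioo ι₁ ι₂))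
    (hcont : ∀ μ ∈ Ioo ι₁ ι₂, fL 0 μ = fR 0 μ)
    (hbcb : fL 0 0 = 0)
    (haL : deriv (fun x => fL x 0) 0 = aL)
    (haR : deriv (fun x => fR x 0) 0 = aR)
    (hβL : deriv (fun μ => fL 0 μ) 0 = β)
    (hβ : 0 < β)
    (hL : 1 < aL) (hR0 : 0 < |aR|) (hR1 : |aR| < 1) :
    ∃ μ₀ > 0, Ioo (-μ₀) μ₀ ⊆ Ioo ι₁ ι₂ ∧
      ∃ sL sR t : ℝ → ℝ,
        ContinuousOn sL (Ioo (-μ₀) μ₀) ∧ ContinuousOn sR (Ioo (-μ₀) μ₀) ∧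
        ContinuousOn t (Ioo (-μ₀) μ₀) ∧
        (fun μ => sL μ - aL) =O[𝓝 (0 : ℝ)] (fun μ => μ) ∧
        (fun μ => sR μ - aR) =O[𝓝 (0 : ℝ)] (fun μ => μ) ∧
        (∃ N : Set ℝ, IsOpen N ∧ (0 : ℝ) ∈ N ∧ N ⊆ Ioo ω₁ ω₂ ∧
          ∃ M : ℝ → Set ℝ, SnConclusion fL fR aR μ₀ sL sR t N M) ∧
        (∀ δ > 0, ∃ μ₁ > 0, μ₁ ≤ μ₀ ∧
          ∃ p > 0, Ioo (-p) p ⊆ Ioo ω₁ ω₂ ∧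
            ∃ qm qp : ℝ → ℝ,
              SnConclusion fL fR aR μ₁ sL sR t (Ioo (-p) p)
                (fun μ => Ioo (qm μ) (qp μ)) ∧
              ∀ μ ∈ Ioo (-μ₁) μ₁,
                qm μ < 0 ∧ 0 < qp μ ∧
                (1 - δ) * p < |qm μ| ∧ |qm μ| < (1 + δ) * p ∧
                (1 - δ) * p < |qp μ| ∧ |qp μ| < (1 + δ) * p) := by
  subst haL haR hβL
  have hmem : Ioo ω₁ ω₂ ×ˢ Ioo ι₁ ι₂ ∈ 𝓝 (0 : ℝ × ℝ) :=
    prod_mem_nhds (Ioo_mem_nhds hω₁ hω₂) (Ioo_mem_nhds hι₁ hι₂)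
  obtain ⟨sL, sR, t, hsL, hsL0, hsR, hsR0, ht, H⟩ := exists_normalForm_snConclusion
    (hfL.contDiffAt hmem) (hfR.contDiffAt hmem)
    (eventually_of_mem (Ioo_mem_nhds hι₁ hι₂) hcont) hbcb hβ hL hR0 hR1
  have hN := eventually_Ioo_neg_subset_Ioo hω₁ hω₂
  obtain ⟨p, ⟨hp, hpN⟩, hp_pos⟩ := (((H 1 one_pos).and hN).and self_mem_nhdsWithin).exists
  have hcontinuousAt := eventually_forall_mem_Ioo
    ((eventually_continuousAt_of_contDiffAt hsL).and
      ((eventually_continuousAt_of_contDiffAt hsR).and ht))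
  obtain ⟨μ₀, ⟨⟨⟨qm, qp, hconcl, -⟩, hc⟩, hμ₀I⟩, hμ₀⟩ := (((hp.and hcontinuousAt).and
    (eventually_Ioo_neg_subset_Ioo hι₁ hι₂)).and self_mem_nhdsWithin).exists
  refine ⟨μ₀, hμ₀, hμ₀I, sL, sR, t, fun μ hμ => (hc μ hμ).1.continuousWithinAt,
    fun μ hμ => (hc μ hμ).2.1.continuousWithinAt, fun μ hμ => (hc μ hμ).2.2.continuousWithinAt,
    ?_, ?_, ⟨Ioo (-p) p, isOpen_Ioo, ⟨neg_lt_zero.2 hp_pos, hp_pos⟩, hpN, _, hconcl⟩,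
    fun δ hδ => ?_⟩
  · simpa only [hsL0, sub_zero] using (hsL.differentiableAt one_ne_zero).isBigO_sub
  · simpa only [hsR0, sub_zero] using (hsR.differentiableAt one_ne_zero).isBigO_sub
  obtain ⟨p, ⟨hp, hpN⟩, hp_pos⟩ := (((H δ hδ).and hN).and self_mem_nhdsWithin).exists
  obtain ⟨μ₁, hq, hμ₁⟩ := (hp.and (Ioc_mem_nhdsGT hμ₀)).exists
  exact ⟨μ₁, hμ₁.1, hμ₁.2, p, hp_pos, hpN, hq⟩

/-- Theorem 2.2 (saddle-node-like border-collision bifurcations).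
Here `Ω = (ω₁, ω₂)` and `I = (ι₁, ι₂)` are the open intervals containing `0` on which the
piecewise-`C³` family is defined, `aL, aR` are the one-sided slopes at the bifurcation,
and `β` is the common `μ`-derivative at the origin. -/
theorem stmt1 (ω₁ ω₂ ι₁ ι₂ aL aR β : ℝ) (fL fR : ℝ → ℝ → ℝ)
    (hω₁ : ω₁ < 0) (hω₂ : 0 < ω₂) (hι₁ : ι₁ < 0) (hι₂ : 0 < ι₂)
    (hfL : ContDiffOn ℝ 3 (fun p : ℝ × ℝ => fL p.1 p.2) (Set.Ioo ω₁ ω₂ ×ˢ Set.Ioo ι₁ ι₂))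
    (hfR : ContDiffOn ℝ 3 (fun p : ℝ × ℝ => fR p.1 p.2) (Set.Ioo ω₁ ω₂ ×ˢ Set.Ioo ι₁ ι₂))
    (hcont : ∀ μ ∈ Set.Ioo ι₁ ι₂, fL 0 μ = fR 0 μ)
    (hbcb : fL 0 0 = 0)
    (haL : deriv (fun x => fL x 0) 0 = aL)
    (haR : deriv (fun x => fR x 0) 0 = aR)
    (hβL : deriv (fun μ => fL 0 μ) 0 = β)
    (hβR : deriv (fun μ => fR 0 μ) 0 = β)
    (hβ : 0 < β)
    (hL : 1 < aL) (hR0 : 0 < |aR|) (hR1 : |aR| < 1) :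
    ∃ μ₀ > 0, Set.Ioo (-μ₀) μ₀ ⊆ Set.Ioo ι₁ ι₂ ∧
      ∃ sL sR t : ℝ → ℝ,
        ContinuousOn sL (Set.Ioo (-μ₀) μ₀) ∧ ContinuousOn sR (Set.Ioo (-μ₀) μ₀) ∧
        ContinuousOn t (Set.Ioo (-μ₀) μ₀) ∧
        (fun μ => sL μ - aL) =O[nhds (0:ℝ)] (fun μ => μ) ∧
        (fun μ => sR μ - aR) =O[nhds (0:ℝ)] (fun μ => μ) ∧
        (∃ N : Set ℝ, IsOpen N ∧ (0:ℝ) ∈ N ∧ N ⊆ Set.Ioo ω₁ ω₂ ∧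
          ∃ M : ℝ → Set ℝ, SnConclusion fL fR aR μ₀ sL sR t N M) ∧
        -- Moreover, the neighbourhoods can be chosen almost symmetric
        (∀ δ > 0, ∃ μ₁ > 0, μ₁ ≤ μ₀ ∧
          ∃ p > 0, Set.Ioo (-p) p ⊆ Set.Ioo ω₁ ω₂ ∧
            ∃ qm qp : ℝ → ℝ,
              SnConclusion fL fR aR μ₁ sL sR t (Set.Ioo (-p) p)
                (fun μ => Set.Ioo (qm μ) (qp μ)) ∧
              ∀ μ ∈ Set.Ioo (-μ₁) μ₁,
                qm μ < 0 ∧ 0 < qp μ ∧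
                (1 - δ) * p < |qm μ| ∧ |qm μ| < (1 + δ) * p ∧
                (1 - δ) * p < |qp μ| ∧ |qp μ| < (1 + δ) * p) := by
  exact stmt1_general ω₁ ω₂ ι₁ ι₂ aL aR β fL fR hω₁ hω₂ hι₁ hι₂ (hfL.of_le (by norm_num))
    (hfR.of_le (by norm_num)) hcont hbcb haL haR hβL hβ hL hR0 hR1
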